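/- For any discrete memoryless channel W: X → Y on finite alphabets and α ∈ (0,∞]: if 0 ≤ r < I_∞(W), then the reliability function satisfies E_rf^{(α)}(W,r) = sup_{β≥1} (β−1)(r − I_β(W)) when α ∈ (0,1], and E_rf^{(α)}(W,r) = max{ sup_{β≥α} (β−1)(r − I_β(W)), 0 } when α ∈ (1,∞]; moreover E_rf^{(α)}(W,r) = ∞ for all r ≥ I_∞(W). -/

import Mathlib

open scoped ENNReal NNReal BigOperators Classical
open Filter

noncomputable section

namespace RST

/-- Base-2 logarithm `ℝ≥0∞ → EReal`, with `log 0 = ⊥` and `log ⊤ = ⊤`. -/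
def elog2 (s : ℝ≥0∞) : EReal :=
  if s = 0 then ⊥ else if s = ⊤ then ⊤ else ((Real.logb 2 s.toReal : ℝ) : EReal)

/-- Base-2 logarithm `EReal → EReal` (for nonnegative arguments). -/
def eLog2 (x : EReal) : EReal :=
  if x = ⊤ then ⊤ else if x ≤ 0 then ⊥ else ((Real.logb 2 x.toReal : ℝ) : EReal)

/-- Base-2 exponential `EReal → ℝ≥0∞`. -/
def epow2 (x : EReal) : ℝ≥0∞ :=
  if x = ⊤ then ⊤ else if x = ⊥ then 0 else ENNReal.ofReal ((2 : ℝ) ^ x.toReal)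

variable {X Y : Type*}

/-- A probability distribution on a finite alphabet, as an `ℝ≥0∞`-valued function. -/
def IsDist [Fintype X] (P : X → ℝ≥0∞) : Prop := ∑ x, P x = 1

/-- A discrete memoryless channel: every row is a probability distribution. -/
def IsChannel [Fintype X] [Fintype Y] (W : X → Y → ℝ≥0∞) : Prop := ∀ x, ∑ y, W x y = 1

/-- Order-`α` Rényi divergence (base 2), with the order `α ∈ [0,∞]` encoded as `ℝ≥0∞`.
The conventions `0/0 = 0` and `a/0 = ∞` (for `a > 0`, `α > 1`) are built into `ℝ≥0∞`
arithmetic.  The second argument is allowed to be an arbitrary nonnegative vector. -/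
def renyiD [Fintype X] (α : ℝ≥0∞) (P Q : X → ℝ≥0∞) : EReal :=
  if α = 0 then - elog2 (∑ x ∈ Finset.univ.filter fun x => P x ≠ 0, Q x)
  else if α = 1 then ∑ x, ((P x).toReal : EReal) * elog2 (P x / Q x)
  else if α = ⊤ then elog2 (⨆ x, P x / Q x)
  else (((α.toReal - 1)⁻¹ : ℝ) : EReal) *
    elog2 (∑ x, P x ^ α.toReal * Q x ^ (1 - α.toReal))

/-- The `X`-marginal of a joint distribution on `X × Y`. -/
def margX [Fintype X] [Fintype Y] (P : X × Y → ℝ≥0∞) : X → ℝ≥0∞ := fun x => ∑ y, P (x, y)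

/-- Order-`α` Rényi mutual information `I_α(X:Y)_P = min_{Q_Y} D_α(P‖P_X × Q_Y)`. -/
def renyiMI [Fintype X] [Fintype Y] (α : ℝ≥0∞) (P : X × Y → ℝ≥0∞) : EReal :=
  ⨅ Q : {Q : Y → ℝ≥0∞ // IsDist Q}, renyiD α P fun p => margX P p.1 * Q.1 p.2

/-- The joint input-output distribution `P_X · W`. -/
def joint [Fintype X] [Fintype Y] (PX : X → ℝ≥0∞) (W : X → Y → ℝ≥0∞) : X × Y → ℝ≥0∞ :=
  fun p => PX p.1 * W p.1 p.2

/-- Order-`α` Rényi capacity `I_α(W) = max_{P_X} I_α(X:Y)_{P_X · W}`. -/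
def renyiCap [Fintype X] [Fintype Y] (α : ℝ≥0∞) (W : X → Y → ℝ≥0∞) : EReal :=
  ⨆ P : {P : X → ℝ≥0∞ // IsDist P}, renyiMI α (joint P.1 W)

/-- `N` is a simulation of a channel `X → Y` with communication cost at most `c` bits:
shared randomness `K = Fin m` with distribution `PK`, a message set `{1,…,M}` with
`log₂ M ≤ c`, an encoder `E` and a decoder `D`. -/
def IsSimulation [Fintype X] [Fintype Y] (c : ℝ) (N : X → Y → ℝ≥0∞) : Prop :=
  ∃ (m M : ℕ) (PK : Fin m → ℝ≥0∞) (E : X → Fin m → Fin M → ℝ≥0∞)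
    (D : Fin M → Fin m → Y → ℝ≥0∞),
    0 < M ∧ Real.logb 2 M ≤ c ∧ (∑ k, PK k = 1) ∧
    (∀ x k, ∑ j, E x k j = 1) ∧ (∀ j k, ∑ y, D j k y = 1) ∧
    ∀ x y, N x y = ∑ k, ∑ j, PK k * E x k j * D j k y

/-- `D_α(W, N) := max_x D_α(W(·|x) ‖ N(·|x))`. -/
def chD [Fintype X] [Fintype Y] (α : ℝ≥0∞) (W N : X → Y → ℝ≥0∞) : EReal :=
  ⨆ x, renyiD α (W x) (N x)

/-- `𝖣_α(W, c) := min_{N ∈ A(W,c)} D_α(W, N)`. -/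
def simD [Fintype X] [Fintype Y] (α : ℝ≥0∞) (W : X → Y → ℝ≥0∞) (c : ℝ) : EReal :=
  ⨅ N : {N : X → Y → ℝ≥0∞ // IsSimulation c N}, chD α W N.1

/-- The `n`-fold memoryless extension `W^{×n}` of a channel `W`. -/
def prodCh [Fintype X] [Fintype Y] (n : ℕ) (W : X → Y → ℝ≥0∞) :
    (Fin n → X) → (Fin n → Y) → ℝ≥0∞ :=
  fun xs ys => ∏ i, W (xs i) (ys i)

/-- A sequence of communication costs with rate at most `r`. -/
def RateOK (r : ℝ) (c : ℕ → ℝ) : Prop :=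
  (∀ n, 0 ≤ c n) ∧ Filter.limsup (fun n : ℕ => ((c n / n : ℝ) : EReal)) Filter.atTop ≤ (r : EReal)

/-- Reliability function `E_rf^{(α)}(W, r)`. -/
def Erf [Fintype X] [Fintype Y] (α : ℝ≥0∞) (W : X → Y → ℝ≥0∞) (r : ℝ) : EReal :=
  ⨆ c : {c : ℕ → ℝ // RateOK r c},
    Filter.liminf
      (fun n : ℕ => (((-1 : ℝ) / n : ℝ) : EReal) * eLog2 (simD α (prodCh n W) (c.1 n)))
      Filter.atTop

/-- Strong converse exponent `E_sc^{(α)}(W, r)`. -/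
def Esc [Fintype X] [Fintype Y] (α : ℝ≥0∞) (W : X → Y → ℝ≥0∞) (r : ℝ) : EReal :=
  ⨅ c : {c : ℕ → ℝ // RateOK r c},
    Filter.limsup
      (fun n : ℕ => (((1 : ℝ) / n : ℝ) : EReal) * simD α (prodCh n W) (c.1 n))
      Filter.atTop

/-- The `α`-Rényi simulation rate `R_RST^{(α)}(W)`. -/
def Rrst [Fintype X] [Fintype Y] (α : ℝ≥0∞) (W : X → Y → ℝ≥0∞) : EReal :=
  ⨅ c : {c : ℕ → ℝ // (∀ n, 0 ≤ c n) ∧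
      Filter.limsup (fun n : ℕ => simD α (prodCh n W) (c n)) Filter.atTop = 0},
    Filter.limsup (fun n : ℕ => ((c.1 n / n : ℝ) : EReal)) Filter.atTop

/-- n-fold product of a joint distribution on `X × Y`, as a distribution on pairs of
sequences. -/
def prodJoint [Fintype X] [Fintype Y] (n : ℕ) (P : X × Y → ℝ≥0∞) :
    (Fin n → X) × (Fin n → Y) → ℝ≥0∞ :=
  fun p => ∏ i, P (p.1 i, p.2 i)

/-- n-fold product distribution. -/
def prodDist [Fintype X] (n : ℕ) (P : X → ℝ≥0∞) : (Fin n → X) → ℝ≥0∞ :=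
  fun xs => ∏ i, P (xs i)

/-- The type (empirical count vector) of a sequence. -/
def seqType [Fintype Y] [DecidableEq Y] {n : ℕ} (ys : Fin n → Y) : Y → ℕ :=
  fun y => (Finset.univ.filter fun i => ys i = y).card

/-- The cardinality of the type class of a sequence. -/
def typeClassCard [Fintype Y] [DecidableEq Y] {n : ℕ} (ys : Fin n → Y) : ℕ :=
  (Finset.univ.filter fun zs : Fin n → Y => seqType zs = seqType ys).card

/-- The number of types of sequences in `Y^n`. -/
def numTypes (Y : Type*) [Fintype Y] [DecidableEq Y] (n : ℕ) : ℕ :=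
  (Finset.univ.image fun ys : Fin n → Y => seqType ys).card

/-- `Φ_{Y^n}`: the uniform mixture over type classes of `Y^n`. -/
def PhiY (Y : Type*) [Fintype Y] [DecidableEq Y] (n : ℕ) : (Fin n → Y) → ℝ≥0∞ :=
  fun ys => ((numTypes Y n : ℝ≥0∞) * (typeClassCard ys : ℝ≥0∞))⁻¹

end RST

/-!
A simulation with `M` messages satisfies `N(y|x) ≤ M Q(y)` for some output distribution `Q`, and
rejection sampling from `Q` with `M` shared candidates achieves nearly `min (W(y|x)) (M Q(y))`.

*Achievability.* Let `Q` be Sibson's optimal output distribution for the order `β`, so that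
`D_β(W(·|x) ‖ Q) ≤ I_β(W)` for all inputs `x`. Rejection sampling from `Q^n` loses only the outputs
with `W^n(y|x) > 2^(nr) Q^n(y)`, and a bound of Chernoff type on their contribution to the order-`α`
divergence, `α ≤ β`, gives the exponent `(β - 1)(r - I_β(W))`. At `r ≥ I_∞(W)` no output is lost
and the error decays faster than every exponential.

*Converse.* Let `J` be a law on input-output pairs whose mean information density
`T(J) = E_J log (W(y|x) / J_Y(y))` exceeds `r`. The sequences typical for `J` have mass about
`2^(-n D(J))` under `W^n`, where `D(J)` is the conditional divergence of `J` from `W`, whereas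
`N ≤ 2^(nr) Q` undershoots `W^n` on them by a factor `2^(-n (T(J) - r))` for some input `x`. Hence
the exponent is at most `max 0 (D(J) - (α - 1)⁺ (T(J) - r))`.

*Duality.* `D` is convex and `T` is concave, so minimising over the `J` with `T(J) > r` costs a
Lagrange multiplier `s ≥ 0`; with `β - 1 = (α - 1)⁺ + s`, the infimum over `J` of
`D(J) - (β - 1)(T(J) - r)` is evaluated by tilting and equals `(β - 1)(r - I_β(W))`.
-/

namespace RST

/-! ### Error exponents -/

theorem eLog2_coe_of_pos {t : ℝ} (ht : 0 < t) : eLog2 (t : EReal) = (Real.logb 2 t : ℝ) := by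
  rw [eLog2, if_neg (EReal.coe_ne_top t), if_neg (by simpa using ht), EReal.toReal_coe]

theorem monotone_eLog2 : Monotone eLog2 := by
  intro x y h
  unfold eLog2
  rcases eq_or_ne y ⊤ with rfl | hy
  · simp
  have hx : x ≠ ⊤ := ne_top_of_le_ne_top hy h
  rw [if_neg hx, if_neg hy]
  rcases le_or_gt x 0 with hx0 | hx0
  · simp [hx0]
  have hy0 : 0 < y := hx0.trans_le h
  rw [if_neg hx0.not_ge, if_neg hy0.not_ge, EReal.coe_le_coe_iff]
  exact Real.logb_le_logb_of_le one_lt_two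
    (EReal.toReal_pos hx0 hx) (EReal.toReal_le_toReal h hx0.ne_bot hy)

theorem antitone_neg_one_div_mul (n : ℕ) :
    Antitone fun x : EReal => (((-1 : ℝ) / n : ℝ) : EReal) * x := by
  intro x y h
  have e : ((-1 : ℝ) / n : ℝ) = -(1 / n) := by ring
  simp only [e, EReal.coe_neg, EReal.neg_mul, EReal.neg_le_neg_iff]
  exact mul_le_mul_of_nonneg_left h (by exact_mod_cast (by positivity : (0 : ℝ) ≤ 1 / n))

theorem exponent_const_mul_two_rpow {n : ℕ} (hn : 0 < n) {C : ℝ} (hC : 0 < C) (E : ℝ) :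
    (((-1 : ℝ) / n : ℝ) : EReal) * eLog2 ((C * 2 ^ (-(n * E)) : ℝ) : EReal) =
      ((E - Real.logb 2 C / n : ℝ) : EReal) := by
  rw [eLog2_coe_of_pos (by positivity), ← EReal.coe_mul, EReal.coe_eq_coe_iff,
    Real.logb_mul hC.ne' (by positivity), Real.logb_rpow two_pos one_lt_two.ne']
  field_simp
  ring

theorem liminf_exponent_const_mul_two_rpow {C : ℝ} (hC : 0 < C) (E : ℝ) :
    liminf (fun n : ℕ => (((-1 : ℝ) / n : ℝ) : EReal) * eLog2 ((C * 2 ^ (-(n * E)) : ℝ) : EReal))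
      atTop = E := by
  have h : Tendsto (fun n : ℕ => E - Real.logb 2 C / n) atTop (nhds E) := by
    simpa using (tendsto_const_div_atTop_nhds_zero_nat (Real.logb 2 C)).const_sub E
  refine Tendsto.liminf_eq (((continuous_coe_real_ereal.tendsto E).comp h).congr' ?_)
  filter_upwards [eventually_gt_atTop 0] with n hn
  exact (exponent_const_mul_two_rpow hn hC E).symm

section

variable {X Y : Type*} [Fintype X] [Fintype Y] {α : ℝ≥0∞} {W : X → Y → ℝ≥0∞} {r E : ℝ}

theorem le_Erf_of_eventually_simD_le {c : ℕ → ℝ} (hc : RateOK r c) {C : ℝ} (hC : 0 < C)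
    (h : ∀ᶠ n : ℕ in atTop, simD α (prodCh n W) (c n) ≤ ((C * 2 ^ (-(n * E)) : ℝ) : EReal)) :
    (E : EReal) ≤ Erf α W r := by
  refine le_iSup_of_le ⟨c, hc⟩ ?_
  rw [← liminf_exponent_const_mul_two_rpow hC E]
  refine liminf_le_liminf ?_
  filter_upwards [h] with n hn
  exact antitone_neg_one_div_mul n (monotone_eLog2 hn)

theorem Erf_le_of_eventually_le_simD
    (h : ∀ c, RateOK r c → ∃ C : ℝ, 0 < C ∧
      ∀ᶠ n : ℕ in atTop, ((C * 2 ^ (-(n * E)) : ℝ) : EReal) ≤ simD α (prodCh n W) (c n)) :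
    Erf α W r ≤ E := by
  refine iSup_le fun ⟨c, hc⟩ => ?_
  obtain ⟨C, hC, h⟩ := h c hc
  rw [← liminf_exponent_const_mul_two_rpow hC E]
  refine liminf_le_liminf ?_
  filter_upwards [h] with n hn
  exact antitone_neg_one_div_mul n (monotone_eLog2 hn)

end

/-! ### Simulations and rejection sampling -/

section

variable {X Y : Type*} [Fintype Y] {N : X → Y → ℝ≥0∞} {M : ℕ}

theorem IsDist.eq {Q : Y → ℝ≥0∞} (hQ : IsDist Q) : ∑ y, Q y = 1 := hQ

theorem IsDist.le_one {Q : Y → ℝ≥0∞} (hQ : IsDist Q) (y : Y) : Q y ≤ 1 :=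
  hQ ▸ Finset.single_le_sum (fun _ _ => zero_le) (Finset.mem_univ y)

theorem IsDist.ne_top {Q : Y → ℝ≥0∞} (hQ : IsDist Q) (y : Y) : Q y ≠ ⊤ :=
  ((hQ.le_one y).trans_lt ENNReal.one_lt_top).ne

theorem IsDist.sum_toReal {Q : Y → ℝ≥0∞} (hQ : IsDist Q) : ∑ y, (Q y).toReal = 1 := by
  rw [← ENNReal.toReal_sum fun y _ => hQ.ne_top y, hQ, ENNReal.toReal_one]

/-- Simulation of a channel with a message set of exactly `M` elements: the condition of
`IsSimulation` with the number of messages exposed and the cost left out. -/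
def IsMessageSimulation (M : ℕ) (N : X → Y → ℝ≥0∞) : Prop :=
  ∃ (m : ℕ) (PK : Fin m → ℝ≥0∞) (E : X → Fin m → Fin M → ℝ≥0∞) (D : Fin M → Fin m → Y → ℝ≥0∞),
    ∑ k, PK k = 1 ∧ (∀ x k, ∑ j, E x k j = 1) ∧ (∀ j k, ∑ y, D j k y = 1) ∧
    ∀ x y, N x y = ∑ k, ∑ j, PK k * E x k j * D j k y

theorem isMessageSimulation_of_fintype {K : Type*} [Fintype K] (PK : K → ℝ≥0∞)
    (E : X → K → Fin M → ℝ≥0∞) (D : Fin M → K → Y → ℝ≥0∞) (hPK : ∑ k, PK k = 1)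
    (hE : ∀ x k, ∑ j, E x k j = 1) (hD : ∀ j k, ∑ y, D j k y = 1) :
    IsMessageSimulation M fun x y => ∑ k, ∑ j, PK k * E x k j * D j k y := by
  let e := (Fintype.equivFin K).symm
  exact ⟨Fintype.card K, fun k => PK (e k), fun x k => E x (e k), fun j k => D j (e k),
    (e.sum_comp PK).trans hPK, fun x k => hE x _, fun j k => hD j _,
    fun x y => (e.sum_comp fun k => ∑ j, PK k * E x k j * D j k y).symm⟩

theorem IsMessageSimulation.isDist (h : IsMessageSimulation M N) (x : X) : IsDist (N x) := by
  obtain ⟨m, PK, E, D, hPK, hE, hD, hN⟩ := h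
  calc ∑ y, N x y = ∑ k, PK k * ∑ j, E x k j * ∑ y, D j k y := by
        simp only [hN, Finset.mul_sum, ← mul_assoc]
        rw [Finset.sum_comm]
        exact Finset.sum_congr rfl fun k _ => Finset.sum_comm
    _ = 1 := by simp [hE, hD, hPK]

theorem IsMessageSimulation.exists_isDist_le_mul (h : IsMessageSimulation M N) (hM : 0 < M) :
    ∃ Q : Y → ℝ≥0∞, IsDist Q ∧ ∀ x y, N x y ≤ M * Q y := by
  obtain ⟨m, PK, E, D, hPK, hE, hD, hN⟩ := h
  have hM0 : (M : ℝ≥0∞) ≠ 0 := by exact_mod_cast hM.ne'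
  have hMt : (M : ℝ≥0∞) ≠ ⊤ := ENNReal.natCast_ne_top M
  refine ⟨fun y => (M : ℝ≥0∞)⁻¹ * ∑ k, ∑ j, PK k * D j k y, ?_, fun x y => ?_⟩
  · have total : ∑ y, ∑ k, ∑ j, PK k * D j k y = M := by
      calc ∑ y, ∑ k, ∑ j, PK k * D j k y = ∑ k, PK k * ∑ j, ∑ y, D j k y := by
            simp only [Finset.mul_sum]
            rw [Finset.sum_comm]
            exact Finset.sum_congr rfl fun k _ => Finset.sum_comm
        _ = M := by simp [hD, ← Finset.sum_mul, hPK]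
    rw [IsDist, ← Finset.mul_sum, total, ENNReal.inv_mul_cancel hM0 hMt]
  · rw [← mul_assoc, ENNReal.mul_inv_cancel hM0 hMt, one_mul, hN]
    refine Finset.sum_le_sum fun k _ => Finset.sum_le_sum fun j _ => ?_
    exact mul_le_mul_left (mul_le_of_le_one_right' (IsDist.le_one (hE x k) j)) _

theorem isMessageSimulation_one_const {Q : Y → ℝ≥0∞} (hQ : IsDist Q) :
    IsMessageSimulation 1 fun (_ : X) => Q :=
  ⟨1, fun _ => 1, fun _ _ _ => 1, fun _ _ => Q, by simp, by simp, fun _ _ => hQ, by simp⟩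

/-- One round of rejection sampling: a shared candidate `z ∼ Q` is accepted with probability
`a x z`, which is announced by one extra message; otherwise the given simulation is run. -/
theorem IsMessageSimulation.rejection_step (h : IsMessageSimulation M N) {Q : Y → ℝ≥0∞}
    (hQ : IsDist Q) {a : X → Y → ℝ≥0∞} (ha : ∀ x z, a x z ≤ 1) :
    IsMessageSimulation (M + 1) fun x y => Q y * a x y + (∑ z, Q z * (1 - a x z)) * N x y := by
  obtain ⟨m, PK, E, D, hPK, hE, hD, hN⟩ := h
  have sim := isMessageSimulation_of_fintype (K := Fin m × Y) (fun k => PK k.1 * Q k.2)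
    (fun x k => Fin.cons (a x k.2) fun j => (1 - a x k.2) * E x k.1 j)
    (Fin.cons (fun k y => if k.2 = y then 1 else 0) fun j k => D j k.1)
    (by simp only [Fintype.sum_prod_type, ← Finset.mul_sum, hQ.eq, mul_one, hPK])
    (fun x k => by
      simp only [Fin.sum_univ_succ, Fin.cons_zero, Fin.cons_succ, ← Finset.mul_sum, hE, mul_one,
        add_tsub_cancel_of_le (ha x k.2)])
    (fun j k => by refine Fin.cases ?_ (fun j => ?_) j <;> simp [hD])
  convert sim using 3 with x y
  have accept : ∑ k : Fin m × Y, PK k.1 * Q k.2 * a x k.2 * (if k.2 = y then 1 else 0) =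
      Q y * a x y := by
    simp [Fintype.sum_prod_type, mul_assoc, ← Finset.sum_mul, hPK]
  have reject : ∑ k : Fin m × Y, ∑ j, PK k.1 * Q k.2 * ((1 - a x k.2) * E x k.1 j) * D j k.1 y =
      (∑ z, Q z * (1 - a x z)) * N x y := by
    rw [hN, Fintype.sum_prod_type_right, Finset.sum_mul_sum]
    refine Finset.sum_congr rfl fun z _ => Finset.sum_congr rfl fun k _ => ?_
    rw [Finset.mul_sum]
    exact Finset.sum_congr rfl fun j _ => by ring
  simp only [Fin.sum_univ_succ, Fin.cons_zero, Fin.cons_succ, Finset.sum_add_distrib,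
    accept, reject]

theorem exists_isMessageSimulation_ge {Q : Y → ℝ≥0∞} (hQ : IsDist Q) {l : ℝ≥0∞} (hl : 1 ≤ l)
    (hlt : l ≠ ⊤) {V : X → Y → ℝ≥0∞} (hV : ∀ x y, V x y ≤ l * Q y) (hV1 : ∀ x, ∑ y, V x y ≤ 1)
    (m : ℕ) :
    ∃ N : X → Y → ℝ≥0∞, IsMessageSimulation (m + 1) N ∧
      ∀ x y, (1 - (1 - l⁻¹) ^ (m + 1)) * V x y ≤ N x y := by
  have hl0 : l ≠ 0 := (zero_lt_one.trans_le hl).ne'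
  have hl1 : l⁻¹ ≤ 1 := ENNReal.inv_le_one.2 hl
  have hlV : ∀ x y, l⁻¹ * V x y ≤ Q y := fun x y => by
    rw [← one_mul (Q y), ← ENNReal.inv_mul_cancel hl0 hlt, mul_assoc]
    exact mul_le_mul_right (hV x y) _
  induction m with
  | zero =>
    refine ⟨_, isMessageSimulation_one_const hQ, fun x y => ?_⟩
    simpa [ENNReal.sub_sub_cancel ENNReal.one_ne_top hl1] using hlV x y
  | succ m ih =>
    obtain ⟨N, hN, hVN⟩ := ih
    set a : X → Y → ℝ≥0∞ := fun x y => l⁻¹ * V x y / Q y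
    have ha : ∀ x y, a x y ≤ 1 := fun x y => ENNReal.div_le_of_le_mul (by simpa using hlV x y)
    have hQa : ∀ x y, Q y * a x y = l⁻¹ * V x y := fun x y =>
      ENNReal.mul_div_cancel' (fun h0 => le_zero_iff.1 (h0 ▸ hlV x y))
        (fun ht => (hQ.ne_top y ht).elim)
    refine ⟨_, hN.rejection_step hQ ha, fun x y => ?_⟩
    have reject_ge : 1 - l⁻¹ ≤ ∑ z, Q z * (1 - a x z) := by
      have total : ∑ z, Q z * (1 - a x z) + ∑ z, Q z * a x z = 1 := by
        simp only [← Finset.sum_add_distrib, ← mul_add, tsub_add_cancel_of_le (ha x _), mul_one,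
          hQ.eq]
      have accept_le : ∑ z, Q z * a x z ≤ l⁻¹ := by
        simpa only [hQa, ← Finset.mul_sum] using mul_le_of_le_one_right' (hV1 x)
      exact tsub_le_iff_right.2 (total.ge.trans (add_le_add_right accept_le _))
    have geometric : 1 - (1 - l⁻¹) ^ (m + 2) ≤
        l⁻¹ + (1 - l⁻¹) * (1 - (1 - l⁻¹) ^ (m + 1)) := by
      rw [tsub_le_iff_right, add_assoc, pow_succ' _ (m + 1), ← mul_add,
        tsub_add_cancel_of_le (pow_le_one' tsub_le_self _), mul_one, add_tsub_cancel_of_le hl1]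
    calc (1 - (1 - l⁻¹) ^ (m + 2)) * V x y
        ≤ (l⁻¹ + (1 - l⁻¹) * (1 - (1 - l⁻¹) ^ (m + 1))) * V x y := by gcongr
      _ = l⁻¹ * V x y + (1 - l⁻¹) * ((1 - (1 - l⁻¹) ^ (m + 1)) * V x y) := by ring
      _ ≤ Q y * a x y + (∑ z, Q z * (1 - a x z)) * N x y := by
          rw [hQa]
          gcongr
          exact hVN x y

variable [Fintype X]

theorem isSimulation_iff {c : ℝ} :
    IsSimulation c N ↔ ∃ M : ℕ, 0 < M ∧ Real.logb 2 M ≤ c ∧ IsMessageSimulation M N := by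
  constructor
  · rintro ⟨m, M, PK, E, D, hM, hc, h⟩
    exact ⟨M, hM, hc, m, PK, E, D, h⟩
  · rintro ⟨M, hM, hc, m, PK, E, D, h⟩
    exact ⟨m, M, PK, E, D, hM, hc, h⟩

theorem IsSimulation.isDist {c : ℝ} (h : IsSimulation c N) (x : X) : IsDist (N x) := by
  obtain ⟨_, _, _, h⟩ := isSimulation_iff.1 h
  exact h.isDist x

theorem IsSimulation.exists_isDist_le_two_rpow_mul {c : ℝ} (h : IsSimulation c N) :
    ∃ Q : Y → ℝ≥0∞, IsDist Q ∧ ∀ x y, N x y ≤ ENNReal.ofReal (2 ^ c) * Q y := by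
  obtain ⟨M, hM, hc, h⟩ := isSimulation_iff.1 h
  obtain ⟨Q, hQ, hNQ⟩ := h.exists_isDist_le_mul hM
  have hMc : (M : ℝ≥0∞) ≤ ENNReal.ofReal (2 ^ c) := by
    rw [← ENNReal.ofReal_natCast]
    exact ENNReal.ofReal_le_ofReal
      ((Real.logb_le_iff_le_rpow one_lt_two (by exact_mod_cast hM)).1 hc)
  exact ⟨Q, hQ, fun x y => (hNQ x y).trans (mul_le_mul_left hMc _)⟩

end

/-! ### Rényi divergence -/

section

variable {ι : Type*} [Fintype ι] {p t : ι → ℝ}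

theorem sum_mul_rpow_pos (hp : ∀ i, 0 ≤ p i) (hp1 : ∑ i, p i = 1) (ht : ∀ i, 0 < p i → 0 < t i)
    (c : ℝ) : 0 < ∑ i, p i * t i ^ c := by
  have nonneg : ∀ i, 0 ≤ p i * t i ^ c := fun i => by
    rcases (hp i).eq_or_lt with h | h
    · simp [← h]
    · have := ht i h
      positivity
  obtain ⟨i, -, hi⟩ := Finset.exists_ne_zero_of_sum_ne_zero (hp1.trans_ne one_ne_zero)
  have hpi : 0 < p i := (hp i).lt_of_ne' hi
  exact Finset.sum_pos' (fun i _ => nonneg i)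
    ⟨i, Finset.mem_univ i, mul_pos hpi (Real.rpow_pos_of_pos (ht i hpi) c)⟩

theorem mul_sum_mul_logb_le_logb_sum_mul_rpow (hp : ∀ i, 0 ≤ p i) (hp1 : ∑ i, p i = 1)
    (ht : ∀ i, 0 < p i → 0 < t i) (c : ℝ) :
    c * ∑ i, p i * Real.logb 2 (t i) ≤ Real.logb 2 (∑ i, p i * t i ^ c) := by
  have hS := sum_mul_rpow_pos hp hp1 ht c
  set S := ∑ i, p i * t i ^ c with hS_def
  have tangent : ∀ i, c * (p i * Real.log (t i)) ≤ p i * t i ^ c / S + p i * (Real.log S - 1) := by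
    intro i
    rcases (hp i).eq_or_lt with h | h
    · simp [← h]
    have hti := ht i h
    have hlog := Real.log_le_sub_one_of_pos (x := t i ^ c / S) (by positivity)
    rw [Real.log_div (by positivity) hS.ne', Real.log_rpow hti] at hlog
    calc c * (p i * Real.log (t i)) = p i * (c * Real.log (t i) - Real.log S + Real.log S) := by
          ring
      _ ≤ p i * (t i ^ c / S - 1 + Real.log S) := by gcongr
      _ = _ := by ring
  have jensen : c * ∑ i, p i * Real.log (t i) ≤ Real.log S := by
    calc c * ∑ i, p i * Real.log (t i)
        ≤ ∑ i, (p i * t i ^ c / S + p i * (Real.log S - 1)) := by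
          rw [Finset.mul_sum]
          exact Finset.sum_le_sum fun i _ => tangent i
      _ = Real.log S := by
          rw [Finset.sum_add_distrib, ← Finset.sum_div, ← Finset.sum_mul, ← hS_def, hp1,
            div_self hS.ne']
          ring
  simp only [Real.logb, ← mul_div_assoc, ← Finset.sum_div]
  gcongr

theorem inv_mul_logb_sum_mul_rpow_le (hp : ∀ i, 0 ≤ p i) (hp1 : ∑ i, p i = 1) (ht0 : ∀ i, 0 ≤ t i)
    (ht : ∀ i, 0 < p i → 0 < t i) {c d : ℝ} (hc : 0 < c) (hcd : c ≤ d) :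
    c⁻¹ * Real.logb 2 (∑ i, p i * t i ^ c) ≤ d⁻¹ * Real.logb 2 (∑ i, p i * t i ^ d) := by
  have hd : 0 < d := hc.trans_le hcd
  have hS := sum_mul_rpow_pos hp hp1 ht c
  have power_mean : (∑ i, p i * t i ^ c) ^ (d / c) ≤ ∑ i, p i * t i ^ d := by
    refine (Real.rpow_arith_mean_le_arith_mean_rpow Finset.univ p (fun i => t i ^ c)
      (fun i _ => hp i) hp1 (fun i _ => Real.rpow_nonneg (ht0 i) c)
      ((one_le_div hc).2 hcd)).trans_eq (Finset.sum_congr rfl fun i _ => ?_)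
    rw [← Real.rpow_mul (ht0 i), mul_div_cancel₀ d hc.ne']
  have := Real.logb_le_logb_of_le one_lt_two (by positivity) power_mean
  rw [Real.logb_rpow_eq_mul_logb_of_pos hS] at this
  calc c⁻¹ * Real.logb 2 (∑ i, p i * t i ^ c)
      = d⁻¹ * (d / c * Real.logb 2 (∑ i, p i * t i ^ c)) := by field_simp
    _ ≤ _ := by gcongr

end

theorem elog2_ofReal {t : ℝ} (ht : 0 < t) : elog2 (ENNReal.ofReal t) = (Real.logb 2 t : ℝ) := by
  rw [elog2, if_neg (by simpa using ht), if_neg ENNReal.ofReal_ne_top, ENNReal.toReal_ofReal ht.le]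

theorem monotone_elog2 : Monotone elog2 := by
  intro s t h
  unfold elog2
  rcases eq_or_ne s 0 with rfl | hs
  · simp
  rcases eq_or_ne t ⊤ with rfl | ht
  · simp
  have hst : s ≠ ⊤ := ne_top_of_le_ne_top ht h
  have ht0 : t ≠ 0 := ((pos_iff_ne_zero.2 hs).trans_le h).ne'
  rw [if_neg hs, if_neg ht0, if_neg ht, if_neg hst, EReal.coe_le_coe_iff]
  exact Real.logb_le_logb_of_le one_lt_two (ENNReal.toReal_pos hs hst) (ENNReal.toReal_mono ht h)

theorem rpow_mul_rpow_one_sub {a p q : ℝ} (ha : a ≠ 0) (hp : 0 ≤ p) (hq : 0 ≤ q)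
    (h : q = 0 → p = 0) : p ^ a * q ^ (1 - a) = p * (p / q) ^ (a - 1) := by
  rcases hp.eq_or_lt with rfl | hp
  · simp [Real.zero_rpow ha]
  have hq : 0 < q := hq.lt_of_ne' fun h0 => hp.ne' (h h0)
  rw [Real.div_rpow hp.le hq.le, Real.rpow_sub_one hp.ne', ← neg_sub, Real.rpow_neg hq.le]
  field_simp

theorem toReal_ratio_pos {Y : Type*} {P Q : Y → ℝ≥0∞} (hQ : ∀ y, Q y ≠ ⊤)
    (hac : ∀ y, Q y = 0 → P y = 0) (y : Y) (hp : 0 < (P y).toReal) :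
    0 < (P y).toReal / (Q y).toReal :=
  div_pos hp (ENNReal.toReal_pos (fun h => by simp [hac y h] at hp) (hQ y))

section

variable {Y : Type*} [Fintype Y] {α β : ℝ≥0∞} {P Q : Y → ℝ≥0∞}

theorem renyiD_of_ne (h0 : α ≠ 0) (h1 : α ≠ 1) (ht : α ≠ ⊤) (P Q : Y → ℝ≥0∞) :
    renyiD α P Q = (((α.toReal - 1)⁻¹ : ℝ) : EReal) *
      elog2 (∑ y, P y ^ α.toReal * Q y ^ (1 - α.toReal)) := by
  rw [renyiD, if_neg h0, if_neg h1, if_neg ht]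

theorem sum_rpow_mul_rpow_one_sub_eq_ofReal {a : ℝ} (ha : 0 < a) (hP : ∀ y, P y ≠ ⊤)
    (hQ : ∀ y, Q y ≠ ⊤) (h : a < 1 ∨ ∀ y, Q y = 0 → P y = 0) :
    ∑ y, P y ^ a * Q y ^ (1 - a) =
      ENNReal.ofReal (∑ y, (P y).toReal ^ a * (Q y).toReal ^ (1 - a)) := by
  rw [ENNReal.ofReal_sum_of_nonneg fun y _ => by positivity]
  refine Finset.sum_congr rfl fun y _ => ?_
  rw [ENNReal.ofReal_mul (by positivity), ENNReal.toReal_rpow, ENNReal.toReal_rpow,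
    ENNReal.ofReal_toReal (ENNReal.rpow_ne_top_of_nonneg ha.le (hP y))]
  rcases eq_or_ne (P y) 0 with hP0 | hP0
  · simp [hP0, ENNReal.zero_rpow_of_pos ha]
  · rw [ENNReal.ofReal_toReal]
    rw [Ne, ENNReal.rpow_eq_top_iff]
    rintro (⟨hQ0, ha1⟩ | ⟨hQt, -⟩)
    · exact h.elim (fun h => by linarith) fun h => hP0 (h y hQ0)
    · exact hQ y hQt

theorem renyiD_eq_logb (h0 : α ≠ 0) (h1 : α ≠ 1) (ht : α ≠ ⊤) (hP : ∀ y, P y ≠ ⊤)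
    (hQ : ∀ y, Q y ≠ ⊤) (h : α < 1 ∨ ∀ y, Q y = 0 → P y = 0)
    (hS : 0 < ∑ y, (P y).toReal ^ α.toReal * (Q y).toReal ^ (1 - α.toReal)) :
    renyiD α P Q = ((α.toReal - 1)⁻¹ *
      Real.logb 2 (∑ y, (P y).toReal ^ α.toReal * (Q y).toReal ^ (1 - α.toReal)) : ℝ) := by
  have h' : α.toReal < 1 ∨ ∀ y, Q y = 0 → P y = 0 :=
    h.imp_left fun h => by simpa using ENNReal.toReal_strict_mono ENNReal.one_ne_top h
  rw [renyiD_of_ne h0 h1 ht,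
    sum_rpow_mul_rpow_one_sub_eq_ofReal (ENNReal.toReal_pos h0 ht) hP hQ h', elog2_ofReal hS,
    EReal.coe_mul]

theorem toReal_rpow_mul_toReal_rpow_one_sub {Y : Type*} {P Q : Y → ℝ≥0∞} {a : ℝ} (ha : a ≠ 0)
    (hQ : ∀ y, Q y ≠ ⊤) (hac : ∀ y, Q y = 0 → P y = 0) (y : Y) :
    (P y).toReal ^ a * (Q y).toReal ^ (1 - a) =
      (P y).toReal * ((P y).toReal / (Q y).toReal) ^ (a - 1) :=
  rpow_mul_rpow_one_sub ha ENNReal.toReal_nonneg ENNReal.toReal_nonneg fun h => by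
    rw [hac y (((ENNReal.toReal_eq_zero_iff _).1 h).resolve_right (hQ y)), ENNReal.toReal_zero]

theorem sum_rpow_mul_rpow_one_sub_pos {a : ℝ} (ha : a ≠ 0) (hP : IsDist P) (hQ : ∀ y, Q y ≠ ⊤)
    (hac : ∀ y, Q y = 0 → P y = 0) : 0 < ∑ y, (P y).toReal ^ a * (Q y).toReal ^ (1 - a) := by
  simp only [toReal_rpow_mul_toReal_rpow_one_sub ha hQ hac]
  exact sum_mul_rpow_pos (fun y => ENNReal.toReal_nonneg) hP.sum_toReal
    (toReal_ratio_pos hQ hac) (a - 1)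

theorem renyiD_eq_logb_of_ac (h0 : α ≠ 0) (h1 : α ≠ 1) (ht : α ≠ ⊤) (hP : IsDist P)
    (hQ : ∀ y, Q y ≠ ⊤) (hac : ∀ y, Q y = 0 → P y = 0) :
    renyiD α P Q = ((α.toReal - 1)⁻¹ * Real.logb 2
      (∑ y, (P y).toReal * ((P y).toReal / (Q y).toReal) ^ (α.toReal - 1)) : ℝ) := by
  have ha : α.toReal ≠ 0 := ENNReal.toReal_ne_zero.2 ⟨h0, ht⟩
  simp only [← toReal_rpow_mul_toReal_rpow_one_sub ha hQ hac]
  exact renyiD_eq_logb h0 h1 ht hP.ne_top hQ (Or.inr hac)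
    (sum_rpow_mul_rpow_one_sub_pos ha hP hQ hac)

theorem renyiD_one_eq_sum_mul_logb (hP : ∀ y, P y ≠ ⊤) (hQ : ∀ y, Q y ≠ ⊤)
    (hac : ∀ y, Q y = 0 → P y = 0) :
    renyiD 1 P Q = (∑ y, (P y).toReal * Real.logb 2 ((P y).toReal / (Q y).toReal) : ℝ) := by
  have coe_sum (f : Y → ℝ) : ((∑ y, f y : ℝ) : EReal) = ∑ y, (f y : EReal) :=
    map_sum (⟨⟨Real.toEReal, EReal.coe_zero⟩, EReal.coe_add⟩ : ℝ →+ EReal) f Finset.univ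
  rw [renyiD, if_neg one_ne_zero, if_pos rfl, coe_sum]
  refine Finset.sum_congr rfl fun y _ => ?_
  rcases eq_or_ne (P y) 0 with hP0 | hP0
  · simp [hP0]
  have hQ0 : Q y ≠ 0 := fun h => hP0 (hac y h)
  rw [elog2, if_neg (by simp [hP0, hQ y]), if_neg (by simp [ENNReal.div_eq_top, hP y, hQ0]),
    ENNReal.toReal_div, EReal.coe_mul]

theorem renyiD_one_eq_top_of_not_ac (hP : ∀ y, P y ≠ ⊤) (hQ : ∀ y, Q y ≠ ⊤)
    (hac : ¬ ∀ y, Q y = 0 → P y = 0) : renyiD 1 P Q = ⊤ := by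
  push Not at hac
  obtain ⟨y, hQy, hPy⟩ := hac
  have term_ne_bot : ∀ z, ((P z).toReal : EReal) * elog2 (P z / Q z) ≠ ⊥ := by
    intro z
    rcases eq_or_ne (P z) 0 with hz | hz
    · simp [hz]
    have hratio : elog2 (P z / Q z) ≠ ⊥ := by
      rw [elog2, if_neg (by simp [hz, hQ z])]
      split_ifs <;> simp
    simp [EReal.mul_eq_bot, hratio, ENNReal.toReal_pos hz (hP z) |>.not_gt]
  have term_eq_top : ((P y).toReal : EReal) * elog2 (P y / Q y) = ⊤ := by
    simp [hQy, ENNReal.div_zero hPy, elog2,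
      EReal.coe_mul_top_of_pos (ENNReal.toReal_pos hPy (hP y))]
  have sum_ne_bot : ∀ s : Finset Y, ∑ z ∈ s, ((P z).toReal : EReal) * elog2 (P z / Q z) ≠ ⊥ :=
    fun s => Finset.sum_induction _ (· ≠ ⊥)
      (fun a b ha hb => by simp [EReal.add_eq_bot_iff, ha, hb])
      EReal.zero_ne_bot fun z _ => term_ne_bot z
  rw [renyiD, if_neg one_ne_zero, if_pos rfl, ← Finset.add_sum_erase _ _ (Finset.mem_univ y),
    term_eq_top, EReal.top_add_of_ne_bot (sum_ne_bot _)]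

theorem renyiD_eq_top_of_not_ac (h1 : 1 ≤ α) (ht : α ≠ ⊤) (hP : ∀ y, P y ≠ ⊤)
    (hQ : ∀ y, Q y ≠ ⊤) (hac : ¬ ∀ y, Q y = 0 → P y = 0) : renyiD α P Q = ⊤ := by
  rcases h1.eq_or_lt with rfl | h1
  · exact renyiD_one_eq_top_of_not_ac hP hQ hac
  have ha : 1 < α.toReal := by simpa using ENNReal.toReal_strict_mono ht h1
  push Not at hac
  obtain ⟨y, hQy, hPy⟩ := hac
  have hS : ∑ y, P y ^ α.toReal * Q y ^ (1 - α.toReal) = ⊤ := by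
    refine ENNReal.sum_eq_top.2 ⟨y, Finset.mem_univ y, ?_⟩
    rw [hQy, ENNReal.zero_rpow_of_neg (by linarith), ENNReal.mul_top]
    simp [ENNReal.rpow_eq_zero_iff, hPy, hP y]
  rw [renyiD_of_ne (zero_lt_one.trans h1).ne' h1.ne' ht, hS, elog2, if_neg ENNReal.top_ne_zero,
    if_pos rfl]
  exact EReal.coe_mul_top_of_pos (inv_pos.2 (sub_pos.2 ha))

theorem renyiD_le_renyiD_one (h0 : α ≠ 0) (h1 : α ≤ 1) (hP : IsDist P) (hQ : ∀ y, Q y ≠ ⊤) :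
    renyiD α P Q ≤ renyiD 1 P Q := by
  by_cases hac : ∀ y, Q y = 0 → P y = 0
  swap
  · simp [renyiD_one_eq_top_of_not_ac hP.ne_top hQ hac]
  rcases h1.eq_or_lt with rfl | h1
  · rfl
  have ha : α.toReal < 1 := by simpa using ENNReal.toReal_strict_mono ENNReal.one_ne_top h1
  rw [renyiD_eq_logb_of_ac h0 h1.ne h1.ne_top hP hQ hac,
    renyiD_one_eq_sum_mul_logb hP.ne_top hQ hac, EReal.coe_le_coe_iff,
    inv_mul_eq_div, div_le_iff_of_neg' (sub_neg.2 ha)]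
  exact mul_sum_mul_logb_le_logb_sum_mul_rpow (fun y => ENNReal.toReal_nonneg) hP.sum_toReal
    (toReal_ratio_pos hQ hac) _

theorem renyiD_one_le_renyiD (h1 : 1 ≤ α) (ht : α ≠ ⊤) (hP : IsDist P) (hQ : ∀ y, Q y ≠ ⊤) :
    renyiD 1 P Q ≤ renyiD α P Q := by
  by_cases hac : ∀ y, Q y = 0 → P y = 0
  swap
  · simp [renyiD_eq_top_of_not_ac h1 ht hP.ne_top hQ hac]
  rcases h1.eq_or_lt with rfl | h1
  · rfl
  have ha : 1 < α.toReal := by simpa using ENNReal.toReal_strict_mono ht h1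
  rw [renyiD_eq_logb_of_ac (zero_lt_one.trans h1).ne' h1.ne' ht hP hQ hac,
    renyiD_one_eq_sum_mul_logb hP.ne_top hQ hac, EReal.coe_le_coe_iff,
    le_inv_mul_iff₀ (sub_pos.2 ha)]
  exact mul_sum_mul_logb_le_logb_sum_mul_rpow (fun y => ENNReal.toReal_nonneg) hP.sum_toReal
    (toReal_ratio_pos hQ hac) _

theorem renyiD_le_renyiD_of_le (h0 : α ≠ 0) (hαβ : α ≤ β) (h1 : 1 ≤ β) (ht : β ≠ ⊤)
    (hP : IsDist P) (hQ : ∀ y, Q y ≠ ⊤) : renyiD α P Q ≤ renyiD β P Q := by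
  rcases le_or_gt α 1 with hα | hα
  · exact (renyiD_le_renyiD_one h0 hα hP hQ).trans (renyiD_one_le_renyiD h1 ht hP hQ)
  have hβ : 1 < β := hα.trans_le hαβ
  by_cases hac : ∀ y, Q y = 0 → P y = 0
  swap
  · simp [renyiD_eq_top_of_not_ac h1 ht hP.ne_top hQ hac]
  have hαt : α ≠ ⊤ := ne_top_of_le_ne_top ht hαβ
  have ha : 1 < α.toReal := by simpa using ENNReal.toReal_strict_mono hαt hα
  rw [renyiD_eq_logb_of_ac h0 hα.ne' hαt hP hQ hac,
    renyiD_eq_logb_of_ac (zero_lt_one.trans hβ).ne' hβ.ne' ht hP hQ hac, EReal.coe_le_coe_iff]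
  exact inv_mul_logb_sum_mul_rpow_le (fun y => ENNReal.toReal_nonneg) hP.sum_toReal
    (fun y => by positivity) (toReal_ratio_pos hQ hac) (sub_pos.2 ha)
    (sub_le_sub_right (ENNReal.toReal_mono ht hαβ) 1)

end

/-! ### One-shot bounds on the Rényi divergence -/

theorem le_rpow_mul_rpow_one_sub {a p q : ℝ} (ha : 1 ≤ a) (hp : 0 ≤ p) (hq : 0 ≤ q)
    (h : q = 0 → p = 0) : a * p + (1 - a) * q ≤ p ^ a * q ^ (1 - a) := by
  rcases hq.eq_or_lt with hq | hq
  · simp [h hq.symm, ← hq, Real.zero_rpow (one_pos.trans_le ha).ne']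
  have bernoulli := one_add_mul_self_le_rpow_one_add (s := p / q - 1)
    (by linarith [div_nonneg hp hq.le]) ha
  rw [add_sub_cancel] at bernoulli
  calc a * p + (1 - a) * q = q * (1 + a * (p / q - 1)) := by field_simp; ring
    _ ≤ q * (p / q) ^ a := by gcongr
    _ = p ^ a * q ^ (1 - a) := by
      rw [Real.div_rpow hp hq.le, Real.rpow_sub hq, Real.rpow_one]
      ring

theorem log_le_logb_two {x : ℝ} (hx : 0 ≤ Real.log x) : Real.log x ≤ Real.logb 2 x :=
  le_div_self hx (Real.log_pos one_lt_two) (by linarith [Real.log_two_lt_d9])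

section

variable {Y : Type*} [Fintype Y] {a K : ℝ} {p q : Y → ℝ}

theorem sum_rpow_mul_rpow_one_sub_le (h0 : 0 < a) (h1 : a ≤ 1) (hK : 0 < K)
    (hKa : K ^ (a - 1) ≤ a / 2) (hp : ∀ y, 0 ≤ p y) (hq : ∀ y, 0 ≤ q y)
    (hp1 : ∑ y, p y = 1) (hq1 : ∑ y, q y = 1) {A : Finset Y} (hA : ∀ y ∈ A, K * q y ≤ p y) :
    ∑ y, p y ^ a * q y ^ (1 - a) ≤ 1 - a / 2 * ∑ y ∈ A, p y := by
  have on_A : ∀ y ∈ A, p y ^ a * q y ^ (1 - a) ≤ a / 2 * p y := by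
    intro y hy
    rcases (hp y).eq_or_lt with h | h
    · simp [← h, Real.zero_rpow h0.ne']
    calc p y ^ a * q y ^ (1 - a) ≤ p y ^ a * (p y / K) ^ (1 - a) := by
          gcongr
          · exact hq y
          · exact (le_div_iff₀' hK).2 (hA y hy)
      _ = K ^ (a - 1) * (p y ^ a * p y ^ (1 - a)) := by
          rw [Real.div_rpow h.le hK.le, ← neg_sub 1 a, Real.rpow_neg hK.le]
          ring
      _ = K ^ (a - 1) * p y := by rw [← Real.rpow_add h, add_sub_cancel, Real.rpow_one]
      _ ≤ a / 2 * p y := by gcongr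
  have off_A : ∀ y, p y ^ a * q y ^ (1 - a) ≤ a * p y + (1 - a) * q y := fun y =>
    Real.geom_mean_le_arith_mean2_weighted h0.le (sub_nonneg.2 h1) (hp y) (hq y) (by ring)
  have hpA : ∑ y ∈ Aᶜ, p y = 1 - ∑ y ∈ A, p y := by
    rw [← hp1, ← Finset.sum_add_sum_compl A p, add_sub_cancel_left]
  have hqA : ∑ y ∈ Aᶜ, q y ≤ 1 :=
    hq1 ▸ Finset.sum_le_univ_sum_of_nonneg hq
  calc ∑ y, p y ^ a * q y ^ (1 - a)
      ≤ ∑ y ∈ A, a / 2 * p y + ∑ y ∈ Aᶜ, (a * p y + (1 - a) * q y) := by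
        rw [← Finset.sum_add_sum_compl A]
        exact add_le_add (Finset.sum_le_sum on_A) (Finset.sum_le_sum fun y _ => off_A y)
    _ = a / 2 * ∑ y ∈ A, p y + a * (1 - ∑ y ∈ A, p y) + (1 - a) * ∑ y ∈ Aᶜ, q y := by
        rw [Finset.sum_add_distrib, ← Finset.mul_sum, ← Finset.mul_sum, ← Finset.mul_sum, hpA,
          add_assoc]
    _ ≤ 1 - a / 2 * ∑ y ∈ A, p y := by
        linarith [mul_le_mul_of_nonneg_left hqA (sub_nonneg.2 h1)]

theorem le_sum_rpow_mul_rpow_one_sub (h1 : 1 ≤ a) (hK : 0 ≤ K) (hKa : 2 * a ≤ K ^ (a - 1))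
    (hp : ∀ y, 0 ≤ p y) (hq : ∀ y, 0 ≤ q y) (hac : ∀ y, q y = 0 → p y = 0)
    (hp1 : ∑ y, p y = 1) (hq1 : ∑ y, q y = 1) {A : Finset Y} (hA : ∀ y ∈ A, K * q y ≤ p y) :
    1 + 1 / 2 * ((∑ y ∈ A, p y) * K ^ (a - 1)) ≤ ∑ y, p y ^ a * q y ^ (1 - a) := by
  have on_A : ∀ y ∈ A, p y * K ^ (a - 1) ≤ p y ^ a * q y ^ (1 - a) := by
    intro y hy
    rw [rpow_mul_rpow_one_sub (by positivity) (hp y) (hq y) (hac y)]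
    rcases (hq y).eq_or_lt with h | h
    · simp [hac y h.symm]
    have := (le_div_iff₀ h).2 (hA y hy)
    gcongr
    exact hp y
  have off_A : ∀ y, a * p y + (1 - a) * q y ≤ p y ^ a * q y ^ (1 - a) := fun y =>
    le_rpow_mul_rpow_one_sub h1 (hp y) (hq y) (hac y)
  have hpA : ∑ y ∈ Aᶜ, p y = 1 - ∑ y ∈ A, p y := by
    rw [← hp1, ← Finset.sum_add_sum_compl A p, add_sub_cancel_left]
  have hqA : ∑ y ∈ Aᶜ, q y ≤ 1 := hq1 ▸ Finset.sum_le_univ_sum_of_nonneg hq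
  have hA0 : 0 ≤ ∑ y ∈ A, p y := Finset.sum_nonneg fun y _ => hp y
  calc 1 + 1 / 2 * ((∑ y ∈ A, p y) * K ^ (a - 1))
      ≤ (∑ y ∈ A, p y) * K ^ (a - 1) + (a * (1 - ∑ y ∈ A, p y) + (1 - a) * ∑ y ∈ Aᶜ, q y) := by
        linarith [mul_le_mul_of_nonneg_left hqA (sub_nonneg.2 h1),
          mul_le_mul_of_nonneg_left hKa hA0]
    _ = ∑ y ∈ A, p y * K ^ (a - 1) + ∑ y ∈ Aᶜ, (a * p y + (1 - a) * q y) := by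
        rw [Finset.sum_add_distrib, ← Finset.mul_sum, ← Finset.mul_sum, ← Finset.sum_mul, hpA]
    _ ≤ ∑ y, p y ^ a * q y ^ (1 - a) := by
        rw [← Finset.sum_add_sum_compl A fun y => p y ^ a * q y ^ (1 - a)]
        exact add_le_add (Finset.sum_le_sum on_A) (Finset.sum_le_sum fun y _ => off_A y)

end

theorem le_rpow_of_rpow_inv_le {b c K : ℝ} (hb : 0 ≤ b) (hc : 0 < c) (h : b ^ c⁻¹ ≤ K) :
    b ≤ K ^ c := by
  calc b = (b ^ c⁻¹) ^ c := (Real.rpow_inv_rpow hb hc.ne').symm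
    _ ≤ K ^ c := by gcongr

section

variable {Y : Type*} [Fintype Y] {α : ℝ≥0∞} {P Q : Y → ℝ≥0∞} {A : Finset Y} {K : ℝ}

theorem le_renyiD_of_lt_one (h0 : α ≠ 0) (h1 : α < 1) (hP : IsDist P) (hQ : IsDist Q)
    (hK : (2 / α.toReal) ^ (1 - α.toReal)⁻¹ ≤ K)
    (hA : ∀ y ∈ A, K * (Q y).toReal ≤ (P y).toReal) :
    (((1 - α.toReal)⁻¹ * (α.toReal / 2 * ∑ y ∈ A, (P y).toReal) : ℝ) : EReal) ≤
      renyiD α P Q := by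
  have ha0 : 0 < α.toReal := ENNReal.toReal_pos h0 h1.ne_top
  have ha1 : α.toReal < 1 := by simpa using ENNReal.toReal_strict_mono ENNReal.one_ne_top h1
  have ha1' := sub_pos.2 ha1
  set a := α.toReal with ha
  have hKpos : 0 < K := lt_of_lt_of_le (by positivity) hK
  have hKa : K ^ (a - 1) ≤ a / 2 := by
    rw [← neg_sub, Real.rpow_neg hKpos.le, ← inv_div]
    gcongr
    exact le_rpow_of_rpow_inv_le (by positivity) ha1' hK
  have hS := sum_rpow_mul_rpow_one_sub_le ha0 ha1.le hKpos hKa (fun y => ENNReal.toReal_nonneg)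
    (fun y => ENNReal.toReal_nonneg) hP.sum_toReal hQ.sum_toReal hA
  set S := ∑ y, (P y).toReal ^ a * (Q y).toReal ^ (1 - a) with hS_def
  have hS_nonneg : 0 ≤ S := Finset.sum_nonneg fun y _ => by positivity
  rcases hS_nonneg.eq_or_lt with hS0 | hS0
  · rw [renyiD_of_ne h0 h1.ne h1.ne_top,
      sum_rpow_mul_rpow_one_sub_eq_ofReal ha0 hP.ne_top hQ.ne_top (Or.inl ha1), ← ha, ← hS_def,
      ← hS0, ENNReal.ofReal_zero, elog2, if_pos rfl,
      EReal.coe_mul_bot_of_neg (inv_lt_zero.2 (sub_neg.2 ha1))]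
    exact le_top
  rw [renyiD_eq_logb h0 h1.ne h1.ne_top hP.ne_top hQ.ne_top (Or.inl h1) hS0,
    EReal.coe_le_coe_iff, ← ha, ← hS_def, ← neg_sub 1 a, inv_neg, neg_mul, ← mul_neg,
    ← Real.logb_inv]
  have hlog : a / 2 * ∑ y ∈ A, (P y).toReal ≤ Real.log S⁻¹ := by
    rw [Real.log_inv]
    linarith [Real.log_le_sub_one_of_pos hS0]
  gcongr
  exact hlog.trans (log_le_logb_two (le_trans (by positivity) hlog))

theorem le_renyiD_of_one_lt (h1 : 1 < α) (ht : α ≠ ⊤) (hP : IsDist P) (hQ : IsDist Q)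
    (hK : (2 * α.toReal) ^ (α.toReal - 1)⁻¹ ≤ K)
    (hA : ∀ y ∈ A, K * (Q y).toReal ≤ (P y).toReal) :
    (((α.toReal - 1)⁻¹ * (1 / 4 * min 1 ((∑ y ∈ A, (P y).toReal) * K ^ (α.toReal - 1))) : ℝ) :
      EReal) ≤ renyiD α P Q := by
  by_cases hac : ∀ y, Q y = 0 → P y = 0
  swap
  · simp [renyiD_eq_top_of_not_ac h1.le ht hP.ne_top hQ.ne_top hac]
  have ha1 : 1 < α.toReal := by simpa using ENNReal.toReal_strict_mono ht h1
  have ha1' := sub_pos.2 ha1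
  set a := α.toReal
  have hKpos : 0 < K := lt_of_lt_of_le (by positivity) hK
  have hac' : ∀ y, (Q y).toReal = 0 → (P y).toReal = 0 := fun y h => by
    rw [hac y (((ENNReal.toReal_eq_zero_iff _).1 h).resolve_right (hQ.ne_top y)),
      ENNReal.toReal_zero]
  have hS := le_sum_rpow_mul_rpow_one_sub ha1.le hKpos.le
    (le_rpow_of_rpow_inv_le (by positivity) ha1' hK) (fun y => ENNReal.toReal_nonneg)
    (fun y => ENNReal.toReal_nonneg) hac' hP.sum_toReal hQ.sum_toReal hA
  set S := ∑ y, (P y).toReal ^ a * (Q y).toReal ^ (1 - a)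
  set u := (∑ y ∈ A, (P y).toReal) * K ^ (a - 1)
  have hm0 : 0 ≤ min 1 u := le_min zero_le_one (by positivity)
  have hS' : 1 + 1 / 2 * min 1 u ≤ S := by linarith [min_le_right 1 u]
  have hS0 : 0 < S := by linarith
  rw [renyiD_eq_logb (zero_lt_one.trans h1).ne' h1.ne' ht hP.ne_top hQ.ne_top (Or.inr hac) hS0,
    EReal.coe_le_coe_iff]
  have hlog : 1 / 4 * min 1 u ≤ Real.log S := by
    refine le_trans ?_ (Real.one_sub_inv_le_log_of_pos hS0)
    have : S⁻¹ ≤ 1 - 1 / 4 * min 1 u := by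
      rw [inv_le_iff_one_le_mul₀ hS0]
      nlinarith [min_le_left 1 u]
    linarith
  gcongr
  exact hlog.trans (log_le_logb_two (le_trans (by positivity) hlog))

end

theorem exists_mul_min_le_renyiD.{u} {α : ℝ≥0∞} (h0 : α ≠ 0) (ht : α ≠ ⊤) :
    ∃ C > (0 : ℝ), ∃ K₀ ≥ (1 : ℝ), ∀ (Y : Type u) [Fintype Y] (P Q : Y → ℝ≥0∞) (A : Finset Y)
      (K : ℝ), K₀ ≤ K → IsDist P → IsDist Q → (∀ y ∈ A, K * (Q y).toReal ≤ (P y).toReal) →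
      ((C * min 1 ((∑ y ∈ A, (P y).toReal) * K ^ max (α.toReal - 1) 0) : ℝ) : EReal) ≤
        renyiD α P Q := by
  rcases le_or_gt α 1 with h1 | h1
  · -- The bound at order `1` is inherited from order `1/2`.
    obtain ⟨γ, hγ0, hγ1, hγα⟩ : ∃ γ : ℝ≥0∞, γ ≠ 0 ∧ γ < 1 ∧ (γ = α ∨ α = 1) :=
      h1.lt_or_eq.elim (fun h => ⟨α, h0, h, Or.inl rfl⟩) fun h =>
        ⟨2⁻¹, by simp, ENNReal.inv_lt_one.2 ENNReal.one_lt_two, Or.inr h⟩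
    have hc0 : 0 < γ.toReal := ENNReal.toReal_pos hγ0 hγ1.ne_top
    have hc1 : γ.toReal < 1 := by simpa using ENNReal.toReal_strict_mono ENNReal.one_ne_top hγ1
    have hc1' := sub_pos.2 hc1
    have ha1 : α.toReal ≤ 1 := by simpa using ENNReal.toReal_mono ENNReal.one_ne_top h1
    refine ⟨(1 - γ.toReal)⁻¹ * (γ.toReal / 2), by positivity, _,
      Real.one_le_rpow (x := 2 / γ.toReal) (by rw [le_div_iff₀ hc0]; linarith)
        (inv_nonneg.2 hc1'.le), fun Y _ P Q A K hK hP hQ hA => ?_⟩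
    refine le_trans ?_ ((le_renyiD_of_lt_one hγ0 hγ1 hP hQ hK hA).trans ?_)
    · rw [EReal.coe_le_coe_iff, max_eq_right (sub_nonpos.2 ha1), Real.rpow_zero, mul_one,
        mul_assoc]
      gcongr
      exact min_le_right _ _
    · rcases hγα with rfl | rfl
      · rfl
      · exact renyiD_le_renyiD_one hγ0 hγ1.le hP hQ.ne_top
  · have ha1 : 1 < α.toReal := by simpa using ENNReal.toReal_strict_mono ht h1
    have ha1' := sub_pos.2 ha1
    refine ⟨(α.toReal - 1)⁻¹ * (1 / 4), by positivity, _,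
      Real.one_le_rpow (x := 2 * α.toReal) (by linarith) (inv_nonneg.2 ha1'.le),
      fun Y _ P Q A K hK hP hQ hA => ?_⟩
    rw [max_eq_left ha1'.le, mul_assoc]
    exact le_renyiD_of_one_lt h1 ht hP hQ hK hA

theorem logb_le_renyiD_top {Y : Type*} [Fintype Y] {P Q : Y → ℝ≥0∞} {K : ℝ} (hK : 0 < K) {y : Y}
    (hP : P y ≠ 0) (hPt : P y ≠ ⊤) (hQt : Q y ≠ ⊤) (h : K * (Q y).toReal ≤ (P y).toReal) :
    ((Real.logb 2 K : ℝ) : EReal) ≤ renyiD ⊤ P Q := by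
  rw [renyiD, if_neg ENNReal.top_ne_zero, if_neg ENNReal.top_ne_one, if_pos rfl, ← elog2_ofReal hK]
  refine monotone_elog2 (le_trans ?_ (le_iSup _ y))
  rcases eq_or_ne (Q y) 0 with hQ0 | hQ0
  · rw [hQ0, ENNReal.div_zero hP]
    exact le_top
  rw [ENNReal.le_div_iff_mul_le (Or.inl hQ0) (Or.inl hQt), ← ENNReal.ofReal_toReal hQt,
    ← ENNReal.ofReal_mul hK.le, ← ENNReal.ofReal_toReal hPt]
  exact ENNReal.ofReal_le_ofReal h

theorem neg_log_le_two_mul_one_sub {κ : ℝ} (h : 1 / 2 ≤ κ) (h1 : κ ≤ 1) :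
    -Real.log κ ≤ 2 * (1 - κ) := by
  have hκ : 0 < κ := by linarith
  have : κ⁻¹ ≤ 3 - 2 * κ := by
    rw [inv_le_iff_one_le_mul₀ hκ]
    nlinarith
  linarith [Real.one_sub_inv_le_log_of_pos hκ]

theorem logb_two_le_two_mul_of_log_le {x u : ℝ} (hu : 0 ≤ u) (h : Real.log x ≤ u) :
    Real.logb 2 x ≤ 2 * u := by
  rw [Real.logb, div_le_iff₀ (Real.log_pos one_lt_two)]
  nlinarith [Real.log_two_gt_d9]

theorem div_le_inv_mul_max_of_mul_min_le {p v n κ : ℝ} (hp : 0 < p) (hv : 0 < v) (hκ : 0 < κ)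
    (h : κ * min p v ≤ n) : p / n ≤ κ⁻¹ * max 1 (p / v) := by
  have hn : 0 < n := lt_of_lt_of_le (mul_pos hκ (lt_min hp hv)) h
  rw [div_le_iff₀ hn]
  calc p = κ⁻¹ * max 1 (p / v) * (κ * min p v) := by
        rcases le_total p v with hpv | hvp
        · rw [min_eq_left hpv, max_eq_left ((div_le_one hv).2 hpv)]
          field_simp
        · rw [min_eq_right hvp, max_eq_right ((one_le_div hv).2 hvp)]
          field_simp
    _ ≤ κ⁻¹ * max 1 (p / v) * n := by gcongr

section

variable {Y : Type*} [Fintype Y] {P N : Y → ℝ≥0∞} {κ : ℝ}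

theorem sum_mul_rpow_le_of_mul_min_le {p n v : Y → ℝ} {c ε : ℝ} (hc : 0 ≤ c) (hκ : 0 < κ)
    (hp : ∀ y, 0 ≤ p y) (hp1 : ∑ y, p y = 1) (hv : ∀ y, 0 < p y → 0 < v y)
    (hn : ∀ y, 0 ≤ n y) (hε : ∑ y, p y * (p y / v y) ^ c ≤ ε)
    (hN : ∀ y, κ * min (p y) (v y) ≤ n y) :
    ∑ y, p y * (p y / n y) ^ c ≤ κ⁻¹ ^ c * (1 + ε) := by
  have pointwise : ∀ y, p y * (p y / n y) ^ c ≤ κ⁻¹ ^ c * (p y + p y * (p y / v y) ^ c) := by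
    intro y
    rcases (hp y).eq_or_lt with hpy | hpy
    · simp [← hpy]
    have hvy := hv y hpy
    have hny := hn y
    have hmax : max 1 (p y / v y) ^ c ≤ 1 + (p y / v y) ^ c := by
      rcases le_total 1 (p y / v y) with h | h
      · rw [max_eq_right h]
        linarith
      · rw [max_eq_left h, Real.one_rpow]
        linarith [Real.rpow_nonneg (div_pos hpy hvy).le c]
    calc p y * (p y / n y) ^ c ≤ p y * (κ⁻¹ * max 1 (p y / v y)) ^ c := by
          gcongr
          exact div_le_inv_mul_max_of_mul_min_le hpy hvy hκ (hN y)
      _ = p y * (κ⁻¹ ^ c * max 1 (p y / v y) ^ c) := by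
          rw [Real.mul_rpow (by positivity) (by positivity)]
      _ ≤ p y * (κ⁻¹ ^ c * (1 + (p y / v y) ^ c)) := by gcongr
      _ = κ⁻¹ ^ c * (p y + p y * (p y / v y) ^ c) := by ring
  calc ∑ y, p y * (p y / n y) ^ c ≤ ∑ y, κ⁻¹ ^ c * (p y + p y * (p y / v y) ^ c) :=
        Finset.sum_le_sum fun y _ => pointwise y
    _ = κ⁻¹ ^ c * (1 + ∑ y, p y * (p y / v y) ^ c) := by
        rw [← Finset.mul_sum, Finset.sum_add_distrib, hp1]
    _ ≤ κ⁻¹ ^ c * (1 + ε) := by gcongr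

theorem renyiD_le_of_mul_min_le {α : ℝ≥0∞} {β ε : ℝ} {v : Y → ℝ} (h0 : α ≠ 0) (hβ : 1 < β)
    (hαβ : α ≤ ENNReal.ofReal β) (hκ : 1 / 2 ≤ κ) (hκ1 : κ ≤ 1) (hε0 : 0 ≤ ε) (hP : IsDist P)
    (hNt : ∀ y, N y ≠ ⊤) (hv : ∀ y, 0 < (P y).toReal → 0 < v y)
    (hε : ∑ y, (P y).toReal * ((P y).toReal / v y) ^ (β - 1) ≤ ε)
    (hN : ∀ y, κ * min (P y).toReal (v y) ≤ (N y).toReal) :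
    renyiD α P N ≤ (((4 + 2 * (β - 1)⁻¹) * ((1 - κ) + ε) : ℝ) : EReal) := by
  have hκ0 : 0 < κ := by linarith
  have hb : 0 < β - 1 := sub_pos.2 hβ
  have hβ1 : 1 < ENNReal.ofReal β := by simpa using hβ
  have hac : ∀ y, N y = 0 → P y = 0 := by
    intro y hNy
    by_contra hPy
    have hp := ENNReal.toReal_pos hPy (hP.ne_top y)
    have := mul_pos hκ0 (lt_min hp (hv y hp))
    exact absurd (hN y) (by simpa [hNy] using this)
  refine (renyiD_le_renyiD_of_le h0 hαβ hβ1.le ENNReal.ofReal_ne_top hP hNt).trans ?_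
  rw [renyiD_eq_logb_of_ac (zero_lt_one.trans hβ1).ne' hβ1.ne' ENNReal.ofReal_ne_top hP hNt hac,
    ENNReal.toReal_ofReal (by linarith), EReal.coe_le_coe_iff]
  have hS0 := sum_mul_rpow_pos (fun y => ENNReal.toReal_nonneg) hP.sum_toReal
    (toReal_ratio_pos hNt hac) (β - 1)
  have hS := sum_mul_rpow_le_of_mul_min_le hb.le hκ0 (fun y => ENNReal.toReal_nonneg)
    hP.sum_toReal hv (fun y => ENNReal.toReal_nonneg) hε hN
  set S := ∑ y, (P y).toReal * ((P y).toReal / (N y).toReal) ^ (β - 1)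
  have hlog : Real.log S ≤ (β - 1) * (2 * (1 - κ)) + ε := by
    calc Real.log S ≤ Real.log (κ⁻¹ ^ (β - 1) * (1 + ε)) := Real.log_le_log hS0 hS
      _ = (β - 1) * -Real.log κ + Real.log (1 + ε) := by
        rw [Real.log_mul (by positivity) (by positivity), Real.log_rpow (by positivity),
          Real.log_inv]
      _ ≤ (β - 1) * (2 * (1 - κ)) + ε := by
        gcongr
        · exact neg_log_le_two_mul_one_sub hκ hκ1
        · linarith [Real.log_le_sub_one_of_pos (show 0 < 1 + ε by linarith)]
  have : 0 ≤ 1 - κ := sub_nonneg.2 hκ1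
  calc (β - 1)⁻¹ * Real.logb 2 S ≤ (β - 1)⁻¹ * (2 * ((β - 1) * (2 * (1 - κ)) + ε)) := by
        gcongr
        exact logb_two_le_two_mul_of_log_le (by positivity) hlog
    _ = 4 * (1 - κ) + 2 * (β - 1)⁻¹ * ε := by field_simp; ring
    _ ≤ (4 + 2 * (β - 1)⁻¹) * ((1 - κ) + ε) := by
        have : 0 ≤ (β - 1)⁻¹ * (1 - κ) := by positivity
        linarith

theorem renyiD_top_le_of_mul_le (hκ : 0 < κ) (hP : ∀ y, P y ≠ ⊤) (hNt : ∀ y, N y ≠ ⊤)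
    (hac : ∀ y, N y = 0 → P y = 0) (h : ∀ y, κ * (P y).toReal ≤ (N y).toReal) :
    renyiD ⊤ P N ≤ ((-Real.logb 2 κ : ℝ) : EReal) := by
  rw [renyiD, if_neg ENNReal.top_ne_zero, if_neg ENNReal.top_ne_one, if_pos rfl,
    ← Real.logb_inv, ← elog2_ofReal (inv_pos.2 hκ)]
  refine monotone_elog2 (iSup_le fun y => ?_)
  rcases eq_or_ne (N y) 0 with hN0 | hN0
  · simp [hac y hN0]
  rw [ENNReal.div_le_iff hN0 (hNt y), ← ENNReal.ofReal_toReal (hP y),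
    ← ENNReal.ofReal_toReal (hNt y), ← ENNReal.ofReal_mul (inv_pos.2 hκ).le]
  exact ENNReal.ofReal_le_ofReal ((le_inv_mul_iff₀ hκ).2 (h y))

theorem renyiD_le_neg_logb_of_mul_le {α : ℝ≥0∞} (h0 : α ≠ 0) (hP : IsDist P)
    (hNt : ∀ y, N y ≠ ⊤) (hκ : 0 < κ) (h : ∀ y, κ * (P y).toReal ≤ (N y).toReal) :
    renyiD α P N ≤ ((-Real.logb 2 κ : ℝ) : EReal) := by
  have hac : ∀ y, N y = 0 → P y = 0 := fun y hNy => by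
    have := h y
    rw [hNy, ENNReal.toReal_zero] at this
    exact ((ENNReal.toReal_eq_zero_iff _).1
      (le_antisymm (nonpos_of_mul_nonpos_right this hκ) ENNReal.toReal_nonneg)).resolve_right
        (hP.ne_top y)
  rcases eq_or_ne α ⊤ with rfl | ht
  · exact renyiD_top_le_of_mul_le hκ hP.ne_top hNt hac h
  have hβ : 1 < max α 2 := lt_max_of_lt_right ENNReal.one_lt_two
  have hβt : max α 2 ≠ ⊤ := max_lt ht.lt_top ENNReal.ofNat_lt_top |>.ne
  have hb : 0 < (max α 2).toReal - 1 := by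
    simpa using ENNReal.toReal_strict_mono hβt hβ
  refine (renyiD_le_renyiD_of_le h0 (le_max_left α 2) hβ.le hβt hP hNt).trans ?_
  rw [renyiD_eq_logb_of_ac (zero_lt_one.trans hβ).ne' hβ.ne' hβt hP hNt hac,
    EReal.coe_le_coe_iff, inv_mul_le_iff₀ hb, ← Real.logb_inv,
    ← Real.logb_rpow_eq_mul_logb_of_pos (inv_pos.2 hκ)]
  refine Real.logb_le_logb_of_le one_lt_two (sum_mul_rpow_pos (fun y => ENNReal.toReal_nonneg)
    hP.sum_toReal (toReal_ratio_pos hNt hac) _) ?_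
  have ratio_le : ∀ y, (P y).toReal / (N y).toReal ≤ κ⁻¹ := fun y =>
    div_le_of_le_mul₀ ENNReal.toReal_nonneg (inv_pos.2 hκ).le ((le_inv_mul_iff₀ hκ).2 (h y))
  calc ∑ y, (P y).toReal * ((P y).toReal / (N y).toReal) ^ ((max α 2).toReal - 1)
      ≤ ∑ y, (P y).toReal * κ⁻¹ ^ ((max α 2).toReal - 1) := by
        gcongr
        exact ratio_le _
    _ = κ⁻¹ ^ ((max α 2).toReal - 1) := by rw [← Finset.sum_mul, hP.sum_toReal, one_mul]

end

/-! ### Rényi mutual information and capacity -/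

section FirstOrder

open scoped Topology

variable {Y : Type*} [Fintype Y] {p : ℝ} {A v : Y → ℝ}

theorem rpow_le_rpow_add_mul_sub {a u : ℝ} (hp : 0 ≤ p) (hp1 : p ≤ 1) (ha : 0 ≤ a) (hu : 0 < u) :
    a ^ p ≤ u ^ p + p * (u ^ (p - 1) * (a - u)) := by
  have h := rpow_one_add_le_one_add_mul_self (s := a / u - 1)
    (by linarith [div_nonneg ha hu.le]) hp hp1
  rw [add_sub_cancel, Real.div_rpow ha hu.le, div_le_iff₀ (by positivity)] at h
  have he : (1 + p * (a / u - 1)) * u ^ p = u ^ p + p * (u ^ p / u * (a - u)) := by field_simp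
  rwa [he, ← Real.rpow_sub_one hu.ne'] at h

theorem sum_rpow_sub_one_mul_sub_nonneg {u : Y → ℝ} (hp : 0 < p) (hp1 : p ≤ 1) (hA : ∀ y, 0 ≤ A y)
    (hu : ∀ y, 0 ≤ u y) (hAu : ∀ y, u y = 0 → A y = 0)
    (h : ∑ y, u y ^ p ≤ ∑ y, A y ^ p) : 0 ≤ ∑ y, u y ^ (p - 1) * (A y - u y) := by
  have htangent (y : Y) : A y ^ p ≤ u y ^ p + p * (u y ^ (p - 1) * (A y - u y)) := by
    rcases (hu y).eq_or_lt with h0 | h0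
    · simp [← h0, hAu y h0.symm]
    · exact rpow_le_rpow_add_mul_sub hp.le hp1 (hA y) h0
  have hsum := Finset.sum_le_sum fun y (_ : y ∈ Finset.univ) => htangent y
  rw [Finset.sum_add_distrib, ← Finset.mul_sum] at hsum
  exact nonneg_of_mul_nonneg_right (by linarith) hp

theorem sum_segment_rpow_mul_le (hp : 0 < p) (hp1 : p ≤ 1) (hA : ∀ y, 0 ≤ A y)
    (hv : ∀ y, 0 ≤ v y) {t : ℝ} (ht : t ∈ Set.Ioo (0 : ℝ) 1)
    (h : ∑ y, ((1 - t) * A y + t * v y) ^ p ≤ ∑ y, A y ^ p) :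
    ∑ y, ((1 - t) * A y + t * v y) ^ (p - 1) * v y ≤ (1 - t) ^ (p - 1) * ∑ y, A y ^ p := by
  obtain ⟨ht0, ht1⟩ := ht
  have hA' (y : Y) : 0 ≤ (1 - t) * A y := mul_nonneg (by linarith) (hA y)
  have hv' (y : Y) : 0 ≤ t * v y := mul_nonneg ht0.le (hv y)
  have hgrad := sum_rpow_sub_one_mul_sub_nonneg hp hp1 hA (fun y => add_nonneg (hA' y) (hv' y))
    (fun y hy => (mul_eq_zero_iff_left (by linarith : 1 - t ≠ 0)).1
      (by linarith [hA' y, hv' y])) h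
  have hdir : ∑ y, ((1 - t) * A y + t * v y) ^ (p - 1) * (A y - ((1 - t) * A y + t * v y)) =
      t * (∑ y, ((1 - t) * A y + t * v y) ^ (p - 1) * A y -
        ∑ y, ((1 - t) * A y + t * v y) ^ (p - 1) * v y) := by
    rw [← Finset.sum_sub_distrib, Finset.mul_sum]
    exact Finset.sum_congr rfl fun _ _ => by ring
  rw [hdir] at hgrad
  refine (sub_nonneg.1 (nonneg_of_mul_nonneg_right hgrad ht0)).trans ?_
  rw [Finset.mul_sum]
  refine Finset.sum_le_sum fun y _ => ?_
  rcases (hA y).eq_or_lt with h0 | h0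
  · simp [← h0, Real.zero_rpow hp.ne']
  calc ((1 - t) * A y + t * v y) ^ (p - 1) * A y ≤ ((1 - t) * A y) ^ (p - 1) * A y := by
        refine mul_le_mul_of_nonneg_right ?_ h0.le
        exact Real.rpow_le_rpow_of_nonpos (mul_pos (by linarith) h0) (by linarith [hv' y])
          (by linarith)
    _ = (1 - t) ^ (p - 1) * A y ^ p := by
        rw [Real.mul_rpow (by linarith) h0.le, Real.rpow_sub_one h0.ne', mul_assoc,
          div_mul_cancel₀ _ h0.ne']

theorem eq_zero_of_forall_sum_segment_rpow_le (hp : 0 < p) (hp1 : p < 1) (hA : ∀ y, 0 ≤ A y)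
    (hv : ∀ y, 0 ≤ v y)
    (h : ∀ t ∈ Set.Ioo (0 : ℝ) 1, ∑ y, ((1 - t) * A y + t * v y) ^ p ≤ ∑ y, A y ^ p)
    {y : Y} (hy : A y = 0) : v y = 0 := by
  by_contra hne
  have hpos : 0 < v y := (hv y).lt_of_ne' hne
  have hblowup : Tendsto (fun t : ℝ => t ^ (p - 1) * (v y ^ (p - 1) * v y))
      (𝓝[>] 0) atTop :=
    (tendsto_rpow_neg_nhdsGT_zero (by linarith)).atTop_mul_const (by positivity)
  obtain ⟨t, hlt, ht0, ht1⟩ := ((hblowup.eventually_gt_atTop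
    ((1 / 2 : ℝ) ^ (p - 1) * ∑ y, A y ^ p)).and
    (Ioo_mem_nhdsGT (by norm_num : (0 : ℝ) < 1 / 2))).exists
  refine hlt.not_ge ?_
  have ht : t ∈ Set.Ioo (0 : ℝ) 1 := ⟨ht0, by linarith⟩
  have hterm (z : Y) : 0 ≤ ((1 - t) * A z + t * v z) ^ (p - 1) * v z :=
    mul_nonneg (Real.rpow_nonneg (add_nonneg (mul_nonneg (by linarith) (hA z))
      (mul_nonneg ht0.le (hv z))) _) (hv z)
  calc t ^ (p - 1) * (v y ^ (p - 1) * v y) = ((1 - t) * A y + t * v y) ^ (p - 1) * v y := by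
        rw [hy, mul_zero, zero_add, Real.mul_rpow ht0.le hpos.le, mul_assoc]
    _ ≤ ∑ z, ((1 - t) * A z + t * v z) ^ (p - 1) * v z :=
        Finset.single_le_sum (fun z _ => hterm z) (Finset.mem_univ y)
    _ ≤ (1 - t) ^ (p - 1) * ∑ z, A z ^ p := sum_segment_rpow_mul_le hp hp1.le hA hv ht (h t ht)
    _ ≤ (1 / 2 : ℝ) ^ (p - 1) * ∑ z, A z ^ p := by
        refine mul_le_mul_of_nonneg_right ?_
          (Finset.sum_nonneg fun z _ => Real.rpow_nonneg (hA z) _)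
        exact Real.rpow_le_rpow_of_nonpos (by norm_num) (by linarith) (by linarith)

theorem sum_rpow_sub_one_mul_le_of_forall_sum_segment_rpow_le (hp : 0 < p) (hp1 : p < 1)
    (hA : ∀ y, 0 ≤ A y) (hv : ∀ y, 0 ≤ v y)
    (h : ∀ t ∈ Set.Ioo (0 : ℝ) 1, ∑ y, ((1 - t) * A y + t * v y) ^ p ≤ ∑ y, A y ^ p) :
    ∑ y, A y ^ (p - 1) * v y ≤ ∑ y, A y ^ p := by
  have hleft : Tendsto (fun t : ℝ => ∑ y, ((1 - t) * A y + t * v y) ^ (p - 1) * v y)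
      (𝓝[>] 0) (𝓝 (∑ y, A y ^ (p - 1) * v y)) := by
    refine tendsto_finsetSum _ fun y _ => ?_
    by_cases hy : A y = 0
    · simp [eq_zero_of_forall_sum_segment_rpow_le hp hp1 hA hv h hy]
    · have hc : ContinuousAt (fun t : ℝ => ((1 - t) * A y + t * v y) ^ (p - 1)) 0 :=
        ContinuousAt.rpow_const (by fun_prop) (Or.inl (by simpa using hy))
      have := hc.tendsto
      simp only [sub_zero, one_mul, zero_mul, add_zero] at this
      exact (this.mono_left nhdsWithin_le_nhds).mul_const _
  have hright : Tendsto (fun t : ℝ => (1 - t) ^ (p - 1) * ∑ y, A y ^ p)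
      (𝓝[>] 0) (𝓝 (∑ y, A y ^ p)) := by
    have hc : ContinuousAt (fun t : ℝ => (1 - t) ^ (p - 1)) 0 :=
      ContinuousAt.rpow_const (by fun_prop) (Or.inl (by simp))
    have := hc.tendsto.mul_const (∑ y, A y ^ p)
    rw [sub_zero, Real.one_rpow, one_mul] at this
    exact this.mono_left nhdsWithin_le_nhds
  refine le_of_tendsto_of_tendsto hleft hright ?_
  filter_upwards [Ioo_mem_nhdsGT (zero_lt_one' ℝ)] with t ht
  exact sum_segment_rpow_mul_le hp hp1.le hA hv ht (h t ht)

theorem exists_mem_stdSimplex_sum_rpow_sub_one_mul_le {X : Type*} [Fintype X] [Nonempty X]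
    {v : X → Y → ℝ} (hv : ∀ x y, 0 ≤ v x y) (hp : 0 < p) (hp1 : p < 1) :
    ∃ P ∈ stdSimplex ℝ X, (∀ x y, ∑ x', P x' * v x' y = 0 → v x y = 0) ∧
      ∀ x, ∑ y, (∑ x', P x' * v x' y) ^ (p - 1) * v x y ≤ ∑ y, (∑ x', P x' * v x' y) ^ p := by
  have hcont : Continuous fun P : X → ℝ => ∑ y, (∑ x', P x' * v x' y) ^ p :=
    continuous_finsetSum _ fun y _ => Continuous.rpow_const (by fun_prop) fun _ => Or.inr hp.le
  obtain ⟨P, hP, hmax⟩ := (isCompact_stdSimplex ℝ X).exists_isMaxOn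
    Set.Nonempty.of_subtype hcont.continuousOn
  have hA (y : Y) : 0 ≤ ∑ x', P x' * v x' y :=
    Finset.sum_nonneg fun x' _ => mul_nonneg (hP.1 x') (hv _ _)
  have hsegment (x : X) (t : ℝ) (ht : t ∈ Set.Ioo (0 : ℝ) 1) :
      ∑ y, ((1 - t) * (∑ x', P x' * v x' y) + t * v x y) ^ p ≤
        ∑ y, (∑ x', P x' * v x' y) ^ p := by
    have hmem := convex_stdSimplex ℝ X hP (single_mem_stdSimplex ℝ x)
      (by linarith [ht.2] : 0 ≤ 1 - t) ht.1.le (by ring)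
    refine (le_of_eq (Finset.sum_congr rfl fun y _ => ?_)).trans (hmax hmem)
    simp [add_mul, Finset.sum_add_distrib, Finset.mul_sum, mul_assoc, Pi.single_apply]
  exact ⟨P, hP, fun x y => eq_zero_of_forall_sum_segment_rpow_le hp hp1 hA (hv x) (hsegment x),
    fun x => sum_rpow_sub_one_mul_le_of_forall_sum_segment_rpow_le hp hp1 hA (hv x) (hsegment x)⟩

end FirstOrder

section Channel

variable {X Y : Type*} [Fintype X] [Fintype Y] {W : X → Y → ℝ≥0∞} {P : X → ℝ≥0∞} {Q : Y → ℝ≥0∞}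
  {β : ℝ}

theorem IsChannel.isDist (hW : IsChannel W) (x : X) : IsDist (W x) := hW x

theorem margX_joint (hW : IsChannel W) (P : X → ℝ≥0∞) : margX (joint P W) = P :=
  funext fun x => by simp [margX, joint, ← Finset.mul_sum, hW x]

theorem isDist_joint (hP : IsDist P) (hW : IsChannel W) : IsDist (joint P W) := by
  rw [IsDist, Fintype.sum_prod_type]
  exact (congrArg (fun R : X → ℝ≥0∞ => ∑ x, R x) (margX_joint hW P)).trans hP

theorem isDist_ofReal {ι : Type*} [Fintype ι] {p : ι → ℝ} (hp : p ∈ stdSimplex ℝ ι) :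
    IsDist fun i => ENNReal.ofReal (p i) := by
  rw [IsDist, ← ENNReal.ofReal_sum_of_nonneg fun i _ => hp.1 i, hp.2, ENNReal.ofReal_one]

theorem isDist_const_inv_card {Y : Type*} [Fintype Y] [Nonempty Y] :
    IsDist fun _ : Y => (Fintype.card Y : ℝ≥0∞)⁻¹ := by
  simp [IsDist, ENNReal.mul_inv_cancel]

theorem renyiD_ofReal_eq_logb {Y : Type*} [Fintype Y] {P Q : Y → ℝ≥0∞} (hβ : 1 < β)
    (hP : IsDist P) (hQ : ∀ y, Q y ≠ ⊤) (hac : ∀ y, Q y = 0 → P y = 0) :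
    renyiD (ENNReal.ofReal β) P Q =
      ((β - 1)⁻¹ * Real.logb 2 (∑ y, (P y).toReal ^ β * (Q y).toReal ^ (1 - β)) : ℝ) := by
  have hβ0 : 0 < β := by linarith
  have hβr : (ENNReal.ofReal β).toReal = β := ENNReal.toReal_ofReal hβ0.le
  have h1 : ENNReal.ofReal β ≠ 1 := by simpa using hβ.ne'
  rw [renyiD_eq_logb (by simpa using hβ0) h1 ENNReal.ofReal_ne_top hP.ne_top hQ (Or.inr hac)
    (by simpa only [hβr] using sum_rpow_mul_rpow_one_sub_pos hβ0.ne' hP hQ hac), hβr]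

/-- The function `A(y) = ∑ₓ P(x) W(y|x)^β`. The output distribution attaining the minimum in
`I_β(X:Y)_{P·W}` is proportional to `A ^ (1/β)`. -/
def sibsonWeight (β : ℝ) (P : X → ℝ≥0∞) (W : X → Y → ℝ≥0∞) (y : Y) : ℝ :=
  ∑ x, (P x).toReal * (W x y).toReal ^ β

/-- The normalisation `∑_y A(y)^(1/β)` of Sibson's optimal output distribution. -/
def sibsonSum (β : ℝ) (P : X → ℝ≥0∞) (W : X → Y → ℝ≥0∞) : ℝ :=
  ∑ y, sibsonWeight β P W y ^ β⁻¹

/-- Sibson's optimal output distribution `A(y)^(1/β) / ∑_z A(z)^(1/β)`. -/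
def sibsonOutput (β : ℝ) (P : X → ℝ≥0∞) (W : X → Y → ℝ≥0∞) (y : Y) : ℝ≥0∞ :=
  ENNReal.ofReal (sibsonWeight β P W y ^ β⁻¹ / sibsonSum β P W)

theorem sibsonWeight_nonneg {X Y : Type*} [Fintype X] {β : ℝ} {P : X → ℝ≥0∞} {W : X → Y → ℝ≥0∞}
    (y : Y) : 0 ≤ sibsonWeight β P W y :=
  Finset.sum_nonneg fun _ _ => by positivity

theorem sibsonWeight_eq_zero_iff (hP : IsDist P) (hW : IsChannel W) (hβ : 0 < β) {y : Y} :
    sibsonWeight β P W y = 0 ↔ ∀ x, joint P W (x, y) = 0 := by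
  rw [sibsonWeight, Finset.sum_eq_zero_iff_of_nonneg fun _ _ => by positivity]
  simp [joint, Real.rpow_eq_zero ENNReal.toReal_nonneg hβ.ne', ENNReal.toReal_eq_zero_iff,
    hP.ne_top, (hW.isDist _).ne_top]

theorem sibsonSum_pos (hP : IsDist P) (hW : IsChannel W) (hβ : 0 < β) : 0 < sibsonSum β P W := by
  obtain ⟨⟨x, y⟩, -, hxy⟩ := Finset.exists_ne_zero_of_sum_ne_zero
    ((isDist_joint hP hW).eq.trans_ne one_ne_zero)
  have hy : sibsonWeight β P W y ≠ 0 := fun h => hxy ((sibsonWeight_eq_zero_iff hP hW hβ).1 h x)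
  exact Finset.sum_pos' (fun y _ => Real.rpow_nonneg (sibsonWeight_nonneg y) _)
    ⟨y, Finset.mem_univ y, Real.rpow_pos_of_pos ((sibsonWeight_nonneg y).lt_of_ne' hy) _⟩

theorem isDist_sibsonOutput (hP : IsDist P) (hW : IsChannel W) (hβ : 0 < β) :
    IsDist (sibsonOutput β P W) := by
  have hF := sibsonSum_pos hP hW hβ
  refine isDist_ofReal ⟨fun y => div_nonneg (Real.rpow_nonneg (sibsonWeight_nonneg y) _) hF.le, ?_⟩
  rw [← Finset.sum_div]
  exact div_self hF.ne'

theorem sibsonOutput_eq_zero_iff (hP : IsDist P) (hW : IsChannel W) (hβ : 0 < β) {y : Y} :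
    sibsonOutput β P W y = 0 ↔ sibsonWeight β P W y = 0 := by
  have hF := sibsonSum_pos hP hW hβ
  have hA : 0 ≤ sibsonWeight β P W y := sibsonWeight_nonneg y
  rw [sibsonOutput, ENNReal.ofReal_eq_zero, div_le_iff₀ hF, zero_mul,
    (Real.rpow_nonneg hA _).ge_iff_eq', Real.rpow_eq_zero hA (inv_ne_zero hβ.ne')]

theorem toReal_sibsonOutput_rpow (hP : IsDist P) (hW : IsChannel W) (hβ : 0 < β) (y : Y) :
    (sibsonOutput β P W y).toReal ^ (1 - β) =
      sibsonSum β P W ^ (β - 1) * sibsonWeight β P W y ^ (β⁻¹ - 1) := by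
  have hF := sibsonSum_pos hP hW hβ
  have hA : 0 ≤ sibsonWeight β P W y := sibsonWeight_nonneg y
  rw [sibsonOutput, ENNReal.toReal_ofReal (by positivity), Real.div_rpow (by positivity) hF.le,
    ← Real.rpow_mul hA, ← neg_sub β 1, Real.rpow_neg hF.le, div_inv_eq_mul, mul_comm]
  congr 2
  field_simp
  ring

theorem sum_joint_rpow_mul_rpow (hβ : 0 < β) (Q : Y → ℝ≥0∞) :
    ∑ p, (joint P W p).toReal ^ β * (P p.1 * Q p.2).toReal ^ (1 - β) =
      ∑ y, sibsonWeight β P W y * (Q y).toReal ^ (1 - β) := by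
  simp only [Fintype.sum_prod_type_right, sibsonWeight, Finset.sum_mul, joint, ENNReal.toReal_mul]
  refine Finset.sum_congr rfl fun y _ => Finset.sum_congr rfl fun x _ => ?_
  rcases (ENNReal.toReal_nonneg (a := P x)).eq_or_lt with h | h
  · simp [← h, Real.zero_rpow hβ.ne']
  · rw [Real.mul_rpow h.le ENNReal.toReal_nonneg, Real.mul_rpow h.le ENNReal.toReal_nonneg,
      mul_mul_mul_comm, ← Real.rpow_add h, add_sub_cancel, Real.rpow_one, mul_assoc]

theorem renyiD_joint_eq_logb (hP : IsDist P) (hW : IsChannel W) (hβ : 1 < β) (hQ : IsDist Q)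
    (hac : ∀ y, Q y = 0 → sibsonWeight β P W y = 0) :
    renyiD (ENNReal.ofReal β) (joint P W) (fun p => margX (joint P W) p.1 * Q p.2) =
      ((β - 1)⁻¹ * Real.logb 2 (∑ y, sibsonWeight β P W y * (Q y).toReal ^ (1 - β)) : ℝ) := by
  have hβ0 : 0 < β := by linarith
  rw [margX_joint hW, renyiD_ofReal_eq_logb hβ (isDist_joint hP hW)
    (fun p => ENNReal.mul_ne_top (hP.ne_top _) (hQ.ne_top _)), sum_joint_rpow_mul_rpow hβ0]
  rintro ⟨x, y⟩ h
  rcases mul_eq_zero.1 h with h | h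
  · exact mul_eq_zero_of_left h _
  · exact (sibsonWeight_eq_zero_iff hP hW hβ0).1 (hac y h) x

theorem rpow_sum_rpow_inv_le {A q : Y → ℝ} (hβ : 1 ≤ β) (hA : ∀ y, 0 ≤ A y)
    (hq : q ∈ stdSimplex ℝ Y) (hac : ∀ y, q y = 0 → A y = 0) :
    (∑ y, A y ^ β⁻¹) ^ β ≤ ∑ y, A y * q y ^ (1 - β) := by
  have hβ0 : 0 < β := by linarith
  have hjensen := Real.rpow_arith_mean_le_arith_mean_rpow Finset.univ q
    (fun y => A y ^ β⁻¹ / q y) (fun y _ => hq.1 y) hq.2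
    (fun y _ => div_nonneg (Real.rpow_nonneg (hA y) _) (hq.1 y)) hβ
  have hmean (y : Y) : q y * (A y ^ β⁻¹ / q y) = A y ^ β⁻¹ := by
    by_cases hy : q y = 0
    · simp [hy, hac y hy, hβ0.ne']
    · exact mul_div_cancel₀ _ hy
  have hterm (y : Y) : q y * (A y ^ β⁻¹ / q y) ^ β = A y * q y ^ (1 - β) := by
    rcases (hq.1 y).eq_or_lt with hy | hy
    · simp [← hy, hac y hy.symm]
    · rw [Real.div_rpow (Real.rpow_nonneg (hA y) _) hy.le, Real.rpow_inv_rpow (hA y) hβ0.ne',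
        Real.rpow_sub hy, Real.rpow_one]
      ring
  simpa only [hmean, hterm] using hjensen

theorem sum_sibsonWeight_mul_sibsonOutput_rpow (hP : IsDist P) (hW : IsChannel W) (hβ : 0 < β) :
    ∑ y, sibsonWeight β P W y * (sibsonOutput β P W y).toReal ^ (1 - β) = sibsonSum β P W ^ β := by
  have hterm (y : Y) : sibsonWeight β P W y * sibsonWeight β P W y ^ (β⁻¹ - 1) =
      sibsonWeight β P W y ^ β⁻¹ := by
    rw [← Real.rpow_one_add' (sibsonWeight_nonneg y) (by simpa using hβ.ne'), add_sub_cancel]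
  simp only [toReal_sibsonOutput_rpow hP hW hβ, mul_left_comm, hterm, ← Finset.mul_sum]
  rw [← sibsonSum, Real.rpow_sub_one (sibsonSum_pos hP hW hβ).ne',
    div_mul_cancel₀ _ (sibsonSum_pos hP hW hβ).ne']

theorem logb_sibsonSum_le_renyiD_joint (hP : IsDist P) (hW : IsChannel W) (hβ : 1 < β)
    (hQ : IsDist Q) :
    ((β - 1)⁻¹ * Real.logb 2 (sibsonSum β P W ^ β) : ℝ) ≤
      renyiD (ENNReal.ofReal β) (joint P W) (fun p => margX (joint P W) p.1 * Q p.2) := by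
  have hβ0 : 0 < β := by linarith
  by_cases hac : ∀ y, Q y = 0 → sibsonWeight β P W y = 0
  · rw [renyiD_joint_eq_logb hP hW hβ hQ hac, EReal.coe_le_coe_iff]
    refine mul_le_mul_of_nonneg_left (Real.logb_le_logb_of_le one_lt_two
      (Real.rpow_pos_of_pos (sibsonSum_pos hP hW hβ0) _) ?_) (inv_nonneg.2 (by linarith))
    exact rpow_sum_rpow_inv_le hβ.le sibsonWeight_nonneg
      ⟨fun y => ENNReal.toReal_nonneg, hQ.sum_toReal⟩
      fun y hy => hac y (((ENNReal.toReal_eq_zero_iff _).1 hy).resolve_right (hQ.ne_top y))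
  · rw [margX_joint hW, renyiD_eq_top_of_not_ac (by simpa using hβ.le) ENNReal.ofReal_ne_top
      (isDist_joint hP hW).ne_top fun p => ENNReal.mul_ne_top (hP.ne_top _) (hQ.ne_top _)]
    · exact le_top
    · exact fun h => hac fun y hy => (sibsonWeight_eq_zero_iff hP hW hβ0).2 fun x =>
        h (x, y) (mul_eq_zero_of_right _ hy)

theorem renyiMI_joint_eq_logb_sibsonSum (hP : IsDist P) (hW : IsChannel W) (hβ : 1 < β) :
    renyiMI (ENNReal.ofReal β) (joint P W) =
      ((β - 1)⁻¹ * Real.logb 2 (sibsonSum β P W ^ β) : ℝ) := by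
  have hβ0 : 0 < β := by linarith
  refine le_antisymm ?_ (le_iInf fun Q => logb_sibsonSum_le_renyiD_joint hP hW hβ Q.2)
  refine (iInf_le _ ⟨_, isDist_sibsonOutput hP hW hβ0⟩).trans_eq ?_
  rw [renyiD_joint_eq_logb hP hW hβ (isDist_sibsonOutput hP hW hβ0)
    (fun y => (sibsonOutput_eq_zero_iff hP hW hβ0).1),
    sum_sibsonWeight_mul_sibsonOutput_rpow hP hW hβ0]

theorem exists_isDist_renyiD_le_renyiCap [Nonempty X] (hW : IsChannel W) (hβ : 1 < β) :
    ∃ Q : Y → ℝ≥0∞, IsDist Q ∧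
      ∀ x, renyiD (ENNReal.ofReal β) (W x) Q ≤ renyiCap (ENNReal.ofReal β) W := by
  have hβ0 : 0 < β := by linarith
  obtain ⟨p, hp, hsupp, hopt⟩ := exists_mem_stdSimplex_sum_rpow_sub_one_mul_le
    (v := fun x y => (W x y).toReal ^ β) (fun x y => by positivity) (inv_pos.2 hβ0)
    (inv_lt_one_of_one_lt₀ hβ)
  set P : X → ℝ≥0∞ := fun x => ENNReal.ofReal (p x) with hPdef
  have hP : IsDist P := isDist_ofReal hp
  have hA (y : Y) : ∑ x, p x * (W x y).toReal ^ β = sibsonWeight β P W y :=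
    Finset.sum_congr rfl fun x _ => by rw [hPdef, ENNReal.toReal_ofReal (hp.1 x)]
  simp only [hA] at hsupp hopt
  have hQ := isDist_sibsonOutput hP hW hβ0
  have hac (x : X) (y : Y) (hy : sibsonOutput β P W y = 0) : W x y = 0 := by
    have h0 := hsupp x y ((sibsonOutput_eq_zero_iff hP hW hβ0).1 hy)
    rw [Real.rpow_eq_zero ENNReal.toReal_nonneg hβ0.ne', ENNReal.toReal_eq_zero_iff] at h0
    exact h0.resolve_right ((hW.isDist x).ne_top y)
  refine ⟨sibsonOutput β P W, hQ, fun x => ?_⟩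
  refine le_trans ?_ (le_iSup (fun P : {P : X → ℝ≥0∞ // IsDist P} =>
    renyiMI (ENNReal.ofReal β) (joint P.1 W)) ⟨P, hP⟩)
  rw [renyiMI_joint_eq_logb_sibsonSum hP hW hβ, renyiD_ofReal_eq_logb hβ (hW x) hQ.ne_top (hac x),
    EReal.coe_le_coe_iff]
  refine mul_le_mul_of_nonneg_left (Real.logb_le_logb_of_le one_lt_two
    (sum_rpow_mul_rpow_one_sub_pos hβ0.ne' (hW x) hQ.ne_top (hac x)) ?_)
    (inv_nonneg.2 (by linarith))
  have hF := sibsonSum_pos hP hW hβ0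
  calc ∑ y, (W x y).toReal ^ β * (sibsonOutput β P W y).toReal ^ (1 - β)
      = sibsonSum β P W ^ (β - 1) *
          ∑ y, sibsonWeight β P W y ^ (β⁻¹ - 1) * (W x y).toReal ^ β := by
        simp only [toReal_sibsonOutput_rpow hP hW hβ0, Finset.mul_sum]
        exact Finset.sum_congr rfl fun y _ => by ring
    _ ≤ sibsonSum β P W ^ (β - 1) * sibsonSum β P W := by gcongr; exact hopt x
    _ = sibsonSum β P W ^ β := by rw [Real.rpow_sub_one hF.ne', div_mul_cancel₀ _ hF.ne']

/-- `∑_y max_x W(y|x)`, whose logarithm is `I_∞(W)`. -/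
def sumSup (W : X → Y → ℝ≥0∞) : ℝ≥0∞ := ∑ y, ⨆ x, W x y

theorem one_le_sumSup [Nonempty X] (hW : IsChannel W) : 1 ≤ sumSup W := by
  obtain ⟨x⟩ := ‹Nonempty X›
  rw [← hW x]
  exact Finset.sum_le_sum fun y _ => le_iSup (fun x => W x y) x

theorem iSup_ne_top (hW : IsChannel W) (y : Y) : ⨆ x, W x y ≠ ⊤ :=
  ((iSup_le fun x => (hW.isDist x).le_one y).trans_lt ENNReal.one_lt_top).ne

theorem sumSup_ne_top (hW : IsChannel W) : sumSup W ≠ ⊤ :=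
  ENNReal.sum_ne_top.2 fun y _ => iSup_ne_top hW y

theorem sumSup_le_of_le_mul {X Y : Type*} [Fintype Y] {W : X → Y → ℝ≥0∞} {Q : Y → ℝ≥0∞} {S : ℝ≥0∞}
    (hQ : IsDist Q) (h : ∀ x y, W x y ≤ S * Q y) :
    sumSup W ≤ S :=
  calc sumSup W ≤ ∑ y, S * Q y := Finset.sum_le_sum fun y _ => iSup_le fun x => h x y
    _ = S := by rw [← Finset.mul_sum, hQ.eq, mul_one]

theorem exists_isDist_le_sumSup_mul [Nonempty X] (hW : IsChannel W) :
    ∃ Q : Y → ℝ≥0∞, IsDist Q ∧ ∀ x y, W x y ≤ sumSup W * Q y := by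
  have h0 : sumSup W ≠ 0 := (one_pos.trans_le (one_le_sumSup hW)).ne'
  refine ⟨fun y => (⨆ x, W x y) / sumSup W, ?_, fun x y => ?_⟩
  · simp only [IsDist, div_eq_mul_inv, ← Finset.sum_mul]
    exact ENNReal.mul_inv_cancel h0 (sumSup_ne_top hW)
  · rw [ENNReal.mul_div_cancel h0 (sumSup_ne_top hW)]
    exact le_iSup (fun x => W x y) x

theorem renyiD_top_eq_elog2 {Y : Type*} [Fintype Y] (P Q : Y → ℝ≥0∞) :
    renyiD ⊤ P Q = elog2 (⨆ y, P y / Q y) := by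
  rw [renyiD, if_neg ENNReal.top_ne_zero, if_neg ENNReal.top_ne_one, if_pos rfl]

theorem elog2_sumSup_le_renyiD_joint (hW : IsChannel W) (hP : IsDist P) (hP0 : ∀ x, P x ≠ 0)
    (hQ : IsDist Q) :
    elog2 (sumSup W) ≤ renyiD ⊤ (joint P W) (fun p => margX (joint P W) p.1 * Q p.2) := by
  rw [renyiD_top_eq_elog2, margX_joint hW]
  set S := ⨆ p, joint P W p / (P p.1 * Q p.2)
  refine monotone_elog2 ?_
  by_cases hSt : S = ⊤
  · exact hSt ▸ le_top
  refine sumSup_le_of_le_mul hQ fun x y => ?_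
  have hxy : P x * W x y ≤ S * (P x * Q y) :=
    (ENNReal.div_le_iff_le_mul (Or.inr hSt)
      (Or.inl (ENNReal.mul_ne_top (hP.ne_top x) (hQ.ne_top y)))).1
      (le_iSup (fun p : X × Y => joint P W p / (P p.1 * Q p.2)) (x, y))
  rwa [mul_left_comm, ENNReal.mul_le_mul_iff_right (hP0 x) (hP.ne_top x)] at hxy

theorem renyiCap_top [Nonempty X] (hW : IsChannel W) : renyiCap ⊤ W = elog2 (sumSup W) := by
  refine le_antisymm (iSup_le fun P => ?_) ?_
  · obtain ⟨Q, hQ, hWQ⟩ := exists_isDist_le_sumSup_mul hW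
    refine (iInf_le _ ⟨Q, hQ⟩).trans ?_
    rw [renyiD_top_eq_elog2, margX_joint hW]
    refine monotone_elog2 (iSup_le fun p => ENNReal.div_le_of_le_mul ?_)
    rw [mul_left_comm]
    exact mul_le_mul_right (hWQ p.1 p.2) _
  · have hunif : IsDist fun _ : X => (Fintype.card X : ℝ≥0∞)⁻¹ := isDist_const_inv_card
    refine le_trans (le_iInf fun Q => ?_) (le_iSup (fun P : {P : X → ℝ≥0∞ // IsDist P} =>
      renyiMI ⊤ (joint P.1 W)) ⟨_, hunif⟩)
    exact elog2_sumSup_le_renyiD_joint hW hunif (by simp) Q.2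

theorem renyiCap_top_eq_logb [Nonempty X] (hW : IsChannel W) :
    renyiCap ⊤ W = (Real.logb 2 (sumSup W).toReal : ℝ) := by
  rw [renyiCap_top hW, elog2, if_neg (one_pos.trans_le (one_le_sumSup hW)).ne',
    if_neg (sumSup_ne_top hW)]

end Channel

/-! ### Achievability -/

section Achievability

variable {X Y : Type*} [Fintype X] [Fintype Y] {W : X → Y → ℝ≥0∞} {Q : Y → ℝ≥0∞} {α : ℝ≥0∞}
  {r : ℝ}

theorem isChannel_prodCh (hW : IsChannel W) (n : ℕ) : IsChannel (prodCh n W) := fun x => by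
  simp [prodCh, ← Fintype.prod_sum fun i y => W (x i) y, hW _]

theorem isDist_prodDist (hQ : IsDist Q) (n : ℕ) : IsDist (prodDist n Q) := by
  simp [IsDist, prodDist, ← Fintype.prod_sum fun (_ : Fin n) y => Q y, hQ.eq]

theorem prodCh_eq_zero_of_prodDist_eq_zero (hac : ∀ x y, Q y = 0 → W x y = 0) {n : ℕ}
    (x : Fin n → X) {y : Fin n → Y} (hy : prodDist n Q y = 0) : prodCh n W x y = 0 := by
  obtain ⟨i, hi, hQi⟩ := Finset.prod_eq_zero_iff.1 hy
  exact Finset.prod_eq_zero hi (hac (x i) (y i) hQi)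

theorem sum_prodCh_rpow_mul_prodDist_rpow (a b : ℝ) {n : ℕ} (x : Fin n → X) :
    ∑ y, (prodCh n W x y).toReal ^ a * (prodDist n Q y).toReal ^ b =
      ∏ i, ∑ y, (W (x i) y).toReal ^ a * (Q y).toReal ^ b := by
  rw [Fintype.prod_sum fun i y => (W (x i) y).toReal ^ a * (Q y).toReal ^ b]
  refine Finset.sum_congr rfl fun y _ => ?_
  rw [prodCh, prodDist, ENNReal.toReal_prod, ENNReal.toReal_prod, Finset.prod_mul_distrib,
    Real.finsetProd_rpow _ _ fun _ _ => ENNReal.toReal_nonneg,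
    Real.finsetProd_rpow _ _ fun _ _ => ENNReal.toReal_nonneg]

theorem rateOK_of_le_add {c d : ℕ → ℝ} (hc : ∀ n, 0 ≤ c n) (hle : ∀ n, c n ≤ n * r + d n)
    (hd : Tendsto (fun n : ℕ => d n / n) atTop (nhds 0)) : RateOK r c := by
  refine ⟨hc, ?_⟩
  have hlim : Tendsto (fun n : ℕ => ((r + d n / n : ℝ) : EReal)) atTop (nhds (r : EReal)) :=
    (continuous_coe_real_ereal.tendsto r).comp (by simpa using hd.const_add r)
  rw [← hlim.limsup_eq]
  refine limsup_le_limsup ?_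
  filter_upwards [eventually_gt_atTop 0] with n hn
  have hn0 : (0 : ℝ) < n := Nat.cast_pos.2 hn
  rw [EReal.coe_le_coe_iff, div_le_iff₀ hn0, add_mul, div_mul_cancel₀ _ hn0.ne', mul_comm r]
  exact hle n

/-- The number `⌈n² 2^(nr)⌉ + 1` of messages used over `n` channel uses at rate `r`. The factor `n²`
makes the failure probability of rejection sampling `exp(-n²)` at no cost in rate. -/
def messageCount (r : ℝ) (n : ℕ) : ℕ := ⌈(n : ℝ) ^ 2 * 2 ^ (n * r)⌉₊ + 1

theorem messageCount_le (hr : 0 ≤ r) (n : ℕ) :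
    (messageCount r n : ℝ) ≤ 2 ^ (n * r) * ((n : ℝ) + 2) ^ 2 := by
  have hceil := Nat.ceil_lt_add_one (show 0 ≤ (n : ℝ) ^ 2 * 2 ^ (n * r) by positivity)
  have hpow : (1 : ℝ) ≤ 2 ^ (n * r) := Real.one_le_rpow one_le_two (by positivity)
  rw [messageCount, Nat.cast_add_one]
  nlinarith [mul_nonneg (n.cast_nonneg (α := ℝ)) (sub_nonneg.2 hpow)]

theorem rateOK_logb_messageCount (hr : 0 ≤ r) :
    RateOK r fun n => Real.logb 2 (messageCount r n) := by
  refine rateOK_of_le_add (d := fun n => 2 * Real.logb 2 ((n : ℝ) + 2))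
    (fun n => Real.logb_nonneg one_lt_two (by simp [messageCount])) (fun n => ?_) ?_
  · refine (Real.logb_le_logb_of_le one_lt_two
      (Nat.cast_pos.2 (Nat.succ_pos _)) (messageCount_le hr n)).trans_eq ?_
    rw [Real.logb_mul (by positivity) (by positivity), Real.logb_rpow two_pos (by norm_num),
      Real.logb_pow, Nat.cast_ofNat]
  · have hlog := ((Real.tendsto_pow_log_div_mul_add_atTop 1 (-2) 1 one_ne_zero).comp
      (tendsto_atTop_add_const_right atTop (2 : ℝ) tendsto_natCast_atTop_atTop)).const_mul
        (2 / Real.log 2)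
    rw [mul_zero] at hlog
    refine hlog.congr fun n => ?_
    simp only [Function.comp_apply, pow_one, one_mul, add_neg_cancel_right, Real.logb]
    ring

theorem exp_neg_sq_le_two_rpow {n : ℕ} {E : ℝ} (hE : E ≤ n) :
    Real.exp (-(n : ℝ) ^ 2) ≤ 2 ^ (-(n * E)) := by
  rw [Real.rpow_def_of_pos two_pos, Real.exp_le_exp]
  have hlog1 : Real.log 2 ≤ 1 := by linarith [Real.log_two_lt_d9]
  have hn : (0 : ℝ) ≤ n := n.cast_nonneg
  have hlogE : Real.log 2 * E ≤ n := by
    calc Real.log 2 * E ≤ Real.log 2 * n :=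
          mul_le_mul_of_nonneg_left hE (Real.log_nonneg one_le_two)
      _ ≤ n := mul_le_of_le_one_left hn hlog1
  nlinarith

theorem exp_neg_sq_le_half {n : ℕ} (hn : 1 ≤ n) : Real.exp (-(n : ℝ) ^ 2) ≤ 1 / 2 := by
  have hn1 : (1 : ℝ) ≤ n := Nat.one_le_cast.2 hn
  calc Real.exp (-(n : ℝ) ^ 2) ≤ 2 ^ (-(n * 1 : ℝ)) := exp_neg_sq_le_two_rpow hn1
    _ ≤ 2 ^ (-1 : ℝ) := Real.rpow_le_rpow_of_exponent_le one_le_two (by linarith)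
    _ = 1 / 2 := by rw [Real.rpow_neg_one, one_div]

theorem one_sub_inv_pow_le_exp_neg {a L : ℝ} {m : ℕ} (hL : 1 ≤ L) (hm : a * L ≤ m) :
    (1 - L⁻¹) ^ m ≤ Real.exp (-a) := by
  have hL0 : 0 < L := by linarith
  calc (1 - L⁻¹) ^ m ≤ Real.exp (-L⁻¹) ^ m :=
        pow_le_pow_left₀ (sub_nonneg.2 (inv_le_one_of_one_le₀ hL)) (Real.one_sub_le_exp_neg _) m
    _ = Real.exp (-(m / L)) := by rw [← Real.exp_nat_mul, mul_neg, div_eq_mul_inv]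
    _ ≤ Real.exp (-a) := Real.exp_le_exp.2 (neg_le_neg ((le_div_iff₀ hL0).2 hm))

theorem exists_isMessageSimulation_mul_min_le {a L : ℝ} {m : ℕ} (hW : IsChannel W) (hQ : IsDist Q)
    (hL : 1 ≤ L) (hm : a * L ≤ m) :
    ∃ N, IsMessageSimulation (m + 1) N ∧ ∀ x y,
      (1 - Real.exp (-a)) * min (W x y).toReal (L * (Q y).toReal) ≤ (N x y).toReal := by
  have hL0 : 0 < L := by linarith
  have hinv : 0 ≤ 1 - L⁻¹ := sub_nonneg.2 (inv_le_one_of_one_le₀ hL)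
  obtain ⟨N, hN, hVN⟩ := exists_isMessageSimulation_ge hQ (l := ENNReal.ofReal L)
    (V := fun x y => min (W x y) (ENNReal.ofReal L * Q y)) (by simpa using hL)
    ENNReal.ofReal_ne_top (fun x y => min_le_right _ _)
    (fun x => (Finset.sum_le_sum fun y _ => min_le_left _ _).trans_eq (hW x)) m
  refine ⟨N, hN, fun x y => ?_⟩
  have hmono := ENNReal.toReal_mono ((hN.isDist x).ne_top y) (hVN x y)
  have hfactor : (1 - (1 - (ENNReal.ofReal L)⁻¹) ^ (m + 1)).toReal = 1 - (1 - L⁻¹) ^ (m + 1) := by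
    rw [← ENNReal.ofReal_inv_of_pos hL0, ← ENNReal.ofReal_one,
      ← ENNReal.ofReal_sub _ (by positivity), ← ENNReal.ofReal_pow hinv,
      ← ENNReal.ofReal_sub _ (pow_nonneg hinv _), ENNReal.toReal_ofReal]
    exact sub_nonneg.2 (pow_le_one₀ hinv (sub_le_self _ (by positivity)))
  rw [ENNReal.toReal_mul, hfactor, ENNReal.toReal_min ((hW.isDist x).ne_top y)
    (ENNReal.mul_ne_top ENNReal.ofReal_ne_top (hQ.ne_top y)), ENNReal.toReal_mul,
    ENNReal.toReal_ofReal hL0.le] at hmono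
  refine le_trans ?_ hmono
  gcongr
  exact one_sub_inv_pow_le_exp_neg hL (by push_cast; linarith)

theorem exists_isSimulation_mul_min_le (hW : IsChannel W) (hQ : IsDist Q) (hr : 0 ≤ r) (n : ℕ) :
    ∃ N, IsSimulation (Real.logb 2 (messageCount r n)) N ∧ ∀ x y,
      (1 - Real.exp (-(n : ℝ) ^ 2)) *
        min (prodCh n W x y).toReal (2 ^ (n * r) * (prodDist n Q y).toReal) ≤ (N x y).toReal := by
  obtain ⟨N, hN, hWN⟩ := exists_isMessageSimulation_mul_min_le (isChannel_prodCh hW n)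
    (isDist_prodDist hQ n) (Real.one_le_rpow one_le_two (by positivity))
    (Nat.le_ceil ((n : ℝ) ^ 2 * 2 ^ (n * r)))
  exact ⟨N, isSimulation_iff.2 ⟨_, Nat.succ_pos _, le_rfl, hN⟩, hWN⟩

theorem simD_le_of_isSimulation {N : X → Y → ℝ≥0∞} {c : ℝ} {B : EReal} (hN : IsSimulation c N)
    (h : ∀ x, renyiD α (W x) (N x) ≤ B) : simD α W c ≤ B :=
  (iInf_le (fun N : {N : X → Y → ℝ≥0∞ // IsSimulation c N} => chD α W N.1) ⟨N, hN⟩).trans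
    (iSup_le h)

theorem ac_and_sum_le_of_renyiD_le {P : Y → ℝ≥0∞} {β c : ℝ} (hβ : 1 < β) (hP : IsDist P)
    (hQ : IsDist Q) (h : renyiD (ENNReal.ofReal β) P Q ≤ c) :
    (∀ y, Q y = 0 → P y = 0) ∧
      ∑ y, (P y).toReal ^ β * (Q y).toReal ^ (1 - β) ≤ 2 ^ ((β - 1) * c) := by
  have hac : ∀ y, Q y = 0 → P y = 0 := by
    by_contra hac
    rw [renyiD_eq_top_of_not_ac (by simpa using hβ.le) ENNReal.ofReal_ne_top hP.ne_top hQ.ne_top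
      hac] at h
    exact (EReal.coe_lt_top c).not_ge h
  refine ⟨hac, ?_⟩
  rw [renyiD_ofReal_eq_logb hβ hP hQ.ne_top hac, EReal.coe_le_coe_iff,
    inv_mul_le_iff₀ (by linarith)] at h
  exact (Real.logb_le_iff_le_rpow one_lt_two
    (sum_rpow_mul_rpow_one_sub_pos (by linarith) hP hQ.ne_top hac)).1 h

theorem sum_mul_div_mul_rpow_sub_one {P : Y → ℝ≥0∞} {β L : ℝ} (hβ : β ≠ 0) (hL : 0 ≤ L)
    (hQ : ∀ y, Q y ≠ ⊤) (hac : ∀ y, Q y = 0 → P y = 0) :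
    ∑ y, (P y).toReal * ((P y).toReal / (L * (Q y).toReal)) ^ (β - 1) =
      L ^ (1 - β) * ∑ y, (P y).toReal ^ β * (Q y).toReal ^ (1 - β) := by
  rw [Finset.mul_sum]
  refine Finset.sum_congr rfl fun y _ => ?_
  rw [toReal_rpow_mul_toReal_rpow_one_sub hβ hQ hac, mul_comm L, ← div_div,
    Real.div_rpow (by positivity) hL, ← neg_sub β 1, Real.rpow_neg hL]
  ring

theorem sum_prodCh_mul_div_rpow_le {β c : ℝ} (hβ : 1 < β) (hW : IsChannel W) (hQ : IsDist Q)
    (h : ∀ x, renyiD (ENNReal.ofReal β) (W x) Q ≤ c) {n : ℕ} (x : Fin n → X) :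
    ∑ y, (prodCh n W x y).toReal *
        ((prodCh n W x y).toReal / (2 ^ (n * r) * (prodDist n Q y).toReal)) ^ (β - 1) ≤
      2 ^ (-(n * ((β - 1) * (r - c)))) := by
  have hac (x : X) := (ac_and_sum_le_of_renyiD_le hβ (hW.isDist x) hQ (h x)).1
  rw [sum_mul_div_mul_rpow_sub_one (by linarith) (by positivity) (isDist_prodDist hQ n).ne_top
    fun y => prodCh_eq_zero_of_prodDist_eq_zero hac x, sum_prodCh_rpow_mul_prodDist_rpow]
  calc (2 ^ (n * r) : ℝ) ^ (1 - β) *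
        ∏ i, ∑ y, (W (x i) y).toReal ^ β * (Q y).toReal ^ (1 - β)
      ≤ (2 ^ (n * r)) ^ (1 - β) * ∏ _i : Fin n, 2 ^ ((β - 1) * c) := by
        gcongr with i
        exact (ac_and_sum_le_of_renyiD_le hβ (hW.isDist (x i)) hQ (h (x i))).2
    _ = 2 ^ (-(n * ((β - 1) * (r - c)))) := by
        rw [Finset.prod_const, Finset.card_univ, Fintype.card_fin,
          ← Real.rpow_mul_natCast two_pos.le, ← Real.rpow_mul two_pos.le, ← Real.rpow_add two_pos]
        ring_nf

theorem sub_one_mul_sub_le_Erf {β c : ℝ} (h0 : α ≠ 0) (hβ : 1 < β) (hαβ : α ≤ ENNReal.ofReal β)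
    (hW : IsChannel W) (hr : 0 ≤ r) (hQ : IsDist Q)
    (h : ∀ x, renyiD (ENNReal.ofReal β) (W x) Q ≤ c) :
    ((β - 1) * (r - c) : ℝ) ≤ Erf α W r := by
  set E := (β - 1) * (r - c)
  set B := 4 + 2 * (β - 1)⁻¹
  have hB : 0 < B := add_pos four_pos (mul_pos two_pos (inv_pos.2 (sub_pos.2 hβ)))
  refine le_Erf_of_eventually_simD_le (C := B * 2) (rateOK_logb_messageCount hr)
    (mul_pos hB two_pos) ?_
  filter_upwards [eventually_ge_atTop 1,
    tendsto_natCast_atTop_atTop.eventually (eventually_ge_atTop E)] with n hn hnE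
  obtain ⟨N, hN, hWN⟩ := exists_isSimulation_mul_min_le hW hQ hr n
  refine simD_le_of_isSimulation hN fun x => ?_
  refine (renyiD_le_of_mul_min_le h0 hβ hαβ (by linarith [exp_neg_sq_le_half hn])
    (by linarith [Real.exp_pos (-(n : ℝ) ^ 2)]) (by positivity) (isChannel_prodCh hW n x)
    (hN.isDist x).ne_top (fun y hy => mul_pos (by positivity) ?_)
    (sum_prodCh_mul_div_rpow_le hβ hW hQ h x) (hWN x)).trans ?_
  · refine ENNReal.toReal_pos (fun hQy => (ENNReal.toReal_pos_iff.1 hy).1.ne' ?_)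
      ((isDist_prodDist hQ n).ne_top y)
    exact prodCh_eq_zero_of_prodDist_eq_zero
      (fun x => (ac_and_sum_le_of_renyiD_le hβ (hW.isDist x) hQ (h x)).1) x hQy
  · rw [EReal.coe_le_coe_iff, mul_assoc]
    refine mul_le_mul_of_nonneg_left ?_ hB.le
    linarith [exp_neg_sq_le_two_rpow hnE]

theorem Erf_nonneg [Nonempty Y] (hW : IsChannel W) (h0 : α ≠ 0) (hr : 0 ≤ r) : 0 ≤ Erf α W r := by
  refine EReal.ge_of_forall_gt_iff_ge.1 fun E hE => ?_
  rw [EReal.coe_neg'] at hE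
  have hrate : RateOK r fun _ => 0 :=
    rateOK_of_le_add (d := 0) (fun _ => le_rfl)
      (fun n => by simpa using mul_nonneg n.cast_nonneg hr)
      (by simp)
  refine le_Erf_of_eventually_simD_le hrate one_pos ?_
  set L := Real.logb 2 (Fintype.card Y) with hL
  have hlim := (tendsto_pow_const_div_const_pow_of_one_lt 1 (r := (2 : ℝ) ^ (-E))
    (Real.one_lt_rpow one_lt_two (by linarith))).mul_const L
  rw [zero_mul] at hlim
  filter_upwards [hlim.eventually (eventually_le_nhds one_pos)] with n hn
  have hunif : IsDist fun _ : Fin n → Y => (Fintype.card (Fin n → Y) : ℝ≥0∞)⁻¹ :=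
    isDist_const_inv_card
  refine simD_le_of_isSimulation (isSimulation_iff.2
    ⟨1, one_pos, by simp, isMessageSimulation_one_const hunif⟩) fun x => ?_
  have hW1 := isChannel_prodCh hW n
  refine (renyiD_le_neg_logb_of_mul_le (κ := ((Fintype.card Y : ℝ) ^ n)⁻¹) h0 (hW1 x) hunif.ne_top
    (by positivity) fun y => ?_).trans ?_
  · rw [ENNReal.toReal_inv, Fintype.card_pi_const, Nat.cast_pow, ENNReal.toReal_pow,
      ENNReal.toReal_natCast]
    exact mul_le_of_le_one_right (by positivity)
      (ENNReal.toReal_le_of_le_ofReal one_pos.le (by simpa using (hW1.isDist x).le_one y))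
  · rw [EReal.coe_le_coe_iff, Real.logb_inv, neg_neg, Real.logb_pow, ← hL, one_mul,
      mul_comm (n : ℝ) E, ← neg_mul, Real.rpow_mul_natCast two_pos.le]
    rwa [pow_one, div_mul_eq_mul_div, div_le_one (by positivity)] at hn

theorem prodCh_toReal_le_of_le_mul {S : ℝ≥0∞} (hS : S ≤ ENNReal.ofReal (2 ^ r)) (hQ : IsDist Q)
    (h : ∀ x y, W x y ≤ S * Q y) {n : ℕ} (x : Fin n → X) (y : Fin n → Y) :
    (prodCh n W x y).toReal ≤ 2 ^ (n * r) * (prodDist n Q y).toReal := by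
  have hprod : prodCh n W x y ≤ ENNReal.ofReal (2 ^ r) ^ n * prodDist n Q y :=
    calc ∏ i, W (x i) (y i) ≤ ∏ i, ENNReal.ofReal (2 ^ r) * Q (y i) :=
          Finset.prod_le_prod' fun i _ => (h _ _).trans (by gcongr)
      _ = ENNReal.ofReal (2 ^ r) ^ n * prodDist n Q y := by
          simp [prodDist, Finset.prod_mul_distrib]
  refine (ENNReal.toReal_mono (ENNReal.mul_ne_top (ENNReal.pow_ne_top ENNReal.ofReal_ne_top)
    ((isDist_prodDist hQ n).ne_top y)) hprod).trans_eq ?_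
  rw [ENNReal.toReal_mul, ENNReal.toReal_pow, ENNReal.toReal_ofReal (by positivity),
    mul_comm (n : ℝ), Real.rpow_mul_natCast two_pos.le]

theorem Erf_eq_top [Nonempty X] (hW : IsChannel W) (h0 : α ≠ 0) (hr : renyiCap ⊤ W ≤ r) :
    Erf α W r = ⊤ := by
  have hS1 : 1 ≤ (sumSup W).toReal := by
    simpa using ENNReal.toReal_mono (sumSup_ne_top hW) (one_le_sumSup hW)
  rw [renyiCap_top_eq_logb hW, EReal.coe_le_coe_iff] at hr
  have hr0 : 0 ≤ r := (Real.logb_nonneg one_lt_two hS1).trans hr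
  rw [Real.logb_le_iff_le_rpow one_lt_two (by linarith),
    ← ENNReal.le_ofReal_iff_toReal_le (sumSup_ne_top hW) (by positivity)] at hr
  obtain ⟨Q, hQ, hWQ⟩ := exists_isDist_le_sumSup_mul hW
  rw [eq_top_iff, ← EReal.ge_of_forall_gt_iff_ge]
  intro E _
  refine le_Erf_of_eventually_simD_le (C := 4) (rateOK_logb_messageCount hr0) (by norm_num) ?_
  filter_upwards [eventually_ge_atTop 1,
    tendsto_natCast_atTop_atTop.eventually (eventually_ge_atTop E)] with n hn hnE
  obtain ⟨N, hN, hWN⟩ := exists_isSimulation_mul_min_le hW hQ hr0 n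
  set κ := 1 - Real.exp (-(n : ℝ) ^ 2)
  have hκ : 1 / 2 ≤ κ := by linarith [exp_neg_sq_le_half hn]
  have hκ1 : κ ≤ 1 := by linarith [Real.exp_pos (-(n : ℝ) ^ 2)]
  refine simD_le_of_isSimulation hN fun x => ?_
  refine (renyiD_le_neg_logb_of_mul_le h0 (isChannel_prodCh hW n x) (hN.isDist x).ne_top
    (κ := κ) (by linarith) fun y => ?_).trans ?_
  · simpa only [min_eq_left (prodCh_toReal_le_of_le_mul hr hQ hWQ x y)] using hWN x y
  · rw [EReal.coe_le_coe_iff, ← Real.logb_inv]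
    have hlog := logb_two_le_two_mul_of_log_le (x := κ⁻¹) (u := 2 * (1 - κ)) (by linarith)
      (by rw [Real.log_inv]; exact neg_log_le_two_mul_one_sub hκ hκ1)
    linarith [exp_neg_sq_le_two_rpow hnE]

end Achievability

/-! ### Large deviations of products -/

section LargeDeviations

variable {ι : Type*} [Fintype ι] {p : ι → ℝ}

theorem exists_sum_mul_exp_lt_one (hp : p ∈ stdSimplex ℝ ι) {g : ι → ℝ}
    (hg : 0 < ∑ i, p i * g i) : ∃ s > 0, ∑ i, p i * Real.exp (-(s * g i)) < 1 := by
  set φ : ℝ → ℝ := fun s => ∑ i, p i * Real.exp (-(s * g i)) with hφ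
  have hderiv : HasDerivAt φ (-∑ i, p i * g i) 0 := by
    have hterm (i : ι) : HasDerivAt (fun s => p i * Real.exp (-(s * g i))) (-(p i * g i)) 0 := by
      simpa using (((hasDerivAt_id (0 : ℝ)).mul_const (g i)).neg.exp).const_mul (p i)
    simpa using HasDerivAt.fun_sum fun i (_ : i ∈ Finset.univ) => hterm i
  have hφ0 : φ 0 = 1 := by simp [hφ, hp.2]
  have hslope := (hderiv.tendsto_slope.mono_left
    (nhdsWithin_mono 0 fun s (hs : s ∈ Set.Ioi (0 : ℝ)) => hs.ne')).eventually
      (gt_mem_nhds (neg_lt_zero.2 hg))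
  obtain ⟨s, hs, hs0⟩ := (hslope.and self_mem_nhdsWithin).exists
  refine ⟨s, hs0, ?_⟩
  rw [slope_def_field, hφ0, sub_zero, div_lt_iff₀ hs0, zero_mul] at hs
  linarith

theorem tendsto_sum_prod_of_sum_mul_pos (hp : p ∈ stdSimplex ℝ ι) {g : ι → ℝ}
    (hg : 0 < ∑ i, p i * g i) :
    Tendsto (fun n : ℕ => ∑ z : Fin n → ι with ∑ j, g (z j) ≤ 0, ∏ j, p (z j)) atTop (nhds 0) := by
  obtain ⟨s, hs, hlt⟩ := exists_sum_mul_exp_lt_one hp hg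
  have hterm (i : ι) : 0 ≤ p i * Real.exp (-(s * g i)) := mul_nonneg (hp.1 i) (Real.exp_nonneg _)
  refine squeeze_zero (fun n => Finset.sum_nonneg fun z _ => Finset.prod_nonneg fun j _ => hp.1 _)
    (fun n => ?_) (tendsto_pow_atTop_nhds_zero_of_lt_one (Finset.sum_nonneg fun i _ => hterm i) hlt)
  calc ∑ z : Fin n → ι with ∑ j, g (z j) ≤ 0, ∏ j, p (z j)
      ≤ ∑ z : Fin n → ι with ∑ j, g (z j) ≤ 0, ∏ j, p (z j) * Real.exp (-(s * g (z j))) := by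
        refine Finset.sum_le_sum fun z hz => ?_
        rw [Finset.prod_mul_distrib, ← Real.exp_sum, Finset.sum_neg_distrib, ← Finset.mul_sum]
        refine le_mul_of_one_le_right (Finset.prod_nonneg fun j _ => hp.1 _) (Real.one_le_exp ?_)
        exact neg_nonneg.2 (mul_nonpos_of_nonneg_of_nonpos hs.le (Finset.mem_filter.1 hz).2)
    _ ≤ ∑ z : Fin n → ι, ∏ j, p (z j) * Real.exp (-(s * g (z j))) :=
        Finset.sum_le_sum_of_subset_of_nonneg (Finset.filter_subset _ _)
          fun z _ _ => Finset.prod_nonneg fun j _ => hterm _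
    _ = (∑ i, p i * Real.exp (-(s * g i))) ^ n :=
        (Fintype.sum_pow (fun i => p i * Real.exp (-(s * g i))) n).symm

theorem tendsto_sum_prod_of_lt_sum_mul_logb (hp : p ∈ stdSimplex ℝ ι) {f : ι → ℝ}
    (hf : ∀ i, 0 < p i → 0 < f i) {m : ℝ} (hm : m < ∑ i, p i * Real.logb 2 (f i)) :
    Tendsto (fun n : ℕ => ∑ z : Fin n → ι with ∏ j, f (z j) < 2 ^ (n * m), ∏ j, p (z j))
      atTop (nhds 0) := by
  have hg : 0 < ∑ i, p i * (Real.logb 2 (f i) - m) := by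
    simpa [mul_sub, Finset.sum_sub_distrib, ← Finset.sum_mul, hp.2] using hm
  refine squeeze_zero (fun n => Finset.sum_nonneg fun z _ => Finset.prod_nonneg fun j _ => hp.1 _)
    (fun n => ?_) (tendsto_sum_prod_of_sum_mul_pos hp hg)
  rw [Finset.sum_filter, Finset.sum_filter]
  refine Finset.sum_le_sum fun z _ => ?_
  split_ifs with h1 h2 h2
  · rfl
  · by_contra! hlt
    have hfz (j : Fin n) : 0 < f (z j) :=
      hf _ ((hp.1 _).lt_of_ne' (Finset.prod_ne_zero_iff.1 hlt.ne' j (Finset.mem_univ j)))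
    refine h2 ?_
    have hlog := (Real.logb_lt_iff_lt_rpow one_lt_two (Finset.prod_pos fun j _ => hfz j)).2 h1
    rw [Real.logb_prod _ _ fun j _ => (hfz j).ne'] at hlog
    simpa using hlog.le
  · exact Finset.prod_nonneg fun j _ => hp.1 _
  · rfl

theorem exists_le_of_le_sum_mul (hp : p ∈ stdSimplex ℝ ι) {v : ι → ℝ} {c : ℝ}
    (h : c ≤ ∑ i, p i * v i) : ∃ i, c ≤ v i := by
  have hpos : 0 < ∑ i, p i := hp.2.symm ▸ one_pos
  obtain ⟨i, -, hi⟩ := (convexOn_id convex_univ).exists_ge_of_centerMass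
    (fun i _ => hp.1 i) hpos fun i _ => Set.mem_univ (v i)
  refine ⟨i, h.trans ?_⟩
  simpa [Finset.centerMass, hp.2] using hi

theorem one_sub_sum_filter_le (hp : p ∈ stdSimplex ℝ ι) (a b c : ι → Prop) :
    1 - (∑ i with ¬a i, p i) - (∑ i with ¬b i, p i) - (∑ i with ¬c i, p i) ≤
      ∑ i with a i ∧ b i ∧ c i, p i := by
  simp only [← hp.2, Finset.sum_filter, ← Finset.sum_sub_distrib]
  refine Finset.sum_le_sum fun i _ => ?_
  have := hp.1 i
  by_cases a i <;> by_cases b i <;> by_cases c i <;> simp [*]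

theorem prod_mem_stdSimplex (hp : p ∈ stdSimplex ℝ ι) (n : ℕ) :
    (fun z : Fin n → ι => ∏ j, p (z j)) ∈ stdSimplex ℝ (Fin n → ι) :=
  ⟨fun _ => Finset.prod_nonneg fun _ _ => hp.1 _, by rw [← Fintype.sum_pow, hp.2, one_pow]⟩

end LargeDeviations

/-! ### Converse -/

section JointLaws

variable {X Y : Type*} [Fintype X] [Fintype Y]

/-- The input marginal of a law on input-output pairs. -/
def inputLaw (J : X × Y → ℝ) (x : X) : ℝ := ∑ y, J (x, y)

/-- The output marginal of a law on input-output pairs. -/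
def outputLaw (J : X × Y → ℝ) (y : Y) : ℝ := ∑ x, J (x, y)

/-- The laws of input-output pairs which only charge transitions that the channel `W` allows.
They are real-valued, to serve as the domain of a convex program. -/
def dominatedLaws (W : X → Y → ℝ≥0∞) : Set (X × Y → ℝ) :=
  {J | J ∈ stdSimplex ℝ (X × Y) ∧ ∀ p, (W p.1 p.2).toReal = 0 → J p = 0}

/-- The conditional divergence `D(J_{Y|X} ‖ W | J_X)` of a law `J` from the channel `W`, in bits. -/
def condDivergence (W : X → Y → ℝ≥0∞) (J : X × Y → ℝ) : ℝ :=
  ∑ p, J p * Real.logb 2 (J p / (inputLaw J p.1 * (W p.1 p.2).toReal))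

/-- The mean under `J` of the information density `log (W(y|x) / J_Y(y))`, in bits. -/
def meanInfoDensity (W : X → Y → ℝ≥0∞) (J : X × Y → ℝ) : ℝ :=
  ∑ p, J p * Real.logb 2 ((W p.1 p.2).toReal / outputLaw J p.2)

variable {W : X → Y → ℝ≥0∞} {J : X × Y → ℝ}

theorem inputLaw_mem_stdSimplex (hJ : J ∈ stdSimplex ℝ (X × Y)) :
    inputLaw J ∈ stdSimplex ℝ X :=
  ⟨fun x => Finset.sum_nonneg fun y _ => hJ.1 (x, y),
    by simpa only [inputLaw, ← Fintype.sum_prod_type] using hJ.2⟩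

theorem outputLaw_mem_stdSimplex (hJ : J ∈ stdSimplex ℝ (X × Y)) :
    outputLaw J ∈ stdSimplex ℝ Y :=
  ⟨fun y => Finset.sum_nonneg fun x _ => hJ.1 (x, y),
    by simpa only [outputLaw, ← Fintype.sum_prod_type_right] using hJ.2⟩

theorem le_inputLaw (hJ : J ∈ stdSimplex ℝ (X × Y)) (p : X × Y) : J p ≤ inputLaw J p.1 :=
  Finset.single_le_sum (f := fun y => J (p.1, y)) (fun y _ => hJ.1 (p.1, y)) (Finset.mem_univ p.2)

theorem le_outputLaw (hJ : J ∈ stdSimplex ℝ (X × Y)) (p : X × Y) : J p ≤ outputLaw J p.2 :=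
  Finset.single_le_sum (f := fun x => J (x, p.2)) (fun x _ => hJ.1 (x, p.2)) (Finset.mem_univ p.1)

theorem toReal_pos_of_mem_dominatedLaws (hJ : J ∈ dominatedLaws W) {p : X × Y} (hp : 0 < J p) :
    0 < (W p.1 p.2).toReal :=
  ENNReal.toReal_nonneg.lt_of_ne' fun h => hp.ne' (hJ.2 p h)

end JointLaws

section Converse

variable {X Y : Type*} [Fintype X] [Fintype Y] {W : X → Y → ℝ≥0∞} {J : X × Y → ℝ} {n : ℕ} {ε : ℝ}

theorem sum_pi_prod (F : (Fin n → X) → (Fin n → Y) → ℝ) :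
    ∑ z : Fin n → X × Y, F (fun i => (z i).1) (fun i => (z i).2) = ∑ x, ∑ y, F x y := by
  rw [← Fintype.sum_prod_type' F]
  exact Fintype.sum_equiv (Equiv.arrowProdEquivProdArrow (Fin n) (fun _ => X) fun _ => Y) _ _
    fun _ => rfl

/-- The sequences of pairs whose information density and conditional divergence are `ε`-close to
the means under `J`, and at whose output `Q` is at most `2 ^ (n * ε)` times the output law. Since
`x / 0 = 0`, these conditions force all laws involved to be positive. -/
def typicalPairs (W : X → Y → ℝ≥0∞) (J : X × Y → ℝ) (ε : ℝ) (Q : (Fin n → Y) → ℝ) :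
    Finset (Fin n → X × Y) :=
  Finset.univ.filter fun z =>
    2 ^ (n * (meanInfoDensity W J - ε)) ≤
        ∏ i, (W (z i).1 (z i).2).toReal / outputLaw J (z i).2 ∧
      2 ^ (n * (-condDivergence W J - ε)) ≤
        ∏ i, inputLaw J (z i).1 * (W (z i).1 (z i).2).toReal / J (z i) ∧
      Q (fun i => (z i).2) ≤ 2 ^ (n * ε) * ∏ i, outputLaw J (z i).2

variable {Q : (Fin n → Y) → ℝ}

theorem sum_prod_filter_outputLaw_lt_le (hQ0 : ∀ y, 0 ≤ Q y)
    (hQ : ∑ y, Q y ≤ 1) {K : ℝ} (hK : 0 < K) :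
    ∑ z : Fin n → X × Y with K * ∏ i, outputLaw J (z i).2 < Q (fun i => (z i).2), ∏ i, J (z i) ≤
      K⁻¹ := by
  rw [Finset.sum_filter, sum_pi_prod fun (x : Fin n → X) y =>
    if K * ∏ i, outputLaw J (y i) < Q y then ∏ i, J (x i, y i) else 0, Finset.sum_comm]
  have hmarg (y : Fin n → Y) : ∑ x : Fin n → X, ∏ i, J (x i, y i) = ∏ i, outputLaw J (y i) :=
    (Fintype.prod_sum fun i x => J (x, y i)).symm
  calc ∑ y, ∑ x : Fin n → X, (if K * ∏ i, outputLaw J (y i) < Q y then ∏ i, J (x i, y i) else 0)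
      ≤ ∑ y, K⁻¹ * Q y := by
        refine Finset.sum_le_sum fun y _ => ?_
        split_ifs with h
        · rw [hmarg, le_inv_mul_iff₀ hK]
          exact h.le
        · simpa using mul_nonneg (inv_nonneg.2 hK.le) (hQ0 y)
    _ ≤ K⁻¹ := by
        rw [← Finset.mul_sum]
        exact mul_le_of_le_one_right (inv_nonneg.2 hK.le) hQ

theorem eventually_half_le_sum_typicalPairs (hJ : J ∈ dominatedLaws W) (hε : 0 < ε) :
    ∀ᶠ n : ℕ in atTop, ∀ Q : (Fin n → Y) → ℝ, (∀ y, 0 ≤ Q y) → ∑ y, Q y ≤ 1 →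
      1 / 2 ≤ ∑ z ∈ typicalPairs W J ε Q, ∏ i, J (z i) := by
  have hdensity := tendsto_sum_prod_of_lt_sum_mul_logb hJ.1
    (f := fun p => (W p.1 p.2).toReal / outputLaw J p.2)
    (fun p hp => div_pos (toReal_pos_of_mem_dominatedLaws hJ hp)
      (hp.trans_le (le_outputLaw hJ.1 p)))
    (sub_lt_self (meanInfoDensity W J) hε)
  have hdiv := tendsto_sum_prod_of_lt_sum_mul_logb hJ.1
    (f := fun p => inputLaw J p.1 * (W p.1 p.2).toReal / J p) (m := -condDivergence W J - ε)
    (fun p hp => div_pos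
      (mul_pos (hp.trans_le (le_inputLaw hJ.1 p)) (toReal_pos_of_mem_dominatedLaws hJ hp)) hp)
    ((sub_lt_self _ hε).trans_eq (by
      simp_rw [condDivergence, ← Finset.sum_neg_distrib, ← mul_neg, ← Real.logb_inv, inv_div]))
  have hgeom : Tendsto (fun n : ℕ => ((2 : ℝ) ^ (n * ε))⁻¹) atTop (nhds 0) :=
    ((tendsto_rpow_atTop_of_base_gt_one 2 one_lt_two).comp
      (tendsto_natCast_atTop_atTop.atTop_mul_const hε)).inv_tendsto_atTop
  have hsixth := gt_mem_nhds (show (0 : ℝ) < 1 / 6 by norm_num)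
  filter_upwards [hdensity.eventually hsixth, hdiv.eventually hsixth, hgeom.eventually hsixth]
    with n h1 h2 h3 Q hQ0 hQ
  have h4 := sum_prod_filter_outputLaw_lt_le (J := J) hQ0 hQ (Real.rpow_pos_of_pos two_pos (n * ε))
  have hunion := one_sub_sum_filter_le (prod_mem_stdSimplex hJ.1 n)
    (fun z => 2 ^ (n * (meanInfoDensity W J - ε)) ≤
      ∏ i, (W (z i).1 (z i).2).toReal / outputLaw J (z i).2)
    (fun z => 2 ^ (n * (-condDivergence W J - ε)) ≤
      ∏ i, inputLaw J (z i).1 * (W (z i).1 (z i).2).toReal / J (z i))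
    fun z => Q (fun i => (z i).2) ≤ 2 ^ (n * ε) * ∏ i, outputLaw J (z i).2
  simp only [not_le] at hunion
  rw [typicalPairs]
  linarith

theorem prod_toReal_pos_of_mem_typicalPairs (hJ : J ∈ stdSimplex ℝ (X × Y))
    {z : Fin n → X × Y} (hz : z ∈ typicalPairs W J ε Q) :
    0 < ∏ i, (W (z i).1 (z i).2).toReal ∧ 0 < ∏ i, outputLaw J (z i).2 ∧ 0 < ∏ i, J (z i) := by
  obtain ⟨h1, h2, -⟩ := (Finset.mem_filter.1 hz).2
  have h1' := (Real.rpow_pos_of_pos two_pos _).trans_le h1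
  have h2' := (Real.rpow_pos_of_pos two_pos _).trans_le h2
  rw [Finset.prod_div_distrib] at h1' h2'
  have hw : 0 ≤ ∏ i, (W (z i).1 (z i).2).toReal :=
    Finset.prod_nonneg fun i _ => ENNReal.toReal_nonneg
  have hY : 0 ≤ ∏ i, outputLaw J (z i).2 :=
    Finset.prod_nonneg fun i _ => (outputLaw_mem_stdSimplex hJ).1 _
  have hz0 : 0 ≤ ∏ i, J (z i) := Finset.prod_nonneg fun i _ => hJ.1 _
  exact ⟨hw.lt_of_ne' (div_ne_zero_iff.1 h1'.ne').1, hY.lt_of_ne' (div_ne_zero_iff.1 h1'.ne').2,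
    hz0.lt_of_ne' (div_ne_zero_iff.1 h2'.ne').2⟩

theorem rpow_mul_le_prod_of_mem_typicalPairs (hJ : J ∈ stdSimplex ℝ (X × Y))
    {z : Fin n → X × Y} (hz : z ∈ typicalPairs W J ε Q) :
    2 ^ (n * (meanInfoDensity W J - 2 * ε)) * Q (fun i => (z i).2) ≤
      ∏ i, (W (z i).1 (z i).2).toReal := by
  obtain ⟨h1, -, h3⟩ := (Finset.mem_filter.1 hz).2
  rw [Finset.prod_div_distrib, le_div_iff₀ (prod_toReal_pos_of_mem_typicalPairs hJ hz).2.1] at h1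
  calc 2 ^ (n * (meanInfoDensity W J - 2 * ε)) * Q (fun i => (z i).2)
      ≤ 2 ^ (n * (meanInfoDensity W J - 2 * ε)) *
          (2 ^ (n * ε) * ∏ i, outputLaw J (z i).2) := by gcongr
    _ = 2 ^ (n * (meanInfoDensity W J - ε)) * ∏ i, outputLaw J (z i).2 := by
        rw [← mul_assoc, ← Real.rpow_add two_pos]
        ring_nf
    _ ≤ _ := h1

theorem rpow_mul_prod_le_of_mem_typicalPairs (hJ : J ∈ stdSimplex ℝ (X × Y))
    {z : Fin n → X × Y} (hz : z ∈ typicalPairs W J ε Q) :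
    2 ^ (n * (-condDivergence W J - ε)) * ∏ i, J (z i) ≤
      (∏ i, inputLaw J (z i).1) * ∏ i, (W (z i).1 (z i).2).toReal := by
  have h2 := (Finset.mem_filter.1 hz).2.2.1
  rwa [Finset.prod_div_distrib, le_div_iff₀ (prod_toReal_pos_of_mem_typicalPairs hJ hz).2.2,
    Finset.prod_mul_distrib] at h2

theorem eventually_exists_input_forall_mul_le (hJ : J ∈ dominatedLaws W) (hε : 0 < ε) :
    ∀ᶠ n : ℕ in atTop, ∀ Q : (Fin n → Y) → ℝ, (∀ y, 0 ≤ Q y) → ∑ y, Q y ≤ 1 →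
      ∃ (x : Fin n → X) (A : Finset (Fin n → Y)),
        (∀ y ∈ A, 0 < (prodCh n W x y).toReal ∧
          2 ^ (n * (meanInfoDensity W J - 2 * ε)) * Q y ≤ (prodCh n W x y).toReal) ∧
        2 ^ (n * (-condDivergence W J - ε)) * (1 / 2) ≤ ∑ y ∈ A, (prodCh n W x y).toReal := by
  filter_upwards [eventually_half_le_sum_typicalPairs hJ hε] with n hn Q hQ0 hQ
  simp only [prodCh, ENNReal.toReal_prod]
  set G := typicalPairs W J ε Q
  have hsum : 2 ^ (n * (-condDivergence W J - ε)) * (1 / 2) ≤ ∑ x : Fin n → X,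
      (∏ i, inputLaw J (x i)) *
        ∑ y : Fin n → Y with (fun i => (x i, y i)) ∈ G, ∏ i, (W (x i) (y i)).toReal := by
    calc 2 ^ (n * (-condDivergence W J - ε)) * (1 / 2)
        ≤ ∑ z ∈ G, 2 ^ (n * (-condDivergence W J - ε)) * ∏ i, J (z i) := by
          rw [← Finset.mul_sum]
          exact mul_le_mul_of_nonneg_left (hn Q hQ0 hQ) (by positivity)
      _ ≤ ∑ z ∈ G, (∏ i, inputLaw J (z i).1) * ∏ i, (W (z i).1 (z i).2).toReal :=
          Finset.sum_le_sum fun z hz => rpow_mul_prod_le_of_mem_typicalPairs hJ.1 hz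
      _ = _ := by
          simp_rw [Finset.mul_sum, Finset.sum_filter]
          rw [← sum_pi_prod, ← Finset.sum_filter, Finset.filter_univ_mem]
  obtain ⟨x, hx⟩ :=
    exists_le_of_le_sum_mul (prod_mem_stdSimplex (inputLaw_mem_stdSimplex hJ.1) n) hsum
  refine ⟨x, _, fun y hy => ?_, hx⟩
  have hz := (Finset.mem_filter.1 hy).2
  exact ⟨(prod_toReal_pos_of_mem_typicalPairs hJ.1 hz).1,
    rpow_mul_le_prod_of_mem_typicalPairs hJ.1 hz⟩

end Converse

section ConverseBounds

variable {X Y : Type*} [Fintype X] [Fintype Y] {W : X → Y → ℝ≥0∞} {α : ℝ≥0∞} {J : X × Y → ℝ}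
  {r ε : ℝ}

theorem RateOK.eventually_le_mul_add {c : ℕ → ℝ} (hc : RateOK r c) (hε : 0 < ε) :
    ∀ᶠ n : ℕ in atTop, c n ≤ n * (r + ε) := by
  have hlt : ((r : ℝ) : EReal) < ((r + ε : ℝ) : EReal) :=
    EReal.coe_lt_coe (lt_add_of_pos_right r hε)
  filter_upwards [eventually_lt_of_limsup_lt (hc.2.trans_lt hlt), eventually_gt_atTop 0]
    with n hn hn0
  have hn' := EReal.coe_lt_coe_iff.1 hn
  rw [div_lt_iff₀' (Nat.cast_pos.2 hn0)] at hn'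
  exact hn'.le

theorem le_simD_of_forall_exists_le_renyiD {c : ℝ} {b : EReal}
    (h : ∀ N, IsSimulation c N → ∃ x, b ≤ renyiD α (W x) (N x)) : b ≤ simD α W c := by
  refine le_iInf fun N => ?_
  obtain ⟨x, hx⟩ := h N.1 N.2
  exact hx.trans (le_iSup (fun x => renyiD α (W x) (N.1 x)) x)

theorem eventually_exists_input_forall_simulation_mul_le (hJ : J ∈ dominatedLaws W) {c : ℕ → ℝ}
    (hc : RateOK r c) (hε : 0 < ε) :
    ∀ᶠ n : ℕ in atTop, ∀ N : (Fin n → X) → (Fin n → Y) → ℝ≥0∞, IsSimulation (c n) N →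
      ∃ (x : Fin n → X) (A : Finset (Fin n → Y)),
        (∀ y ∈ A, 0 < (prodCh n W x y).toReal ∧
          2 ^ (n * (meanInfoDensity W J - r - 3 * ε)) * (N x y).toReal ≤
            (prodCh n W x y).toReal) ∧
        2 ^ (n * (-condDivergence W J - ε)) * (1 / 2) ≤ ∑ y ∈ A, (prodCh n W x y).toReal := by
  filter_upwards [eventually_exists_input_forall_mul_le hJ hε, hc.eventually_le_mul_add hε]
    with n hn hcn N hN
  obtain ⟨Q, hQ, hNQ⟩ := hN.exists_isDist_le_two_rpow_mul
  obtain ⟨x, A, hA, hsum⟩ := hn (fun y => (Q y).toReal) (fun _ => ENNReal.toReal_nonneg)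
    hQ.sum_toReal.le
  refine ⟨x, A, fun y hy => ⟨(hA y hy).1, le_trans ?_ (hA y hy).2⟩, hsum⟩
  have hNy : (N x y).toReal ≤ 2 ^ (n * (r + ε)) * (Q y).toReal := by
    have hle := ENNReal.toReal_mono (ENNReal.mul_ne_top ENNReal.ofReal_ne_top (hQ.ne_top y))
      (hNQ x y)
    rw [ENNReal.toReal_mul, ENNReal.toReal_ofReal (by positivity)] at hle
    refine hle.trans (mul_le_mul_of_nonneg_right ?_ ENNReal.toReal_nonneg)
    exact Real.rpow_le_rpow_of_exponent_le one_le_two hcn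
  calc 2 ^ (n * (meanInfoDensity W J - r - 3 * ε)) * (N x y).toReal
      ≤ 2 ^ (n * (meanInfoDensity W J - r - 3 * ε)) * (2 ^ (n * (r + ε)) * (Q y).toReal) := by
        gcongr
    _ = 2 ^ (n * (meanInfoDensity W J - 2 * ε)) * (Q y).toReal := by
        rw [← mul_assoc, ← Real.rpow_add two_pos]
        ring_nf

theorem half_mul_two_rpow_le_min {n : ℕ} {t k a S : ℝ} (hS : 2 ^ (n * (-t)) * (1 / 2) ≤ S) :
    1 / 2 * (2 : ℝ) ^ (-(n * max 0 (t - a * k))) ≤ min 1 (S * (2 ^ (n * k)) ^ a) := by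
  have hn : (0 : ℝ) ≤ n := n.cast_nonneg
  refine le_min ?_ ?_
  · have := Real.rpow_le_one_of_one_le_of_nonpos one_le_two
      (neg_nonpos.2 (mul_nonneg hn (le_max_left 0 (t - a * k))))
    linarith
  · calc 1 / 2 * (2 : ℝ) ^ (-(n * max 0 (t - a * k)))
        ≤ 1 / 2 * 2 ^ (-(n * (t - a * k))) := by
          gcongr
          exacts [one_le_two, le_max_right _ _]
      _ = 2 ^ (n * (-t)) * (1 / 2) * (2 ^ (n * k)) ^ a := by
          rw [← Real.rpow_mul two_pos.le, mul_right_comm, ← Real.rpow_add two_pos]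
          ring_nf
      _ ≤ S * (2 ^ (n * k)) ^ a := by gcongr

theorem Erf_le_max_of_three_mul_lt (hW : IsChannel W) (h0 : α ≠ 0) (ht : α ≠ ⊤)
    (hJ : J ∈ dominatedLaws W) (hε : 0 < ε) (hT : 3 * ε < meanInfoDensity W J - r) :
    Erf α W r ≤ ((max 0 (condDivergence W J + ε -
      max (α.toReal - 1) 0 * (meanInfoDensity W J - r - 3 * ε)) : ℝ) : EReal) := by
  obtain ⟨C, hC, K₀, -, hlower⟩ := exists_mul_min_le_renyiD h0 ht
  refine Erf_le_of_eventually_le_simD fun c hc => ⟨C * (1 / 2), by positivity, ?_⟩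
  have hlarge : Tendsto (fun n : ℕ => (2 : ℝ) ^ (n * (meanInfoDensity W J - r - 3 * ε)))
      atTop atTop :=
    (tendsto_rpow_atTop_of_base_gt_one 2 one_lt_two).comp
      (tendsto_natCast_atTop_atTop.atTop_mul_const (by linarith))
  filter_upwards [eventually_exists_input_forall_simulation_mul_le hJ hc hε,
    hlarge.eventually_ge_atTop K₀] with n hn hK
  refine le_simD_of_forall_exists_le_renyiD fun N hN => ?_
  obtain ⟨x, A, hA, hsum⟩ := hn N hN
  refine ⟨x, le_trans ?_ (hlower _ _ _ A _ hK ((isChannel_prodCh hW n).isDist x) (hN.isDist x)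
    fun y hy => (hA y hy).2)⟩
  rw [EReal.coe_le_coe_iff, mul_assoc]
  rw [← neg_add'] at hsum
  exact mul_le_mul_of_nonneg_left (half_mul_two_rpow_le_min hsum) hC.le

theorem Erf_le_max_condDivergence_sub (hW : IsChannel W) (h0 : α ≠ 0) (ht : α ≠ ⊤)
    (hJ : J ∈ dominatedLaws W) (hT : r < meanInfoDensity W J) :
    Erf α W r ≤ ((max 0 (condDivergence W J -
      max (α.toReal - 1) 0 * (meanInfoDensity W J - r)) : ℝ) : EReal) := by
  have hlim : Tendsto (fun ε : ℝ => ((max 0 (condDivergence W J + ε -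
      max (α.toReal - 1) 0 * (meanInfoDensity W J - r - 3 * ε)) : ℝ) : EReal)) (nhds 0)
      (nhds ((max 0 (condDivergence W J -
        max (α.toReal - 1) 0 * (meanInfoDensity W J - r)) : ℝ) : EReal)) :=
    (continuous_coe_real_ereal.comp (by fun_prop)).tendsto' _ _ (by simp)
  refine ge_of_tendsto (hlim.mono_left (nhdsWithin_le_nhds (s := Set.Ioi 0))) ?_
  filter_upwards [Ioo_mem_nhdsGT (show 0 < (meanInfoDensity W J - r) / 3 by linarith)] with ε hε
  exact Erf_le_max_of_three_mul_lt hW h0 ht hJ hε.1 (by linarith [hε.2])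

theorem Erf_top_le_zero (hJ : J ∈ dominatedLaws W)
    (hT : r < meanInfoDensity W J) : Erf ⊤ W r ≤ 0 := by
  obtain ⟨ε, hε, hεT⟩ : ∃ ε > 0, 0 < meanInfoDensity W J - r - 3 * ε :=
    ⟨(meanInfoDensity W J - r) / 4, by linarith, by linarith⟩
  refine Erf_le_of_eventually_le_simD (E := 0) fun c hc => ⟨1, one_pos, ?_⟩
  filter_upwards [eventually_exists_input_forall_simulation_mul_le hJ hc hε,
    (tendsto_natCast_atTop_atTop.atTop_mul_const hεT).eventually_ge_atTop 1] with n hn hn1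
  refine le_simD_of_forall_exists_le_renyiD fun N hN => ?_
  obtain ⟨x, A, hA, hsum⟩ := hn N hN
  obtain ⟨y, hy⟩ : A.Nonempty := by
    refine Finset.nonempty_of_sum_ne_zero (LT.lt.ne' (lt_of_lt_of_le ?_ hsum))
    positivity
  obtain ⟨hpos, hratio⟩ := hA y hy
  obtain ⟨hne, htop⟩ := ENNReal.toReal_pos_iff.1 hpos
  refine ⟨x, le_trans ?_ (logb_le_renyiD_top (by positivity) hne.ne' htop.ne
    ((hN.isDist x).ne_top y) hratio)⟩
  rw [Real.logb_rpow two_pos (by norm_num), EReal.coe_le_coe_iff]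
  simpa using hn1

end ConverseBounds

/-! ### Lagrange duality -/

section Lagrange

variable {E : Type*} [AddCommGroup E] [Module ℝ E] {S : Set E} {f g : E → ℝ}

theorem mul_sub_mul_nonneg_of_convexOn_of_concaveOn (hf : ConvexOn ℝ S f)
    (hg : ConcaveOn ℝ S g) (h : ∀ u ∈ S, 0 < g u → 0 ≤ f u) {u v : E} (hu : u ∈ S) (hv : v ∈ S)
    (hgu : 0 < g u) (hgv : g v ≤ 0) : 0 ≤ g u * f v - g v * f u := by
  set t₀ := g u / (g u - g v)
  have ht₀ : t₀ * (g u - g v) = g u := div_mul_cancel₀ _ (by linarith)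
  have hsegment : ∀ᶠ t in nhdsWithin t₀ (Set.Iio t₀), 0 ≤ (1 - t) * f u + t * f v := by
    have ht₀_pos : 0 < t₀ := div_pos hgu (by linarith)
    filter_upwards [Ioo_mem_nhdsLT ht₀_pos] with t ht
    have ht1 : t ≤ 1 := ht.2.le.trans ((div_le_one (by linarith)).2 (by linarith))
    refine (h _ (hf.1 hu hv (sub_nonneg.2 ht1) ht.1.le (sub_add_cancel 1 t)) ?_).trans
      (hf.2 hu hv (sub_nonneg.2 ht1) ht.1.le (sub_add_cancel 1 t))
    refine lt_of_lt_of_le ?_ (hg.2 hu hv (sub_nonneg.2 ht1) ht.1.le (sub_add_cancel 1 t))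
    simp only [smul_eq_mul]
    nlinarith [mul_lt_mul_of_pos_right ht.2 (show 0 < g u - g v by linarith)]
  have hcont : Tendsto (fun t => (1 - t) * f u + t * f v) (nhdsWithin t₀ (Set.Iio t₀))
      (nhds ((1 - t₀) * f u + t₀ * f v)) :=
    (Continuous.tendsto (by fun_prop) t₀).mono_left nhdsWithin_le_nhds
  have hend := mul_nonneg (ge_of_tendsto hcont hsegment) (show 0 ≤ g u - g v by linarith)
  calc 0 ≤ ((1 - t₀) * f u + t₀ * f v) * (g u - g v) := hend
    _ = (g u - g v - t₀ * (g u - g v)) * f u + t₀ * (g u - g v) * f v := by ring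
    _ = g u * f v - g v * f u := by rw [ht₀]; ring

theorem exists_lagrange_multiplier (hf : ConvexOn ℝ S f) (hg : ConcaveOn ℝ S g)
    (hslater : ∃ u ∈ S, 0 < g u) (h : ∀ u ∈ S, 0 < g u → 0 ≤ f u) :
    ∃ s ≥ 0, ∀ u ∈ S, s * g u ≤ f u := by
  obtain ⟨u₀, hu₀, hgu₀⟩ := hslater
  obtain ⟨s, hlower, hupper⟩ := exists_between_of_forall_le
    (s := insert 0 ((fun v => f v / g v) '' {v ∈ S | g v < 0}))
    (t := (fun u => f u / g u) '' {u ∈ S | 0 < g u}) (Set.insert_nonempty _ _)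
    ⟨_, u₀, ⟨hu₀, hgu₀⟩, rfl⟩ (by
      rintro _ (rfl | ⟨v, ⟨hv, hgv⟩, rfl⟩) _ ⟨u, ⟨hu, hgu⟩, rfl⟩
      · exact div_nonneg (h u hu hgu) hgu.le
      · have := mul_sub_mul_nonneg_of_convexOn_of_concaveOn hf hg h hu hv hgu hgv.le
        rw [div_le_iff_of_neg hgv, div_mul_eq_mul_div, div_le_iff₀ hgu]
        linarith)
  refine ⟨s, hlower (Set.mem_insert _ _), fun v hv => ?_⟩
  rcases lt_trichotomy (g v) 0 with hgv | hgv | hgv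
  · exact (div_le_iff_of_neg hgv).1
      (hlower (Set.mem_insert_of_mem _ (Set.mem_image_of_mem _ ⟨hv, hgv⟩)))
  · have := mul_sub_mul_nonneg_of_convexOn_of_concaveOn hf hg h hu₀ hv hgu₀ hgv.le
    rw [hgv, zero_mul, sub_zero] at this
    simpa [hgv] using nonneg_of_mul_nonneg_right this hgu₀
  · exact (le_div_iff₀ hgv).1 (hupper (Set.mem_image_of_mem _ ⟨hv, hgv⟩))

end Lagrange

/-! ### Convexity of the exponents -/

theorem mul_log_add_sub_le_mul_log_div {a b k : ℝ} (ha : 0 ≤ a) (hb : 0 ≤ b) (hab : b = 0 → a = 0)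
    (hk : 0 < k) : a * Real.log k + a - k * b ≤ a * Real.log (a / b) := by
  rcases ha.eq_or_lt with rfl | ha
  · simpa using mul_nonneg hk.le hb
  · have hb' : 0 < b := hb.lt_of_ne' fun h0 => ha.ne' (hab h0)
    have hlog := mul_le_mul_of_nonneg_left
      (Real.one_sub_inv_le_log_of_pos (show 0 < a / b / k by positivity)) ha.le
    rw [Real.log_div (div_pos ha hb').ne' hk.ne', inv_div, div_div_eq_mul_div, mul_sub, mul_sub,
      mul_one, mul_div_cancel₀ _ ha.ne'] at hlog
    linarith

theorem convexOn_mul_log_div :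
    ConvexOn ℝ {q : ℝ × ℝ | 0 ≤ q.1 ∧ 0 ≤ q.2 ∧ (q.2 = 0 → q.1 = 0)}
      fun q => q.1 * Real.log (q.1 / q.2) := by
  have hconv : Convex ℝ {q : ℝ × ℝ | 0 ≤ q.1 ∧ 0 ≤ q.2 ∧ (q.2 = 0 → q.1 = 0)} := by
    rintro p ⟨hp1, hp2, hp⟩ q ⟨hq1, hq2, hq⟩ s t hs ht -
    refine ⟨add_nonneg (mul_nonneg hs hp1) (mul_nonneg ht hq1),
      add_nonneg (mul_nonneg hs hp2) (mul_nonneg ht hq2), fun h => ?_⟩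
    obtain ⟨h1, h2⟩ := (add_eq_zero_iff_of_nonneg (mul_nonneg hs hp2) (mul_nonneg ht hq2)).1 h
    rcases mul_eq_zero.1 h1 with h1 | h1 <;> rcases mul_eq_zero.1 h2 with h2 | h2 <;>
      simp [h1, h2, hp, hq]
  refine ⟨hconv, fun p hp q hq s t hs ht hst => ?_⟩
  set m := s • p + t • q with hm
  obtain ⟨hm1, hm2, hm0⟩ : 0 ≤ m.1 ∧ 0 ≤ m.2 ∧ (m.2 = 0 → m.1 = 0) := hconv hp hq hs ht hst
  have hsum1 : s * p.1 + t * q.1 = m.1 := by simp [hm]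
  have hsum2 : s * p.2 + t * q.2 = m.2 := by simp [hm]
  rcases hm1.eq_or_lt with h0 | hpos
  · obtain ⟨h1, h2⟩ := (add_eq_zero_iff_of_nonneg (mul_nonneg hs hp.1) (mul_nonneg ht hq.1)).1
      (hsum1.trans h0.symm)
    simp only [smul_eq_mul, ← mul_assoc]
    simp [h1, h2, ← h0]
  · have hpos2 : 0 < m.2 := hm2.lt_of_ne' fun h => hpos.ne' (hm0 h)
    have hk : m.1 / m.2 * m.2 = m.1 := div_mul_cancel₀ _ hpos2.ne'
    have hp' := mul_le_mul_of_nonneg_left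
      (mul_log_add_sub_le_mul_log_div hp.1 hp.2.1 hp.2.2 (div_pos hpos hpos2)) hs
    have hq' := mul_le_mul_of_nonneg_left
      (mul_log_add_sub_le_mul_log_div hq.1 hq.2.1 hq.2.2 (div_pos hpos hpos2)) ht
    calc m.1 * Real.log (m.1 / m.2)
        = s * (p.1 * Real.log (m.1 / m.2) + p.1 - m.1 / m.2 * p.2) +
            t * (q.1 * Real.log (m.1 / m.2) + q.1 - m.1 / m.2 * q.2) := by
          linear_combination (-Real.log (m.1 / m.2) - 1) * hsum1 + m.1 / m.2 * hsum2 + hk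
      _ ≤ s • (p.1 * Real.log (p.1 / p.2)) + t • (q.1 * Real.log (q.1 / q.2)) :=
          add_le_add hp' hq'

theorem inputLaw_add_smul {X Y : Type*} [Fintype Y] (a b : ℝ) (J K : X × Y → ℝ) (x : X) :
    inputLaw (a • J + b • K) x = a * inputLaw J x + b * inputLaw K x := by
  simp [inputLaw, Finset.sum_add_distrib, Finset.mul_sum]

theorem outputLaw_add_smul {X Y : Type*} [Fintype X] (a b : ℝ) (J K : X × Y → ℝ) (y : Y) :
    outputLaw (a • J + b • K) y = a * outputLaw J y + b * outputLaw K y := by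
  simp [outputLaw, Finset.sum_add_distrib, Finset.mul_sum]

section Convexity

variable {X Y : Type*} [Fintype X] [Fintype Y] {W : X → Y → ℝ≥0∞} {J : X × Y → ℝ}

theorem convex_dominatedLaws : Convex ℝ (dominatedLaws W) := by
  intro J hJ K hK a b ha hb hab
  exact ⟨convex_stdSimplex ℝ _ hJ.1 hK.1 ha hb hab, fun p hp => by simp [hJ.2 p hp, hK.2 p hp]⟩

theorem eq_zero_of_inputLaw_mul_eq_zero (hJ : J ∈ dominatedLaws W) {p : X × Y}
    (hp : inputLaw J p.1 * (W p.1 p.2).toReal = 0) : J p = 0 :=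
  (mul_eq_zero.1 hp).elim
    (fun h => ((le_inputLaw hJ.1 p).trans_eq h).antisymm (hJ.1.1 p)) (hJ.2 p)

theorem convexOn_condDivergence : ConvexOn ℝ (dominatedLaws W) (condDivergence W) := by
  refine ⟨convex_dominatedLaws, fun J hJ K hK a b ha hb hab => ?_⟩
  simp only [condDivergence, Real.logb, ← mul_div_assoc, ← Finset.sum_div, smul_eq_mul]
  rw [← add_div]
  refine div_le_div_of_nonneg_right ?_ (Real.log_nonneg one_le_two)
  rw [Finset.mul_sum, Finset.mul_sum, ← Finset.sum_add_distrib]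
  refine Finset.sum_le_sum fun p _ => ?_
  have hmem {L : X × Y → ℝ} (hL : L ∈ dominatedLaws W) :
      0 ≤ L p ∧ 0 ≤ inputLaw L p.1 * (W p.1 p.2).toReal ∧
        (inputLaw L p.1 * (W p.1 p.2).toReal = 0 → L p = 0) :=
    ⟨hL.1.1 p, mul_nonneg ((inputLaw_mem_stdSimplex hL.1).1 _) ENNReal.toReal_nonneg,
      eq_zero_of_inputLaw_mul_eq_zero hL⟩
  convert convexOn_mul_log_div.2 (x := (J p, inputLaw J p.1 * (W p.1 p.2).toReal))
    (y := (K p, inputLaw K p.1 * (W p.1 p.2).toReal)) (hmem hJ) (hmem hK) ha hb hab using 1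
  · simp [inputLaw_add_smul, add_mul, mul_assoc]
  · rfl

theorem meanInfoDensity_eq_add_sum_negMulLog (hJ : J ∈ dominatedLaws W) :
    meanInfoDensity W J = ∑ p, J p * Real.logb 2 (W p.1 p.2).toReal +
      (∑ y, Real.negMulLog (outputLaw J y)) / Real.log 2 := by
  have hterm (p : X × Y) : J p * Real.logb 2 ((W p.1 p.2).toReal / outputLaw J p.2) =
      J p * Real.logb 2 (W p.1 p.2).toReal + J p * -Real.logb 2 (outputLaw J p.2) := by
    rcases (hJ.1.1 p).eq_or_lt with hp | hp
    · simp [← hp]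
    · rw [Real.logb_div (toReal_pos_of_mem_dominatedLaws hJ hp).ne'
        (hp.trans_le (le_outputLaw hJ.1 p)).ne', sub_eq_add_neg, mul_add]
  simp only [meanInfoDensity, hterm, Finset.sum_add_distrib]
  congr 1
  simp only [Fintype.sum_prod_type_right, ← Finset.sum_mul, Finset.sum_div]
  refine Finset.sum_congr rfl fun y _ => ?_
  rw [← outputLaw, Real.negMulLog, Real.logb]
  ring

theorem concaveOn_meanInfoDensity : ConcaveOn ℝ (dominatedLaws W) (meanInfoDensity W) := by
  refine ⟨convex_dominatedLaws, fun J hJ K hK a b ha hb hab => ?_⟩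
  have hentropy : a * ∑ y, Real.negMulLog (outputLaw J y) +
      b * ∑ y, Real.negMulLog (outputLaw K y) ≤
        ∑ y, Real.negMulLog (outputLaw (a • J + b • K) y) := by
    rw [Finset.mul_sum, Finset.mul_sum, ← Finset.sum_add_distrib]
    refine Finset.sum_le_sum fun y _ => ?_
    rw [outputLaw_add_smul]
    exact Real.concaveOn_negMulLog.2 ((outputLaw_mem_stdSimplex hJ.1).1 y)
      ((outputLaw_mem_stdSimplex hK.1).1 y) ha hb hab
  rw [meanInfoDensity_eq_add_sum_negMulLog hJ, meanInfoDensity_eq_add_sum_negMulLog hK,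
    meanInfoDensity_eq_add_sum_negMulLog (convex_dominatedLaws hJ hK ha hb hab)]
  have hlinear : ∑ p, (a • J + b • K) p * Real.logb 2 (W p.1 p.2).toReal =
      a * ∑ p, J p * Real.logb 2 (W p.1 p.2).toReal +
        b * ∑ p, K p * Real.logb 2 (W p.1 p.2).toReal := by
    simp [add_mul, Finset.sum_add_distrib, Finset.mul_sum, mul_assoc]
  have hdiv := div_le_div_of_nonneg_right hentropy (Real.log_nonneg one_le_two)
  rw [add_div, mul_div_assoc, mul_div_assoc] at hdiv
  simp only [smul_eq_mul, mul_add]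
  linarith

end Convexity

/-! ### Tilted laws and duality -/

theorem sum_mul_logb_div_nonneg {ι : Type*} [Fintype ι] {p q : ι → ℝ} (hp : p ∈ stdSimplex ℝ ι)
    (hq : q ∈ stdSimplex ℝ ι) (hpq : ∀ i, q i = 0 → p i = 0) :
    0 ≤ ∑ i, p i * Real.logb 2 (p i / q i) := by
  have hsum : ∑ i, (p i - q i) ≤ ∑ i, p i * Real.log (p i / q i) :=
    Finset.sum_le_sum fun i _ => by
      simpa using mul_log_add_sub_le_mul_log_div (hp.1 i) (hq.1 i) (hpq i) one_pos
  rw [Finset.sum_sub_distrib, hp.2, hq.2, sub_self] at hsum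
  simp only [Real.logb, ← mul_div_assoc, ← Finset.sum_div]
  exact div_nonneg hsum (Real.log_nonneg one_le_two)

section Duality

variable {X Y : Type*} [Fintype X] [Fintype Y] {W : X → Y → ℝ≥0∞} {P : X → ℝ≥0∞} {β : ℝ}

theorem exists_mem_dominatedLaws_meanInfoDensity_eq [Nonempty X] (hW : IsChannel W) :
    ∃ J ∈ dominatedLaws W, meanInfoDensity W J = Real.logb 2 (sumSup W).toReal := by
  choose x hx using fun y => exists_eq_ciSup_of_finite (f := fun x => W x y)
  have hZ : 0 < (sumSup W).toReal :=
    ENNReal.toReal_pos (one_pos.trans_le (one_le_sumSup hW)).ne' (sumSup_ne_top hW)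
  set R : Y → ℝ := fun y => (W (x y) y).toReal / (sumSup W).toReal with hR
  have hR1 : ∑ y, R y = 1 := by
    simp only [hR, hx]
    rw [← Finset.sum_div, ← ENNReal.toReal_sum fun y _ => iSup_ne_top hW y]
    exact div_self hZ.ne'
  set J : X × Y → ℝ := fun p => if p.1 = x p.2 then R p.2 else 0 with hJ
  have hout (y : Y) : outputLaw J y = R y := by simp [outputLaw, hJ]
  refine ⟨J, ⟨⟨fun p => ?_, ?_⟩, fun p hp => ?_⟩, ?_⟩
  · simp only [hJ, hR]
    positivity
  · rw [Fintype.sum_prod_type_right, ← hR1]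
    exact Finset.sum_congr rfl fun y _ => hout y
  · obtain ⟨a, y⟩ := p
    by_cases ha : a = x y
    · subst ha
      simp [hJ, hR, show (W (x y) y).toReal = 0 from hp]
    · simp [hJ, ha]
  · have hterm (y : Y) : R y * Real.logb 2 ((W (x y) y).toReal / R y) =
        R y * Real.logb 2 (sumSup W).toReal := by
      by_cases h : (W (x y) y).toReal = 0
      · simp [hR, h]
      · rw [hR, div_div_cancel₀ h]
    simp only [meanInfoDensity, Fintype.sum_prod_type_right, hout]
    simp [hJ, hterm, ← Finset.sum_mul, hR1]

theorem exists_mem_dominatedLaws_condDivergence_eq_zero [Nonempty X] (hW : IsChannel W) :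
    ∃ J ∈ dominatedLaws W, condDivergence W J = 0 := by
  obtain ⟨x₀⟩ := ‹Nonempty X›
  set J : X × Y → ℝ := fun p => if p.1 = x₀ then (W p.1 p.2).toReal else 0 with hJ
  have hin (x : X) : inputLaw J x = if x = x₀ then 1 else 0 := by
    by_cases hx : x = x₀ <;> simp [inputLaw, hJ, hx, (hW.isDist x₀).sum_toReal]
  refine ⟨J, ⟨⟨fun p => ?_, ?_⟩, fun p hp => ?_⟩, Finset.sum_eq_zero fun p _ => ?_⟩
  · simp only [hJ]
    positivity
  · rw [Fintype.sum_prod_type]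
    exact (Finset.sum_congr rfl fun x _ => hin x).trans (by simp)
  · simp [hJ, hp]
  · obtain ⟨x, y⟩ := p
    by_cases hx : x = x₀
    · subst hx
      rw [hin, if_pos rfl, one_mul]
      by_cases h0 : (W x y).toReal = 0 <;> simp [hJ, h0]
    · simp [hJ, hx]

/-- The law proportional to `P(x) W(y|x)^β Q(y)^(1-β)`, where `Q` is Sibson's optimal output
distribution. For a capacity-achieving `P` it maximises
`(β - 1) * meanInfoDensity W J - condDivergence W J` over `J ∈ dominatedLaws W`. -/
def tiltedLaw (β : ℝ) (P : X → ℝ≥0∞) (W : X → Y → ℝ≥0∞) (p : X × Y) : ℝ :=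
  (P p.1).toReal * (W p.1 p.2).toReal ^ β * (sibsonOutput β P W p.2).toReal ^ (1 - β) /
    sibsonSum β P W ^ β

theorem outputLaw_tiltedLaw (hP : IsDist P) (hW : IsChannel W) (hβ : 0 < β) (y : Y) :
    outputLaw (tiltedLaw β P W) y = (sibsonOutput β P W y).toReal := by
  have hF := sibsonSum_pos hP hW hβ
  have hA : 0 ≤ sibsonWeight β P W y := sibsonWeight_nonneg y
  calc outputLaw (tiltedLaw β P W) y
      = sibsonWeight β P W y * (sibsonOutput β P W y).toReal ^ (1 - β) / sibsonSum β P W ^ β := by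
        simp only [outputLaw, tiltedLaw, ← Finset.sum_div, ← Finset.sum_mul, sibsonWeight]
    _ = sibsonSum β P W ^ (β - 1) *
          (sibsonWeight β P W y * sibsonWeight β P W y ^ (β⁻¹ - 1)) / sibsonSum β P W ^ β := by
        rw [toReal_sibsonOutput_rpow hP hW hβ, mul_left_comm]
    _ = sibsonWeight β P W y ^ β⁻¹ / sibsonSum β P W := by
        rw [← Real.rpow_one_add' hA (by simpa using hβ.ne'), add_sub_cancel,
          Real.rpow_sub_one hF.ne']
        field_simp
    _ = (sibsonOutput β P W y).toReal := by
        rw [sibsonOutput, ENNReal.toReal_ofReal (by positivity)]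

theorem tiltedLaw_mem_dominatedLaws (hP : IsDist P) (hW : IsChannel W) (hβ : 0 < β) :
    tiltedLaw β P W ∈ dominatedLaws W := by
  have hF := sibsonSum_pos hP hW hβ
  refine ⟨⟨fun p => by unfold tiltedLaw; positivity, ?_⟩, fun p hp => ?_⟩
  · rw [Fintype.sum_prod_type_right, ← (isDist_sibsonOutput hP hW hβ).sum_toReal]
    exact Finset.sum_congr rfl fun y _ => outputLaw_tiltedLaw hP hW hβ y
  · simp [tiltedLaw, hp, hβ.ne']

theorem logb_tiltedLaw (hP : IsDist P) (hW : IsChannel W) (hβ : 0 < β) {p : X × Y}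
    (hp : 0 < tiltedLaw β P W p) :
    Real.logb 2 (tiltedLaw β P W p) = Real.logb 2 (P p.1).toReal +
      β * Real.logb 2 (W p.1 p.2).toReal +
      (1 - β) * Real.logb 2 (sibsonOutput β P W p.2).toReal -
      Real.logb 2 (sibsonSum β P W ^ β) := by
  have hJ := tiltedLaw_mem_dominatedLaws hP hW hβ
  have hF := sibsonSum_pos hP hW hβ
  have hPp : (P p.1).toReal ≠ 0 := fun h => hp.ne' (by simp [tiltedLaw, h])
  have hWp := toReal_pos_of_mem_dominatedLaws hJ hp
  have hQp : 0 < (sibsonOutput β P W p.2).toReal :=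
    outputLaw_tiltedLaw hP hW hβ p.2 ▸ hp.trans_le (le_outputLaw hJ.1 p)
  rw [tiltedLaw, Real.logb_div (by positivity) (by positivity),
    Real.logb_mul (by positivity) (by positivity), Real.logb_mul hPp (by positivity),
    Real.logb_rpow_eq_mul_logb_of_pos hWp, Real.logb_rpow_eq_mul_logb_of_pos hQp]

theorem sub_one_mul_meanInfoDensity_sub_condDivergence_tiltedLaw (hP : IsDist P)
    (hW : IsChannel W) (hβ : 0 < β) :
    (β - 1) * meanInfoDensity W (tiltedLaw β P W) - condDivergence W (tiltedLaw β P W) =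
      Real.logb 2 (sibsonSum β P W ^ β) + ∑ x, inputLaw (tiltedLaw β P W) x *
        Real.logb 2 (inputLaw (tiltedLaw β P W) x / (P x).toReal) := by
  have hJ := tiltedLaw_mem_dominatedLaws hP hW hβ
  set J := tiltedLaw β P W with hJdef
  have hterm (p : X × Y) : (β - 1) * (J p * Real.logb 2 ((W p.1 p.2).toReal / outputLaw J p.2)) -
      J p * Real.logb 2 (J p / (inputLaw J p.1 * (W p.1 p.2).toReal)) =
      J p * Real.logb 2 (sibsonSum β P W ^ β) +
        J p * Real.logb 2 (inputLaw J p.1 / (P p.1).toReal) := by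
    rcases (hJ.1.1 p).eq_or_lt with hp | hp
    · simp [← hp]
    · have hPp : (P p.1).toReal ≠ 0 := fun h => hp.ne' (by simp [hJdef, tiltedLaw, h])
      have hWp := (toReal_pos_of_mem_dominatedLaws hJ hp).ne'
      have hX := (hp.trans_le (le_inputLaw hJ.1 p)).ne'
      rw [Real.logb_div hWp (hp.trans_le (le_outputLaw hJ.1 p)).ne',
        Real.logb_div hp.ne' (mul_ne_zero hX hWp), Real.logb_mul hX hWp, Real.logb_div hX hPp,
        outputLaw_tiltedLaw hP hW hβ, logb_tiltedLaw hP hW hβ hp]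
      ring
  rw [meanInfoDensity, condDivergence, Finset.mul_sum, ← Finset.sum_sub_distrib]
  simp only [hterm, Finset.sum_add_distrib, ← Finset.sum_mul, hJ.1.2, one_mul]
  simp only [Fintype.sum_prod_type, ← Finset.sum_mul, inputLaw]

theorem exists_logb_sibsonSum_le (hP : IsDist P) (hW : IsChannel W) (hβ : 0 < β) :
    ∃ J ∈ dominatedLaws W, Real.logb 2 (sibsonSum β P W ^ β) ≤
      (β - 1) * meanInfoDensity W J - condDivergence W J := by
  have hJ := tiltedLaw_mem_dominatedLaws hP hW hβ
  refine ⟨_, hJ, ?_⟩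
  rw [sub_one_mul_meanInfoDensity_sub_condDivergence_tiltedLaw hP hW hβ]
  refine le_add_of_nonneg_right (sum_mul_logb_div_nonneg (inputLaw_mem_stdSimplex hJ.1)
    ⟨fun x => ENNReal.toReal_nonneg, hP.sum_toReal⟩ fun x hx => ?_)
  exact Finset.sum_eq_zero fun y _ => by simp [tiltedLaw, hx]

theorem renyiCap_le_of_forall_sub_le (hW : IsChannel W) (hβ : 1 < β) {c : ℝ}
    (h : ∀ J ∈ dominatedLaws W, (β - 1) * meanInfoDensity W J - condDivergence W J ≤
      (β - 1) * c) :
    renyiCap (ENNReal.ofReal β) W ≤ c := by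
  refine iSup_le fun ⟨P, hP⟩ => ?_
  obtain ⟨J, hJ, hle⟩ := exists_logb_sibsonSum_le hP hW (one_pos.trans hβ)
  rw [renyiMI_joint_eq_logb_sibsonSum hP hW hβ, EReal.coe_le_coe_iff,
    inv_mul_le_iff₀ (sub_pos.2 hβ)]
  exact hle.trans (h J hJ)

end Duality

/-! ### The reliability function -/

theorem coe_ofReal_sub_one {β : ℝ} (hβ : 0 ≤ β) :
    (ENNReal.ofReal β : EReal) - 1 = ((β - 1 : ℝ) : EReal) := by
  rw [EReal.coe_ennreal_ofReal, max_eq_left hβ, EReal.coe_sub, EReal.coe_one]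

theorem coe_one_sub_one : ((1 : ℝ≥0∞) : EReal) - 1 = 0 := by
  simpa using coe_ofReal_sub_one zero_le_one

section Reliability

variable {X Y : Type*} [Fintype X] [Fintype Y] {W : X → Y → ℝ≥0∞} {α : ℝ≥0∞} {r : ℝ}

theorem exists_le_sub_one_mul_sub_renyiCap [Nonempty X] (hW : IsChannel W)
    (hr : r < renyiCap ⊤ W) {a v : ℝ} (ha : 0 ≤ a)
    (h : ∀ J ∈ dominatedLaws W, r < meanInfoDensity W J →
      v ≤ condDivergence W J - a * (meanInfoDensity W J - r)) :
    ∃ b ≥ a, (v : EReal) ≤ ((ENNReal.ofReal (1 + b) : EReal) - 1) *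
      (r - renyiCap (ENNReal.ofReal (1 + b)) W) := by
  rw [renyiCap_top_eq_logb hW, EReal.coe_lt_coe_iff] at hr
  obtain ⟨J₁, hJ₁, hT₁⟩ := exists_mem_dominatedLaws_meanInfoDensity_eq hW
  have hconc : ConcaveOn ℝ (dominatedLaws W) fun J => meanInfoDensity W J - r :=
    concaveOn_meanInfoDensity.sub (convexOn_const r convex_dominatedLaws)
  have hconv : ConvexOn ℝ (dominatedLaws W)
      fun J => condDivergence W J - a * (meanInfoDensity W J - r) - v :=
    (convexOn_condDivergence.sub (hconc.smul ha)).sub (concaveOn_const v convex_dominatedLaws)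
  obtain ⟨s, hs, hmult⟩ := exists_lagrange_multiplier hconv hconc
    ⟨J₁, hJ₁, by simpa [hT₁] using hr⟩ fun J hJ hT => sub_nonneg.2 (h J hJ (sub_pos.1 hT))
  refine ⟨a + s, le_add_of_nonneg_right hs, ?_⟩
  rw [coe_ofReal_sub_one (by positivity), add_sub_cancel_left]
  rcases (add_nonneg ha hs).eq_or_lt with hb | hb
  · obtain ⟨J₀, hJ₀, hD₀⟩ := exists_mem_dominatedLaws_condDivergence_eq_zero hW
    have hv : v ≤ condDivergence W J₀ - (a + s) * (meanInfoDensity W J₀ - r) := by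
      linarith [hmult J₀ hJ₀]
    rw [← hb, EReal.coe_zero, zero_mul]
    exact_mod_cast hv.trans_eq (by rw [hD₀, ← hb]; ring)
  · have hcap : renyiCap (ENNReal.ofReal (1 + (a + s))) W ≤ ((r - v / (a + s) : ℝ) : EReal) := by
      refine renyiCap_le_of_forall_sub_le hW (by linarith) fun J hJ => ?_
      rw [add_sub_cancel_left, mul_sub, mul_div_cancel₀ _ hb.ne']
      linarith [hmult J hJ]
    calc (v : EReal) = ((a + s : ℝ) : EReal) * (r - ((r - v / (a + s) : ℝ) : EReal)) := by
          rw [← EReal.coe_sub, ← EReal.coe_mul, sub_sub_cancel, mul_div_cancel₀ _ hb.ne']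
      _ ≤ _ := mul_le_mul_of_nonneg_left (EReal.sub_le_sub le_rfl hcap) (by exact_mod_cast hb.le)

theorem renyiCap_ofReal_ne_bot [Nonempty X] (hW : IsChannel W) {β : ℝ} (hβ : 1 < β) :
    renyiCap (ENNReal.ofReal β) W ≠ ⊥ := by
  have hunif : IsDist fun _ : X => (Fintype.card X : ℝ≥0∞)⁻¹ := isDist_const_inv_card
  refine ne_bot_of_le_ne_bot (EReal.coe_ne_bot _)
    ((renyiMI_joint_eq_logb_sibsonSum hunif hW hβ).ge.trans ?_)
  exact le_iSup (fun P : {P : X → ℝ≥0∞ // IsDist P} =>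
    renyiMI (ENNReal.ofReal β) (joint P.1 W)) ⟨_, hunif⟩

theorem sub_one_mul_sub_renyiCap_le_Erf_of_one_lt [Nonempty X] (hW : IsChannel W) (h0 : α ≠ 0)
    (hr : 0 ≤ r) {β : ℝ} (hβ : 1 < β) (hαβ : α ≤ ENNReal.ofReal β) :
    ((ENNReal.ofReal β : EReal) - 1) * (r - renyiCap (ENNReal.ofReal β) W) ≤ Erf α W r := by
  obtain ⟨Q, hQ, hcap⟩ := exists_isDist_renyiD_le_renyiCap hW hβ
  rw [coe_ofReal_sub_one (by linarith)]
  generalize hc : renyiCap (ENNReal.ofReal β) W = c at hcap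
  induction c with
  | bot => exact absurd hc (renyiCap_ofReal_ne_bot hW hβ)
  | top =>
    rw [EReal.sub_top, EReal.coe_mul_bot_of_pos (sub_pos.2 hβ)]
    exact bot_le
  | coe c => exact_mod_cast sub_one_mul_sub_le_Erf h0 hβ hαβ hW hr hQ hcap

theorem sub_one_mul_sub_renyiCap_le_Erf [Nonempty X] [Nonempty Y] (hW : IsChannel W)
    (h0 : α ≠ 0) (hr : 0 ≤ r) (hr1 : r < renyiCap ⊤ W) {β : ℝ≥0∞} (hβ : 1 ≤ β) (hαβ : α ≤ β) :
    ((β : EReal) - 1) * (r - renyiCap β W) ≤ Erf α W r := by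
  rcases hβ.eq_or_lt with rfl | hβ
  · rw [coe_one_sub_one, zero_mul]
    exact Erf_nonneg hW h0 hr
  induction β with
  | top =>
    rw [renyiCap_top_eq_logb hW] at hr1 ⊢
    rw [EReal.coe_ennreal_top, ← EReal.coe_one, EReal.top_sub_coe, ← EReal.coe_sub,
      EReal.top_mul_coe_of_neg (sub_neg.2 (EReal.coe_lt_coe_iff.1 hr1))]
    exact bot_le
  | coe b =>
    rw [← ENNReal.ofReal_coe_nnreal] at hβ hαβ ⊢
    exact sub_one_mul_sub_renyiCap_le_Erf_of_one_lt hW h0 hr (by simpa using hβ) hαβ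

theorem Erf_le_of_forall_sub_one_mul_le [Nonempty X] (hW : IsChannel W) (h0 : α ≠ 0)
    (hr : r < renyiCap ⊤ W) {S : EReal} (hS0 : 0 ≤ S)
    (hS : ∀ β : ℝ≥0∞, 1 ≤ β → α ≤ β → ((β : EReal) - 1) * (r - renyiCap β W) ≤ S) :
    Erf α W r ≤ S := by
  rcases eq_or_ne α ⊤ with rfl | ht
  · obtain ⟨J, hJ, hT⟩ := exists_mem_dominatedLaws_meanInfoDensity_eq hW
    rw [renyiCap_top_eq_logb hW, EReal.coe_lt_coe_iff, ← hT] at hr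
    exact (Erf_top_le_zero hJ hr).trans hS0
  refine EReal.le_of_forall_lt_iff_le.1 fun v hv => ?_
  by_contra! hlt
  obtain ⟨b, hb, hvb⟩ := exists_le_sub_one_mul_sub_renyiCap hW hr (v := v)
    (le_max_right (α.toReal - 1) 0) fun J hJ hT => by
      have hmax := hlt.trans_le (Erf_le_max_condDivergence_sub hW h0 ht hJ hT)
      rw [EReal.coe_lt_coe_iff, lt_max_iff] at hmax
      exact (hmax.resolve_left (not_lt.2 (EReal.coe_nonneg.1 (hS0.trans hv.le)))).le
  obtain ⟨hαb, hb0⟩ := max_le_iff.1 hb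
  refine (hvb.trans (hS _ ?_ ?_)).not_gt hv
  · exact ENNReal.one_le_ofReal.2 (by linarith)
  · exact ENNReal.le_ofReal_iff_toReal_le ht (by linarith) |>.2 (by linarith)

end Reliability

/-- **Reliability function of channel simulation** (Theorem 2), for `α ∈ (0,∞]`.
If `0 ≤ r < I_∞(W)`, then `E_rf^{(α)}(W,r) = sup_{β ≥ 1} (β-1)(r - I_β(W))` for
`α ∈ (0,1]` and `E_rf^{(α)}(W,r) = |sup_{β ≥ α} (β-1)(r - I_β(W))|⁺` for `α ∈ (1,∞]`;
moreover `E_rf^{(α)}(W,r) = ∞` for `r ≥ I_∞(W)`. -/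
theorem reliability_function
    {X Y : Type*} [Fintype X] [Fintype Y] [Nonempty X] [Nonempty Y]
    (W : X → Y → ℝ≥0∞) (hW : IsChannel W) (α : ℝ≥0∞) (hα : 0 < α) :
    (∀ r : ℝ, 0 ≤ r → (r : EReal) < renyiCap ⊤ W →
      (α ≤ 1 →
        Erf α W r =
          ⨆ β : {β : ℝ≥0∞ // 1 ≤ β},
            ((β.1 : EReal) - 1) * ((r : EReal) - renyiCap β.1 W)) ∧
      (1 < α →
        Erf α W r =
          max (⨆ β : {β : ℝ≥0∞ // α ≤ β},
            ((β.1 : EReal) - 1) * ((r : EReal) - renyiCap β.1 W)) 0)) ∧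
    (∀ r : ℝ, renyiCap ⊤ W ≤ (r : EReal) → Erf α W r = ⊤) := by
  refine ⟨fun r hr hr1 => ⟨fun h1 => ?_, fun h1 => ?_⟩, fun r => Erf_eq_top hW hα.ne'⟩
  · have hsup (β : ℝ≥0∞) (hβ : 1 ≤ β) := le_iSup (fun β : {β : ℝ≥0∞ // 1 ≤ β} =>
      ((β.1 : EReal) - 1) * (r - renyiCap β.1 W)) ⟨β, hβ⟩
    refine le_antisymm (Erf_le_of_forall_sub_one_mul_le hW hα.ne' hr1 ?_ fun β hβ _ => hsup β hβ)
      (iSup_le fun β => sub_one_mul_sub_renyiCap_le_Erf hW hα.ne' hr hr1 β.2 (h1.trans β.2))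
    simpa only [coe_one_sub_one, zero_mul] using hsup 1 le_rfl
  · have hsup (β : ℝ≥0∞) (hβ : α ≤ β) := le_iSup (fun β : {β : ℝ≥0∞ // α ≤ β} =>
      ((β.1 : EReal) - 1) * (r - renyiCap β.1 W)) ⟨β, hβ⟩
    refine le_antisymm (Erf_le_of_forall_sub_one_mul_le hW hα.ne' hr1 (le_max_right _ _)
      fun β _ hβ => le_max_of_le_left (hsup β hβ)) (max_le (iSup_le fun β => ?_) ?_)
    · exact sub_one_mul_sub_renyiCap_le_Erf hW hα.ne' hr hr1 (h1.le.trans β.2) β.2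
    · exact Erf_nonneg hW hα.ne' hr

end RST
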